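/- Fix even t ≥ 2. If G is a planar graph of maximum degree d ≥ 4 and girth at least 6(t² + t − 2), then χ_t(G) ≤ τ_t(d), where τ_t(d) = (d(d-1)^{t/2} − 2)/(d−2). -/

import Mathlib

open SimpleGraph

/-- `H` is a minor of `G`. -/
def IsMinorOf {W V : Type*} (H : SimpleGraph W) (G : SimpleGraph V) : Prop :=
  ∃ f : V → Option W,
    (∀ w : W, ∃ v, f v = some w) ∧
    (∀ w : W, (G.induce {v | f v = some w}).Connected) ∧
    (∀ w₁ w₂ : W, H.Adj w₁ w₂ →
      ∃ v₁ v₂, f v₁ = some w₁ ∧ f v₂ = some w₂ ∧ G.Adj v₁ v₂)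

/-- Planarity, via Wagner's theorem: no `K₅` minor and no `K_{3,3}` minor. -/
def IsPlanar {V : Type*} (G : SimpleGraph V) : Prop :=
  ¬ IsMinorOf (completeGraph (Fin 5)) G ∧
  ¬ IsMinorOf (completeBipartiteGraph (Fin 3) (Fin 3)) G

/-- A distance-`t` vertex-colouring with `n` colours. -/
def DistVertexColorable {V : Type*} (G : SimpleGraph V) (t n : ℕ) : Prop :=
  ∃ c : V → Fin n, ∀ u v : V, u ≠ v → G.edist u v ≤ (t : ℕ∞) → c u ≠ c v

/-- `τ_t(d)` for even `t`. -/
def taueven (t d : ℕ) : ℕ := (d * (d - 1) ^ (t / 2) - 2) / (d - 2)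

/-!
Write `t = 2 * (K + 1)` and induct on the graph. Strip the vertices with at most one remaining
neighbour `K` times, and let the level of a vertex be the round in which it goes, `K` if it
survives. If some non-isolated vertex has no neighbour of larger level and at most one of equal
level, then all but one of the branches at it are trees, and a leaf at the bottom sees too few
vertices within distance `t` to obstruct a greedy extension of a colouring of the rest.

Otherwise the surviving graph has no leaf. Euler's inequality `g * (m - n + 2) ≤ 2 * m` for planar
graphs of girth `g` then yields a thread, a path whose inner vertices have degree two, of length at
least `t ^ 2 / 2 + t`. Delete the middle of the thread together with the trees hanging from it, the
deeper descendants along a longer stretch, colour the rest by induction and the deleted vertices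
greedily, the shallow ones first. When a vertex gets its colour, the coloured vertices within
distance `t` are fewer than the vertices of a ball of radius `t / 2` in the `d`-regular tree.

Euler's inequality has to be derived from the absence of `K₅` and `K_{3,3}` minors. In a
3-connected graph the peripheral cycles (induced and non-separating) generate the cycle space, and
without such minors no edge lies on more than two of them, so they play the role of faces; the
general case follows by splitting along cut vertices and 2-separations.
-/

/-! ### Connected vertex sets and minors -/

section Minors

variable {V : Type*} {G G' : SimpleGraph V}

/-- The vertex set `S` is nonempty and induces a connected subgraph of `G`. -/
abbrev ConnectedOn (G : SimpleGraph V) (S : Set V) : Prop :=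
  (G.induce S).Connected

/-- Some edge of `G` joins `A` to `B`. -/
def Touch (G : SimpleGraph V) (A B : Set V) : Prop :=
  ∃ a ∈ A, ∃ b ∈ B, G.Adj a b

lemma Touch.symm {A B : Set V} (h : Touch G A B) : Touch G B A := by
  obtain ⟨a, ha, b, hb, hab⟩ := h
  exact ⟨b, hb, a, ha, hab.symm⟩

lemma Touch.mono {A A' B B' : Set V} (h : Touch G A B) (hA : A ⊆ A') (hB : B ⊆ B') :
    Touch G A' B' := by
  obtain ⟨a, ha, b, hb, hab⟩ := h
  exact ⟨a, hA ha, b, hB hb, hab⟩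

namespace ConnectedOn

variable {S A B : Set V}

lemma set_nonempty (h : ConnectedOn G S) : S.Nonempty :=
  Set.nonempty_coe_sort.1 h.nonempty

lemma subset_of_closed (h : ConnectedOn G S) {T : Set V} (hne : (S ∩ T).Nonempty)
    (hcl : ∀ u ∈ S, u ∈ T → ∀ v ∈ S, G.Adj u v → v ∈ T) : S ⊆ T := by
  obtain ⟨a, haS, haT⟩ := hne
  have walk_stays : ∀ u v : S, (G.induce S).Walk u v → u.1 ∈ T → v.1 ∈ T := by
    intro u v p
    induction p with
    | nil => exact id
    | cons hadj _ ih => exact fun hu => ih (hcl _ (Subtype.prop _) hu _ (Subtype.prop _) hadj)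
  intro b hb
  obtain ⟨p⟩ := h.preconnected ⟨a, haS⟩ ⟨b, hb⟩
  exact walk_stays _ _ p haT

lemma of_closed (hne : S.Nonempty) (h : ∀ T ⊆ S, T.Nonempty →
    (∀ u ∈ T, ∀ v ∈ S, G.Adj u v → v ∈ T) → S ⊆ T) : ConnectedOn G S := by
  obtain ⟨u, hu⟩ := hne
  have reachable_all : S ⊆ {v | ∃ hv : v ∈ S, (G.induce S).Reachable ⟨u, hu⟩ ⟨v, hv⟩} := by
    refine h _ (fun v hv => hv.1) ⟨u, hu, Reachable.refl _⟩ ?_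
    rintro a ⟨ha, hr⟩ b hb hab
    exact ⟨hb, hr.trans (Adj.reachable (by simpa using hab))⟩
  rw [ConnectedOn, connected_iff_exists_forall_reachable]
  exact ⟨⟨u, hu⟩, fun v => (reachable_all v.2).2⟩

lemma singleton (v : V) : ConnectedOn G {v} :=
  of_closed (Set.singleton_nonempty v) fun _ hT hne _ => (hne.subset_singleton_iff.1 hT).ge

lemma union (hA : ConnectedOn G A) (hB : ConnectedOn G B) (h : Touch G A B) :
    ConnectedOn G (A ∪ B) := by
  obtain ⟨a, ha, b, hb, hab⟩ := h
  exact connected_induce_union hA.preconnected hB.preconnected ha hb hab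

lemma insert (hA : ConnectedOn G A) {a v : V} (ha : a ∈ A) (h : G.Adj a v) :
    ConnectedOn G (insert v A) := by
  rw [Set.insert_eq]
  exact (singleton v).union hA ⟨v, rfl, a, ha, h.symm⟩

lemma mono_graph (h : ConnectedOn G' S) (hle : G' ≤ G) : ConnectedOn G S :=
  h.mono fun _ _ hadj => hle hadj

lemma image_Icc (p : ℕ → V) {a b : ℕ} (hab : a ≤ b)
    (h : ∀ i, a ≤ i → i < b → G.Adj (p i) (p (i + 1))) : ConnectedOn G (p '' Set.Icc a b) := by
  induction b, hab using Nat.le_induction with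
  | base => simpa using singleton (p a)
  | succ b hab ih =>
    rw [← Set.insert_Icc_right_eq_Icc_add_one (by omega), Set.image_insert_eq]
    exact (ih fun i h1 h2 => h i h1 (by omega)).insert ⟨b, ⟨hab, le_rfl⟩, rfl⟩ (h b hab (by omega))

end ConnectedOn

lemma exists_component {T : Set V} {w : V} (hw : w ∈ T) :
    ∃ C ⊆ T, w ∈ C ∧ ConnectedOn G C ∧ ∀ u ∈ C, ∀ v ∈ T, G.Adj u v → v ∈ C := by
  let P : Set (Set V) := {C | C ⊆ T ∧ w ∈ C ∧ ConnectedOn G C}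
  have mem_P : {w} ∈ P := ⟨Set.singleton_subset_iff.2 hw, rfl, .singleton w⟩
  have hconn : ConnectedOn G (⋃₀ P) :=
    induce_sUnion_connected_of_pairwise_not_disjoint ⟨_, mem_P⟩
      (fun hs ht => ⟨w, hs.2.1, ht.2.1⟩) (fun hs => hs.2.2)
  have hsub : ⋃₀ P ⊆ T := Set.sUnion_subset fun C hC => hC.1
  have hwP : w ∈ ⋃₀ P := ⟨_, mem_P, rfl⟩
  refine ⟨⋃₀ P, hsub, hwP, hconn, fun u hu v hv huv => ?_⟩
  exact ⟨insert v (⋃₀ P), ⟨Set.insert_subset hv hsub, Or.inr hwP, hconn.insert hu huv⟩, Or.inl rfl⟩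

lemma ConnectedOn.touch_of_closed {R A C : Set V} (hR : ConnectedOn G R) (hne : C.Nonempty)
    (hCR : C ⊆ R) (hRC : ¬ R ⊆ C) (hcl : ∀ u ∈ C, ∀ v ∈ R, G.Adj u v → v ∈ C ∨ v ∈ A) :
    Touch G C A := by
  by_contra htouch
  refine hRC (ConnectedOn.subset_of_closed hR ?_ fun u _ huC v hvR huv => ?_)
  · exact hne.mono fun v hv => ⟨hCR hv, hv⟩
  · exact (hcl u huC v hvR huv).resolve_right fun hvA => htouch ⟨u, huC, v, hvA, huv⟩

lemma ConnectedOn.touch_or_exists_component {R A B T : Set V} (hR : ConnectedOn G R)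
    (hRsub : R ⊆ A ∪ B ∪ T) (hA : (R ∩ A).Nonempty) (hB : (R ∩ B).Nonempty) (dAB : Disjoint A B)
    (dBT : Disjoint B T) :
    Touch G A B ∨ ∃ C ⊆ T, ConnectedOn G C ∧ (∀ u ∈ C, ∀ v ∈ T, G.Adj u v → v ∈ C) ∧
      Touch G C A ∧ Touch G C B := by
  by_contra! ⟨hAB, hno⟩
  let S : Set V := {v | v ∈ A ∨ ∃ C ⊆ T, v ∈ C ∧ ConnectedOn G C ∧
    (∀ u ∈ C, ∀ v ∈ T, G.Adj u v → v ∈ C) ∧ Touch G C A}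
  have R_subset : R ⊆ S := by
    refine ConnectedOn.subset_of_closed hR (hA.mono fun v hv => ⟨hv.1, Or.inl hv.2⟩) ?_
    rintro u - (huA | ⟨C, hCT, huC, hC, hcl, hCA⟩) v hv huv
    · rcases hRsub hv with (hvA | hvB) | hvT
      · exact Or.inl hvA
      · exact absurd ⟨u, huA, v, hvB, huv⟩ hAB
      · obtain ⟨C, hCT, hvC, hC, hcl⟩ := exists_component (G := G) hvT
        exact Or.inr ⟨C, hCT, hvC, hC, hcl, v, hvC, u, huA, huv.symm⟩
    · rcases hRsub hv with (hvA | hvB) | hvT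
      · exact Or.inl hvA
      · exact absurd ⟨u, huC, v, hvB, huv⟩ (hno C hCT hC hcl hCA)
      · exact Or.inr ⟨C, hCT, hcl u huC v hvT huv, hC, hcl, hCA⟩
  obtain ⟨b, hbR, hbB⟩ := hB
  rcases R_subset hbR with hbA | ⟨C, hCT, hbC, -⟩
  · exact Set.disjoint_left.1 dAB hbA hbB
  · exact Set.disjoint_left.1 dBT hbB (hCT hbC)

section MinorOf

variable {W : Type*} {H : SimpleGraph W}

lemma isMinorOf_of_connectedOn (S : W → Set V) (hconn : ∀ w, ConnectedOn G (S w))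
    (hdisj : Pairwise fun w w' => Disjoint (S w) (S w'))
    (hadj : ∀ w w', H.Adj w w' → Touch G (S w) (S w')) : IsMinorOf H G := by
  classical
  let f : V → Option W := fun v => if h : ∃ w, v ∈ S w then some h.choose else none
  have f_eq_some_iff (v : V) (w : W) : f v = some w ↔ v ∈ S w := by
    by_cases h : ∃ w, v ∈ S w
    · rw [show f v = some h.choose from dif_pos h, Option.some_inj]
      refine ⟨fun e => e ▸ h.choose_spec, fun hv => ?_⟩
      by_contra hne
      exact Set.disjoint_left.1 (hdisj hne) h.choose_spec hv
    · rw [show f v = none from dif_neg h]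
      exact iff_of_false (by simp) fun hv => h ⟨w, hv⟩
  have fibre_eq (w : W) : {v | f v = some w} = S w := Set.ext fun v => f_eq_some_iff v w
  refine ⟨f, fun w => ?_, fun w => ?_, fun w w' hww => ?_⟩
  · obtain ⟨v, hv⟩ := (hconn w).set_nonempty
    exact ⟨v, (f_eq_some_iff v w).2 hv⟩
  · rw [fibre_eq w]
    exact hconn w
  · obtain ⟨a, ha, b, hb, hab⟩ := hadj w w' hww
    exact ⟨a, b, (f_eq_some_iff _ _).2 ha, (f_eq_some_iff _ _).2 hb, hab⟩

lemma IsMinorOf.mono (h : IsMinorOf H G') (hle : G' ≤ G) : IsMinorOf H G := by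
  obtain ⟨f, hsurj, hconn, hadj⟩ := h
  refine ⟨f, hsurj, fun w => ConnectedOn.mono_graph (hconn w) hle, fun w w' hw => ?_⟩
  obtain ⟨a, b, ha, hb, hab⟩ := hadj w w' hw
  exact ⟨a, b, ha, hb, hle hab⟩

/-- `G'` consists of edges of `G` together with, possibly, the edge `xy`, which is represented in
`G` by the connected set `Q` touching `x` and `y` and avoided by `G'`. -/
structure IsVirtualEdge (G G' : SimpleGraph V) (x y : V) (Q : Set V) : Prop where
  connectedOn : ConnectedOn G Q
  touch_left : Touch G Q {x}
  touch_right : Touch G Q {y}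
  isolated : ∀ q ∈ Q, ∀ v, ¬ G'.Adj q v
  adj : ∀ u v, G'.Adj u v → G.Adj u v ∨ (u = x ∧ v = y) ∨ (u = y ∧ v = x)

namespace IsVirtualEdge

variable {x y : V} {Q A : Set V}

lemma connectedOn_union (hQ : IsVirtualEdge G G' x y Q) (hA : ConnectedOn G' A) (hx : x ∈ A) :
    ConnectedOn G (A ∪ Q) := by
  obtain ⟨q₁, hq₁, _, rfl, hqx⟩ := hQ.touch_left
  obtain ⟨q₂, hq₂, _, rfl, hqy⟩ := hQ.touch_right
  rename_i x y
  refine .of_closed ⟨x, Or.inl hx⟩ fun T hT hne hcl => ?_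
  have Q_subset : (Q ∩ T).Nonempty → Q ⊆ T := fun h =>
    hQ.connectedOn.subset_of_closed h fun u _ huT v hv huv => hcl u huT v (Or.inr hv) huv
  have Q_subset_of_x : x ∈ T → Q ⊆ T := fun h =>
    Q_subset ⟨q₁, hq₁, hcl x h q₁ (Or.inr hq₁) hqx.symm⟩
  have x_mem : Q ⊆ T → x ∈ T := fun h => hcl q₁ (h hq₁) x (Or.inl hx) hqx
  have A_meets : (A ∩ T).Nonempty := by
    obtain ⟨z, hz⟩ := hne
    rcases hT hz with h | h
    · exact ⟨z, h, hz⟩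
    · exact ⟨x, hx, x_mem (Q_subset ⟨z, h, hz⟩)⟩
  have A_subset : A ⊆ T := hA.subset_of_closed A_meets fun u _ huT v hv huv => by
    rcases hQ.adj u v huv with h | ⟨rfl, rfl⟩ | ⟨rfl, rfl⟩
    · exact hcl u huT v (Or.inl hv) h
    · exact hcl q₂ (Q_subset_of_x huT hq₂) _ (Or.inl hv) hqy
    · exact x_mem (Q_subset ⟨q₂, hq₂, hcl _ huT q₂ (Or.inr hq₂) hqy.symm⟩)
  exact Set.union_subset A_subset (Q_subset_of_x (A_subset hx))

lemma connectedOn_of_notMem (hQ : IsVirtualEdge G G' x y Q) (hA : ConnectedOn G' A)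
    (hx : x ∉ A) : ConnectedOn G A := by
  refine .of_closed hA.set_nonempty fun T hT hne hcl => ?_
  refine hA.subset_of_closed (by rwa [Set.inter_eq_self_of_subset_right hT]) ?_
  intro u hu huT v hv huv
  rcases hQ.adj u v huv with h | ⟨rfl, rfl⟩ | ⟨rfl, rfl⟩
  · exact hcl u huT v hv h
  · exact absurd hu hx
  · exact absurd hv hx

lemma isMinorOf (hQ : IsVirtualEdge G G' x y Q) (hH : ∀ w, ∃ w', H.Adj w w')
    (hm : IsMinorOf H G') : IsMinorOf H G := by
  classical
  obtain ⟨f, -, hconn, hadj⟩ := hm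
  have Q_unused (w : W) (q : V) (hq : q ∈ Q) (hw : f q = some w) : False := by
    obtain ⟨w', hww⟩ := hH w
    obtain ⟨a, b, ha, -, hab⟩ := hadj w w' hww
    have : {v | f v = some w} ⊆ {q} := ConnectedOn.subset_of_closed (hconn w) ⟨q, hw, rfl⟩ <| by
      rintro _ - rfl v - huv
      exact absurd huv (hQ.isolated _ hq v)
    exact hQ.isolated a (this ha ▸ hq) b hab
  let S : W → Set V := fun w => {v | f v = some w} ∪ {q | q ∈ Q ∧ f x = some w}
  have S_of_mem (w : W) (hw : f x = some w) : S w = {v | f v = some w} ∪ Q := by simp [S, hw]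
  have S_of_notMem (w : W) (hw : f x ≠ some w) : S w = {v | f v = some w} := by simp [S, hw]
  have Q_subset (w : W) (hw : f x = some w) : Q ⊆ S w := S_of_mem w hw ▸ Set.subset_union_right
  refine isMinorOf_of_connectedOn S (fun w => ?_) (fun w w' hww => ?_) (fun w w' hww => ?_)
  · by_cases hw : f x = some w
    · exact S_of_mem w hw ▸ hQ.connectedOn_union (hconn w) hw
    · exact S_of_notMem w hw ▸ hQ.connectedOn_of_notMem (hconn w) hw
  · refine Set.disjoint_left.2 ?_
    rintro z (h | ⟨hz, h⟩) (h' | ⟨hz', h'⟩)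
    · exact hww (Option.some.inj (h.symm.trans h'))
    · exact Q_unused w z hz' h
    · exact Q_unused w' z hz h'
    · exact hww (Option.some.inj (h.symm.trans h'))
  · obtain ⟨a, b, ha, hb, hab⟩ := hadj w w' hww
    obtain ⟨q, hq, _, rfl, hqy⟩ := hQ.touch_right
    rcases hQ.adj a b hab with h | ⟨rfl, rfl⟩ | ⟨rfl, rfl⟩
    · exact ⟨a, Or.inl ha, b, Or.inl hb, h⟩
    · exact ⟨q, Q_subset w ha hq, _, Or.inl hb, hqy⟩
    · exact ⟨_, Or.inl ha, q, Q_subset w' hb hq, hqy.symm⟩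

end IsVirtualEdge

end MinorOf

namespace IsPlanar

lemma false_of_k33 (hP : IsPlanar G) (A B : Fin 3 → Set V)
    (hA : ∀ i, ConnectedOn G (A i)) (hB : ∀ i, ConnectedOn G (B i))
    (disjA : Pairwise fun i j => Disjoint (A i) (A j))
    (disjB : Pairwise fun i j => Disjoint (B i) (B j))
    (disjAB : ∀ i j, Disjoint (A i) (B j)) (touch : ∀ i j, Touch G (A i) (B j)) : False := by
  refine hP.2 (isMinorOf_of_connectedOn (Sum.elim A B) (Sum.rec hA hB) ?_ ?_)
  · rintro (i | i) (j | j) hij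
    · exact disjA (ne_of_apply_ne Sum.inl hij)
    · exact disjAB i j
    · exact (disjAB j i).symm
    · exact disjB (ne_of_apply_ne Sum.inr hij)
  · rintro (i | i) (j | j) hij
    · simp at hij
    · exact touch i j
    · exact (touch j i).symm
    · simp at hij

lemma false_of_k5 (hP : IsPlanar G) (A : Fin 5 → Set V) (hA : ∀ i, ConnectedOn G (A i))
    (disj : Pairwise fun i j => Disjoint (A i) (A j))
    (touch : Pairwise fun i j => Touch G (A i) (A j)) : False :=
  hP.1 (isMinorOf_of_connectedOn A hA disj fun _ _ hij => touch hij.ne)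

lemma mono (hP : IsPlanar G) (hle : G' ≤ G) : IsPlanar G' :=
  ⟨fun h => hP.1 (h.mono hle), fun h => hP.2 (h.mono hle)⟩

lemma of_isVirtualEdge (hP : IsPlanar G) {x y : V} {Q : Set V}
    (hQ : IsVirtualEdge G G' x y Q) : IsPlanar G' := by
  refine ⟨fun h => hP.1 (hQ.isMinorOf (fun w => ⟨w + 1, ?_⟩) h),
    fun h => hP.2 (hQ.isMinorOf (Sum.rec (fun _ => ⟨Sum.inr 0, ?_⟩) fun _ => ⟨Sum.inl 0, ?_⟩) h)⟩
  · fin_cases w <;> simp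
  · simp
  · simp

end IsPlanar

end Minors

/-! ### Signings, balance and induced cycles -/

section Signing

variable {V : Type*} {G : SimpleGraph V} {φ : Sym2 V → ZMod 2}

/-- `f` is a potential for the signing `φ` on `M`: the sign of each edge of `G` inside `M` is the
sum of the values of `f` at its two ends. -/
def IsPotential (G : SimpleGraph V) (φ : Sym2 V → ZMod 2) (M : Set V) (f : V → ZMod 2) : Prop :=
  ∀ u ∈ M, ∀ v ∈ M, G.Adj u v → φ s(u, v) = f u + f v

/-- The signing `φ` is balanced on `M`, i.e. it is a coboundary on the edges of `G` inside `M`. -/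
def IsBalanced (G : SimpleGraph V) (φ : Sym2 V → ZMod 2) (M : Set V) : Prop :=
  ∃ f, IsPotential G φ M f

lemma IsPotential.mono {M M' : Set V} {f : V → ZMod 2} (h : IsPotential G φ M f) (hM : M' ⊆ M) :
    IsPotential G φ M' f :=
  fun u hu v hv => h u (hM hu) v (hM hv)

lemma IsPotential.add_const {M : Set V} {f : V → ZMod 2} (h : IsPotential G φ M f) (a : ZMod 2) :
    IsPotential G φ M fun v => f v + a := by
  intro u hu v hv huv
  rw [h u hu v hv huv, add_add_add_comm, CharTwo.add_self_eq_zero, add_zero]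

lemma IsPotential.eq_of_adj_of_eq {M N : Set V} {f g : V → ZMod 2} {u v : V}
    (hf : IsPotential G φ M f) (hg : IsPotential G φ N g) (hu : u ∈ M ∩ N) (hv : v ∈ M ∩ N)
    (huv : G.Adj u v) (hfg : f v = g v) : f u = g u := by
  have hsum := (hf u hu.1 v hv.1 huv).symm.trans (hg u hu.2 v hv.2 huv)
  rw [hfg] at hsum
  exact add_right_cancel hsum

lemma IsPotential.eqOn_of_connectedOn {M N S : Set V} {f g : V → ZMod 2}
    (hf : IsPotential G φ M f) (hg : IsPotential G φ N g) (hS : ConnectedOn G S) (hSM : S ⊆ M)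
    (hSN : S ⊆ N) {x : V} (hx : x ∈ S) (hfg : f x = g x) : Set.EqOn f g S :=
  hS.subset_of_closed (T := {z | f z = g z}) ⟨x, hx, hfg⟩ fun _ hu hfu _ hv huv =>
    hf.eq_of_adj_of_eq hg ⟨hSM hv, hSN hv⟩ ⟨hSM hu, hSN hu⟩ huv.symm hfu

lemma IsBalanced.mono {M M' : Set V} (hM : IsBalanced G φ M) (h : M' ⊆ M) : IsBalanced G φ M' :=
  hM.imp fun _ hf => hf.mono h

lemma isBalanced_empty : IsBalanced G φ ∅ :=
  ⟨0, fun _ hu => hu.elim⟩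

lemma IsBalanced.exists_eq_zero {M : Set V} (hM : IsBalanced G φ M) (x : V) :
    ∃ f, IsPotential G φ M f ∧ f x = 0 := by
  obtain ⟨f, hf⟩ := hM
  exact ⟨_, hf.add_const (f x), CharTwo.add_self_eq_zero _⟩

/- Potentials `fa`, `fb`, `fc` on the three deleted sets that vanish at a common vertex of `X` agree
pairwise at the third vertex. The set `P` where `fa` and `fb` differ is closed under adjacency in
`M \ {a, b}` and avoids `c`, so `fc` can be used on `P`. -/
open scoped Classical in
lemma IsPotential.glue {M : Set V} {a b c : V} (hab : a ≠ b) (hac : a ≠ c) (hbc : b ≠ c)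
    (ha : a ∈ M) {fa fb fc : V → ZMod 2} (hfa : IsPotential G φ (M \ {a}) fa)
    (hfb : IsPotential G φ (M \ {b}) fb) (hfc : IsPotential G φ (M \ {c}) fc)
    (at_a : fb a = fc a) (at_b : fa b = fc b) (at_c : fa c = fb c) :
    ∃ g, IsPotential G φ M g := by
  let P : Set V := {w | w ≠ a ∧ w ≠ b ∧ fa w ≠ fb w}
  have c_notMem : c ∉ P := fun h => h.2.2 at_c
  have P_closed : ∀ u ∈ P, u ∈ M → ∀ v ∈ M, G.Adj u v → v ≠ a → v ≠ b → v ∈ P := by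
    rintro u ⟨hua, hub, hu⟩ huM v hv huv hva hvb
    exact ⟨hva, hvb, fun h =>
      hu (hfa.eq_of_adj_of_eq hfb ⟨⟨huM, hua⟩, huM, hub⟩ ⟨⟨hv, hva⟩, hv, hvb⟩ huv h)⟩
  let g : V → ZMod 2 := fun w => if w ∈ P then fc w else if w = a then fb a else fa w
  have g_of_mem {w : V} (h : w ∈ P) : g w = fc w := if_pos h
  have g_of_notMem {w : V} (h : w ∉ P) (h' : w ≠ a) : g w = fa w := by simp [g, h, h']
  have g_a : g a = fb a := by simp [g, P]
  have g_b : g b = fc b := by rw [g_of_notMem (fun h => h.2.1 rfl) hab.symm, at_b]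
  have from_P : ∀ u ∈ P, u ∈ M → ∀ v ∈ M, G.Adj u v → φ s(u, v) = g u + g v := by
    intro u huP hu v hv huv
    have huc : u ≠ c := fun h => c_notMem (h ▸ huP)
    suffices hgv : v ≠ c ∧ g v = fc v by
      rw [g_of_mem huP, hgv.2, hfc u ⟨hu, huc⟩ v ⟨hv, hgv.1⟩ huv]
    by_cases hva : v = a
    · exact hva ▸ ⟨hac, g_a.trans at_a⟩
    by_cases hvb : v = b
    · exact hvb ▸ ⟨hbc, g_b⟩
    have hvP : v ∈ P := P_closed u huP hu v hv huv hva hvb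
    exact ⟨fun h => c_notMem (h ▸ hvP), g_of_mem hvP⟩
  have from_a : ∀ v ∈ M, v ∉ P → G.Adj a v → φ s(a, v) = g a + g v := by
    intro v hv hvP hav
    by_cases hvb : v = b
    · subst hvb
      rw [g_a, at_a, g_b, hfc a ⟨ha, hac⟩ v ⟨hv, hbc⟩ hav]
    have hfv : fa v = fb v := by_contra fun h => hvP ⟨hav.ne', hvb, h⟩
    rw [g_a, g_of_notMem hvP hav.ne', hfv, hfb a ⟨ha, hab⟩ v ⟨hv, hvb⟩ hav]
  refine ⟨g, fun u hu v hv huv => ?_⟩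
  by_cases huP : u ∈ P
  · exact from_P u huP hu v hv huv
  by_cases hvP : v ∈ P
  · rw [Sym2.eq_swap, add_comm, from_P v hvP hv u hu huv.symm]
  by_cases hua : u = a
  · exact hua ▸ from_a v hv hvP (hua ▸ huv)
  by_cases hva : v = a
  · rw [Sym2.eq_swap, add_comm]
    exact hva ▸ from_a u hu huP (hva ▸ huv.symm)
  rw [g_of_notMem huP hua, g_of_notMem hvP hva, hfa u ⟨hu, hua⟩ v ⟨hv, hva⟩ huv]

lemma IsBalanced.of_three_attachments {M X : Set V} (hX : ConnectedOn G X) (hXM : X ⊆ M)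
    {a b c : V} (hab : a ≠ b) (hac : a ≠ c) (hbc : b ≠ c)
    (attached : ∀ z ∈ ({a, b, c} : Set V),
      z ∈ M ∧ z ∉ X ∧ (∃ x ∈ X, G.Adj x z) ∧ IsBalanced G φ (M \ {z})) :
    IsBalanced G φ M := by
  obtain ⟨x, hx⟩ := hX.set_nonempty
  obtain ⟨ha, haX, na, Ba⟩ := attached a (by simp)
  obtain ⟨hb, hbX, nb, Bb⟩ := attached b (by simp)
  obtain ⟨hc, hcX, nc, Bc⟩ := attached c (by simp)
  obtain ⟨fa, hfa, fa0⟩ := Ba.exists_eq_zero x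
  obtain ⟨fb, hfb, fb0⟩ := Bb.exists_eq_zero x
  obtain ⟨fc, hfc, fc0⟩ := Bc.exists_eq_zero x
  have agree {p q r : V} {f g : V → ZMod 2} (hp : p ∉ X) (hq : q ∉ X) (hr : r ∈ M) (hrp : r ≠ p)
      (hrq : r ≠ q) (hadj : ∃ y ∈ X, G.Adj y r) (hf : IsPotential G φ (M \ {p}) f)
      (hg : IsPotential G φ (M \ {q}) g) (f0 : f x = 0) (g0 : g x = 0) : f r = g r := by
    obtain ⟨y, hy, hyr⟩ := hadj
    have subset {p : V} (hp : p ∉ X) (hrp : r ≠ p) : insert r X ⊆ M \ {p} :=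
      Set.insert_subset ⟨hr, hrp⟩ fun z hz => ⟨hXM hz, fun h => hp (h ▸ hz)⟩
    exact hf.eqOn_of_connectedOn hg (hX.insert hy hyr) (subset hp hrp) (subset hq hrq)
      (Or.inr hx) (f0.trans g0.symm) (Or.inl rfl)
  exact IsPotential.glue hab hac hbc ha hfa hfb hfc
    (agree hbX hcX ha hab hac na hfb hfc fb0 fc0)
    (agree haX hcX hb hab.symm hbc nb hfa hfc fa0 fc0)
    (agree haX hbX hc hac.symm hbc.symm nc hfa hfb fa0 fb0)

/-- The sum of the signs of the edges of a walk. -/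
def walkSign (φ : Sym2 V → ZMod 2) {u v : V} (w : G.Walk u v) : ZMod 2 :=
  (w.edges.map φ).sum

@[simp]
lemma walkSign_cons {u v x : V} (h : G.Adj u v) (w : G.Walk v x) :
    walkSign φ (Walk.cons h w) = φ s(u, v) + walkSign φ w := by
  simp [walkSign]

@[simp]
lemma walkSign_append {u v x : V} (p : G.Walk u v) (q : G.Walk v x) :
    walkSign φ (p.append q) = walkSign φ p + walkSign φ q := by
  simp [walkSign]

@[simp]
lemma walkSign_reverse {u v : V} (p : G.Walk u v) : walkSign φ p.reverse = walkSign φ p := by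
  simp [walkSign, List.sum_reverse]

lemma walkSign_eq_sum {u v : V} (w : G.Walk u v) :
    walkSign φ w = ∑ i ∈ Finset.range w.length, φ s(w.getVert i, w.getVert (i + 1)) := by
  induction w with
  | nil => simp [walkSign]
  | cons h w ih =>
    rw [walkSign_cons, ih, Walk.length_cons, Finset.sum_range_succ', add_comm]
    simp

lemma exists_odd_closed_walk (h : ¬ IsBalanced G φ Set.univ) :
    ∃ (u : V) (w : G.Walk u u), walkSign φ w ≠ 0 := by
  contrapose! h
  have sign_eq {r r' u v : V} (hr : r = r') (p : G.Walk r u) (q : G.Walk r' v) (huv : G.Adj u v) :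
      φ s(u, v) = walkSign φ p + walkSign φ q := by
    subst hr
    have h0 := h r (p.append (Walk.cons huv q.reverse))
    rw [walkSign_append, walkSign_cons, walkSign_reverse, add_left_comm] at h0
    exact CharTwo.add_eq_zero.1 h0
  have to_root (v : V) : G.Reachable (G.connectedComponentMk v).out v :=
    ConnectedComponent.exact (Quot.out_eq (G.connectedComponentMk v))
  refine ⟨fun v => walkSign φ (to_root v).some, fun u _ v _ huv => sign_eq ?_ _ _ huv⟩
  rw [ConnectedComponent.sound huv.reachable]

/-- `c` enumerates, in cyclic order, an induced cycle of length `N` in `G`. -/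
structure IsInducedCycle (G : SimpleGraph V) {N : ℕ} (c : ZMod N → V) : Prop where
  three_le : 3 ≤ N
  injective : Function.Injective c
  adj_iff : ∀ i j, G.Adj (c i) (c j) ↔ j = i + 1 ∨ i = j + 1

/-- The sum of the signs of the edges of a cyclic sequence of vertices. -/
def cycleSign (φ : Sym2 V → ZMod 2) {N : ℕ} (c : ZMod N → V) : ZMod 2 :=
  ∑ i ∈ Finset.range N, φ s(c i, c (i + 1))

lemma exists_walks_of_shortcut {u : V} (w : G.Walk u u) {i j : ℕ} (hij : i ≤ j)
    (hj : j ≤ w.length) (q : G.Walk (w.getVert i) (w.getVert j)) :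
    ∃ (p : G.Walk (w.getVert i) (w.getVert i)) (p' : G.Walk u u),
      p.length = j - i + q.length ∧ p'.length = w.length - (j - i) + q.length ∧
      walkSign φ p + walkSign φ p' = walkSign φ w := by
  let mid : G.Walk (w.getVert i) (w.getVert j) :=
    ((w.drop i).take (j - i)).copy rfl (by rw [Walk.drop_getVert, Nat.add_sub_cancel' hij])
  have sign_split : walkSign φ (w.take i) + walkSign φ mid + walkSign φ (w.drop j) =
      walkSign φ w := by
    simp only [walkSign, mid, Walk.edges_copy, Walk.edges_take, Walk.edges_drop, ← List.sum_append,
      ← List.map_append]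
    rw [← List.take_add, Nat.add_sub_cancel' hij, List.take_append_drop]
  refine ⟨mid.append q.reverse, (w.take i).append (q.append (w.drop j)), ?_, ?_, ?_⟩
  · simp only [mid, Walk.length_append, Walk.length_copy, Walk.take_length, Walk.drop_length,
      Walk.length_reverse]
    omega
  · simp only [Walk.length_append, Walk.take_length, Walk.drop_length]
    omega
  · rw [← sign_split]
    simp only [walkSign_append, walkSign_reverse]
    linear_combination CharTwo.add_self_eq_zero (walkSign φ q)

lemma zmod_natCast_eq_natCast_add_one_iff {N a b : ℕ} (ha : a < N) (hb : b < N) :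
    (b : ZMod N) = a + 1 ↔ b = a + 1 ∨ a + 1 = N ∧ b = 0 := by
  rw [← Nat.cast_add_one, ZMod.natCast_eq_natCast_iff', Nat.mod_eq_of_lt hb]
  rcases (Nat.succ_le_of_lt ha).lt_or_eq with h | h
  · rw [Nat.mod_eq_of_lt h]
    omega
  · rw [← h, Nat.mod_self]
    omega

lemma exists_natCast_eq {N : ℕ} [NeZero N] (i : ZMod N) : ∃ a < N, (a : ZMod N) = i :=
  ⟨i.val, i.val_lt, ZMod.natCast_rightInverse i⟩

lemma isInducedCycle_of_lt {N : ℕ} (hN : 3 ≤ N) {p : ℕ → V}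
    (hne : ∀ i j, i < j → j < N → p i ≠ p j)
    (hadj : ∀ i j, i < j → j < N → (G.Adj (p i) (p j) ↔ j = i + 1 ∨ i = 0 ∧ j + 1 = N)) :
    IsInducedCycle G fun i : ZMod N => p i.val := by
  have : NeZero N := ⟨by omega⟩
  refine ⟨hN, fun i j hij => ZMod.val_injective N ?_, fun i j => ?_⟩
  · by_contra h
    rcases lt_or_gt_of_ne h with h | h
    · exact hne _ _ h j.val_lt hij
    · exact hne _ _ h i.val_lt hij.symm
  obtain ⟨a, ha, rfl⟩ := exists_natCast_eq i
  obtain ⟨b, hb, rfl⟩ := exists_natCast_eq j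
  rw [ZMod.val_cast_of_lt ha, ZMod.val_cast_of_lt hb, zmod_natCast_eq_natCast_add_one_iff ha hb,
    zmod_natCast_eq_natCast_add_one_iff hb ha]
  rcases lt_trichotomy a b with h | rfl | h
  · rw [hadj a b h hb]
    omega
  · exact iff_of_false G.irrefl (by omega)
  · rw [G.adj_comm, hadj b a h ha]
    omega

lemma three_le_length_of_odd {u : V} (w : G.Walk u u) (hodd : walkSign φ w ≠ 0) :
    3 ≤ w.length := by
  have closes : w.getVert w.length = u := w.getVert_length
  rw [walkSign_eq_sum] at hodd
  by_contra! hlt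
  interval_cases hL : w.length
  · simp at hodd
  · exact (w.adj_getVert_succ (i := 0) (by omega)).ne (by simp [closes])
  · rw [Finset.sum_range_succ, Finset.sum_range_one, zero_add, one_add_one_eq_two, closes,
      Walk.getVert_zero, Sym2.eq_swap] at hodd
    exact hodd (CharTwo.add_self_eq_zero _)

lemma isInducedCycle_of_shortest_odd {u : V} (w : G.Walk u u) (hodd : walkSign φ w ≠ 0)
    (hmin : ∀ (v : V) (p : G.Walk v v), walkSign φ p ≠ 0 → w.length ≤ p.length) :
    IsInducedCycle G fun i : ZMod w.length => w.getVert i.val := by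
  have three_le : 3 ≤ w.length := three_le_length_of_odd w hodd
  have : NeZero w.length := ⟨by omega⟩
  have : Fact (1 < w.length) := ⟨by omega⟩
  have long_shortcut {i j : ℕ} (hij : i ≤ j) (hj : j ≤ w.length)
      (q : G.Walk (w.getVert i) (w.getVert j)) :
      j - i ≤ q.length ∨ w.length ≤ j - i + q.length := by
    obtain ⟨p, p', hp, hp', hsum⟩ := exists_walks_of_shortcut (φ := φ) w hij hj q
    by_cases h0 : walkSign φ p = 0
    · have := hmin _ p' (by rwa [← hsum, h0, zero_add] at hodd)
      omega
    · have := hmin _ p h0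
      omega
  have vert_ne {i j : ℕ} (hij : i < j) (hj : j < w.length) : w.getVert i ≠ w.getVert j := by
    intro h
    have := long_shortcut hij.le hj.le (Walk.nil.copy rfl h)
    simp only [Walk.length_copy, Walk.length_nil] at this
    omega
  have vert_adj {i j : ℕ} (hij : i < j) (hj : j < w.length)
      (h : G.Adj (w.getVert i) (w.getVert j)) : j = i + 1 ∨ i = 0 ∧ j + 1 = w.length := by
    have := long_shortcut hij.le hj.le (Walk.cons h Walk.nil)
    simp only [Walk.length_cons, Walk.length_nil] at this
    omega
  refine isInducedCycle_of_lt three_le (fun i j hij hj => vert_ne hij hj) fun i j hij hj =>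
    ⟨vert_adj hij hj, ?_⟩
  rintro (rfl | ⟨rfl, h⟩)
  · exact w.adj_getVert_succ (by omega)
  · have hclose := w.adj_getVert_succ (i := j) (by omega)
    rw [h, w.getVert_length] at hclose
    simpa using hclose.symm

lemma exists_odd_inducedCycle (h : ¬ IsBalanced G φ Set.univ) :
    ∃ (N : ℕ) (c : ZMod N → V), IsInducedCycle G c ∧ cycleSign φ c ≠ 0 := by
  classical
  have exists_odd : ∃ n, ∃ (u : V) (w : G.Walk u u), walkSign φ w ≠ 0 ∧ w.length = n := by
    obtain ⟨u, w, hw⟩ := exists_odd_closed_walk h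
    exact ⟨_, u, w, hw, rfl⟩
  obtain ⟨u, w, hodd, hlen⟩ := Nat.find_spec exists_odd
  refine ⟨w.length, fun i => w.getVert i.val, isInducedCycle_of_shortest_odd w hodd ?_, ?_⟩
  · exact fun v p hp => hlen ▸ Nat.find_min' exists_odd ⟨v, p, hp, rfl⟩
  suffices cycleSign φ (fun i : ZMod w.length => w.getVert i.val) = walkSign φ w from this ▸ hodd
  rw [walkSign_eq_sum, cycleSign]
  refine Finset.sum_congr rfl fun i hi => ?_
  rw [Finset.mem_range] at hi
  rw [ZMod.val_cast_of_lt hi, ← Nat.cast_add_one]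
  rcases (Nat.succ_le_of_lt hi).lt_or_eq with h | h
  · rw [ZMod.val_cast_of_lt h]
  · rw [show i + 1 = w.length from h, ZMod.natCast_self, w.getVert_length, ZMod.val_zero,
      w.getVert_zero]

lemma exists_odd_inducedCycle_subset {M : Set V} (h : ¬ IsBalanced G φ M) :
    ∃ (N : ℕ) (c : ZMod N → V), IsInducedCycle G c ∧ Set.range c ⊆ M ∧ cycleSign φ c ≠ 0 := by
  let H : SimpleGraph V := ((⊤ : G.Subgraph).induce M).spanningCoe
  have adj_H (u v : V) : H.Adj u v ↔ u ∈ M ∧ v ∈ M ∧ G.Adj u v := Iff.rfl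
  have unbalanced : ¬ IsBalanced H φ Set.univ := fun ⟨f, hf⟩ =>
    h ⟨f, fun u hu v hv huv => hf u trivial v trivial ⟨hu, hv, huv⟩⟩
  obtain ⟨N, c, hc, hodd⟩ := exists_odd_inducedCycle unbalanced
  have mem_M (i : ZMod N) : c i ∈ M := ((adj_H _ _).1 ((hc.adj_iff i (i + 1)).2 (Or.inl rfl))).1
  refine ⟨N, c, ⟨hc.three_le, hc.injective, fun i j => ?_⟩, Set.range_subset_iff.2 mem_M, hodd⟩
  rw [← hc.adj_iff, adj_H]
  exact ⟨fun hij => ⟨mem_M i, mem_M j, hij⟩, fun hij => hij.2.2⟩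

lemma IsInducedCycle.cycleSign_eq_zero {N : ℕ} {c : ZMod N → V} (hc : IsInducedCycle G c)
    (h : IsBalanced G φ (Set.range c)) : cycleSign φ c = 0 := by
  obtain ⟨f, hf⟩ := h
  have sign_edge (i : ZMod N) : φ s(c i, c (i + 1)) = f (c (i + 1)) - f (c i) := by
    rw [hf _ ⟨i, rfl⟩ _ ⟨i + 1, rfl⟩ ((hc.adj_iff _ _).2 (Or.inl rfl)), CharTwo.sub_eq_add,
      add_comm]
  have telescope := Finset.sum_range_sub (fun i : ℕ => f (c i)) N
  simp only [Nat.cast_add_one, ZMod.natCast_self, Nat.cast_zero, sub_self] at telescope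
  simpa only [cycleSign, sign_edge] using telescope

end Signing

/-! ### Peripheral cycles -/

section Peripheral

variable {V : Type*} {G : SimpleGraph V} {W : Set V}

/-- All edges of `G` lie in `W`, and `G` is 3-connected on `W`: every vertex of `W` has at least
three neighbours, and every vertex set in `W` which, with its neighbours, does not exhaust `W`
has at least three outer neighbours. -/
structure IsThreeConnectedOn (G : SimpleGraph V) (W : Set V) : Prop where
  mem_of_adj : ∀ u v, G.Adj u v → u ∈ W
  exists_outer_neighbor : ∀ X ⊆ W, X.Nonempty → (∃ y ∈ W, y ∉ X ∧ ∀ x ∈ X, ¬ G.Adj x y) →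
    ∀ s t : V, ∃ n ∈ W, n ∉ X ∧ n ≠ s ∧ n ≠ t ∧ ∃ x ∈ X, G.Adj x n
  exists_neighbor : ∀ v ∈ W, ∀ s t : V, ∃ n, G.Adj v n ∧ n ≠ s ∧ n ≠ t

/-- `c` enumerates a peripheral cycle of `G`: an induced cycle whose complement in the vertex set
`W` of `G` is connected. -/
structure IsPeripheral (G : SimpleGraph V) (W : Set V) {N : ℕ} (c : ZMod N → V) : Prop where
  isInducedCycle : IsInducedCycle G c
  range_subset : Set.range c ⊆ W
  connectedOn_compl : ConnectedOn G (W \ Set.range c)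

variable {φ : Sym2 V → ZMod 2}

namespace IsThreeConnectedOn

lemma exists_unbalanced_diff_singleton (h : IsThreeConnectedOn G W) (hW : ¬ IsBalanced G φ W) :
    ∃ v ∈ W, ¬ IsBalanced G φ (W \ {v}) := by
  by_contra! all_balanced
  obtain ⟨v, hv⟩ : W.Nonempty := by
    rw [Set.nonempty_iff_ne_empty]
    exact fun h => hW (h ▸ isBalanced_empty)
  have := h.exists_neighbor v hv
  obtain ⟨a, ha, -, -⟩ := this v v
  obtain ⟨b, hb, hba, -⟩ := this a a
  obtain ⟨c, hc, hca, hcb⟩ := this a b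
  refine hW (.of_three_attachments (.singleton v) (Set.singleton_subset_iff.2 hv) hba.symm hca.symm
    hcb.symm fun z hz => ?_)
  have hvz : G.Adj v z := by
    rcases hz with rfl | rfl | rfl <;> assumption
  have hzW : z ∈ W := h.mem_of_adj z v hvz.symm
  exact ⟨hzW, hvz.ne', ⟨v, rfl, hvz⟩, all_balanced z hzW⟩

/- If some vertices of `W \ D` had no neighbour in `D`, a component `X` of the set of these
vertices would have three attachments, all of them neighbours of `D`. -/
lemma exists_adj_of_maximal (h : IsThreeConnectedOn G W) {D : Set V} (hDne : D.Nonempty)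
    (hDW : D ⊆ W) (hD : ¬ IsBalanced G φ (W \ D))
    (hmax : ∀ a ∈ W \ D, (∃ x ∈ D, G.Adj x a) → IsBalanced G φ ((W \ D) \ {a})) :
    ∀ w ∈ W \ D, ∃ x ∈ D, G.Adj x w := by
  intro w hw
  by_contra w_far
  obtain ⟨X, hX, hwX, hXconn, hXcl⟩ :=
    exists_component (G := G) (T := {z | z ∈ W \ D ∧ ¬ ∃ x ∈ D, G.Adj x z}) ⟨hw, w_far⟩
  obtain ⟨y, hy⟩ := hDne
  have outer : ∀ n ∈ W, n ∉ X → (∃ x ∈ X, G.Adj x n) → n ∈ W \ D ∧ ∃ x ∈ D, G.Adj x n := by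
    rintro n hn hnX ⟨x, hx, hxn⟩
    have hnD : n ∉ D := fun h => (hX hx).2 ⟨n, h, hxn.symm⟩
    exact ⟨⟨hn, hnD⟩, by_contra fun hno => hnX (hXcl x hx n ⟨⟨hn, hnD⟩, hno⟩ hxn)⟩
  have exists_outer := h.exists_outer_neighbor X (fun z hz => (hX hz).1.1) ⟨w, hwX⟩
    ⟨y, hDW hy, fun h => (hX h).1.2 hy, fun x hx hxy => (hX hx).2 ⟨y, hy, hxy.symm⟩⟩
  obtain ⟨a, ha⟩ := exists_outer w w
  obtain ⟨b, hb⟩ := exists_outer a a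
  obtain ⟨c, hc⟩ := exists_outer a b
  refine hD (.of_three_attachments hXconn (fun z hz => (hX hz).1) hb.2.2.1.symm hc.2.2.1.symm
    hc.2.2.2.1.symm fun z hz => ?_)
  obtain ⟨hzW, hzX, hXz⟩ : z ∈ W ∧ z ∉ X ∧ ∃ x ∈ X, G.Adj x z := by
    rcases hz with rfl | rfl | rfl
    · exact ⟨ha.1, ha.2.1, ha.2.2.2.2⟩
    · exact ⟨hb.1, hb.2.1, hb.2.2.2.2⟩
    · exact ⟨hc.1, hc.2.1, hc.2.2.2.2⟩
  obtain ⟨hzD, hDz⟩ := outer z hzW hzX hXz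
  exact ⟨hzD, hzX, hXz, hmax z hzD hDz⟩

/- Tutte: take a maximal connected `D` whose complement is unbalanced. Then every vertex of `W \ D`
is adjacent to `D`, so `W \ D` is minimally unbalanced and hence an induced cycle. -/
theorem exists_odd_peripheral [Finite V] (h : IsThreeConnectedOn G W) (hW : ¬ IsBalanced G φ W) :
    ∃ (N : ℕ) (c : ZMod N → V), IsPeripheral G W c ∧ cycleSign φ c ≠ 0 := by
  obtain ⟨v, hv, hvb⟩ := h.exists_unbalanced_diff_singleton hW
  obtain ⟨D, ⟨hDconn, hDW, hD⟩, hDmax⟩ := Set.exists_max_image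
    {D : Set V | ConnectedOn G D ∧ D ⊆ W ∧ ¬ IsBalanced G φ (W \ D)} Set.ncard (Set.toFinite _)
    ⟨{v}, .singleton v, Set.singleton_subset_iff.2 hv, hvb⟩
  have hmax : ∀ a ∈ W \ D, (∃ x ∈ D, G.Adj x a) → IsBalanced G φ ((W \ D) \ {a}) := by
    rintro a ⟨haW, haD⟩ ⟨x, hx, hxa⟩
    by_contra hb
    rw [Set.sdiff_sdiff, Set.union_singleton] at hb
    have := hDmax (insert a D) ⟨hDconn.insert hx hxa, Set.insert_subset haW hDW, hb⟩
    rw [Set.ncard_insert_of_notMem haD (Set.toFinite _)] at this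
    omega
  have all_adj := h.exists_adj_of_maximal hDconn.set_nonempty hDW hD hmax
  obtain ⟨N, c, hc, hcD, hodd⟩ := exists_odd_inducedCycle_subset hD
  have range_eq : Set.range c = W \ D := by
    refine hcD.antisymm fun b hb => by_contra fun hbc => hodd (hc.cycleSign_eq_zero ?_)
    exact (hmax b hb (all_adj b hb)).mono fun z hz => ⟨hcD hz, fun h => hbc (h ▸ hz)⟩
  refine ⟨N, c, ⟨hc, fun z hz => (hcD hz).1, ?_⟩, hodd⟩
  rwa [range_eq, Set.sdiff_sdiff_cancel_left hDW]

end IsThreeConnectedOn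

end Peripheral

/-! ### Arcs of induced cycles -/

section Arcs

variable {V : Type*} {G : SimpleGraph V}

/-- The arc `c a, c (a + 1), …, c b` of a cycle `c`. -/
def arc {N : ℕ} (c : ZMod N → V) (a b : ℕ) : Set V :=
  (fun i : ℕ => c i) '' Set.Icc a b

variable {N N' : ℕ} {c p : ZMod N → V} {q : ZMod N' → V}

lemma mem_arc {a b i : ℕ} (ha : a ≤ i) (hb : i ≤ b) : c i ∈ arc c a b :=
  ⟨i, ⟨ha, hb⟩, rfl⟩

lemma arc_subset_range (c : ZMod N → V) (a b : ℕ) : arc c a b ⊆ Set.range c := by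
  rintro _ ⟨i, -, rfl⟩
  exact ⟨i, rfl⟩

lemma arc_subset_succ {a b : ℕ} : arc c a b ⊆ arc c a (b + 1) :=
  Set.image_mono (Set.Icc_subset_Icc_right b.le_succ)

lemma arc_subset_shift_pred {b : ℕ} : arc c 0 b ⊆ arc (fun i => c (-1 + i)) 0 (b + 1) := by
  rintro _ ⟨i, ⟨-, hi⟩, rfl⟩
  exact ⟨i + 1, ⟨Nat.zero_le _, Nat.succ_le_succ hi⟩, by simp [add_comm]⟩

lemma pairwise_disjoint_three {A B C : Set V} (hAB : Disjoint A B) (hAC : Disjoint A C)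
    (hBC : Disjoint B C) :
    Pairwise fun i j : Fin 3 => Disjoint (![A, B, C] i) (![A, B, C] j) := by
  have : Std.Symm fun i j : Fin 3 => Disjoint (![A, B, C] i) (![A, B, C] j) := ⟨fun _ _ h => h.symm⟩
  simp [pairwise_fin_succ_iff_of_isSymm, Fin.forall_fin_succ, hAB, hAC, hBC]

namespace IsInducedCycle

lemma adj_add_one (hc : IsInducedCycle G c) (i : ZMod N) : G.Adj (c i) (c (i + 1)) :=
  (hc.adj_iff _ _).2 (Or.inl rfl)

lemma adj_natCast_succ (hc : IsInducedCycle G c) (i : ℕ) : G.Adj (c i) (c (i + 1 : ℕ)) := by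
  simpa only [Nat.cast_add_one] using hc.adj_add_one i

lemma adj_zero_pred (hc : IsInducedCycle G c) : G.Adj (c (0 : ℕ)) (c (N - 1 : ℕ)) := by
  have := hc.three_le
  have hclose := hc.adj_natCast_succ (N - 1)
  rw [Nat.sub_add_cancel (by omega), ZMod.natCast_self, ← Nat.cast_zero] at hclose
  exact hclose.symm

lemma natCast_inj (hc : IsInducedCycle G c) {i j : ℕ} (hi : i < N) (hj : j < N) :
    c i = c j ↔ i = j := by
  rw [hc.injective.eq_iff, ZMod.natCast_eq_natCast_iff', Nat.mod_eq_of_lt hi, Nat.mod_eq_of_lt hj]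

lemma adj_natCast_iff (hc : IsInducedCycle G c) {i j : ℕ} (hi : i < N) (hj : j < N) :
    G.Adj (c i) (c j) ↔ (j = i + 1 ∨ i + 1 = N ∧ j = 0) ∨ (i = j + 1 ∨ j + 1 = N ∧ i = 0) := by
  rw [hc.adj_iff, zmod_natCast_eq_natCast_add_one_iff hi hj,
    zmod_natCast_eq_natCast_add_one_iff hj hi]

lemma notMem_range_of_adj (hc : IsInducedCycle G c) {i : ℕ} {w : V} (h : G.Adj (c (i + 1 : ℕ)) w)
    (hpred : w ≠ c i) (hsucc : w ≠ c (i + 2 : ℕ)) : w ∉ Set.range c := by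
  rintro ⟨j, rfl⟩
  rcases (hc.adj_iff _ _).1 h with rfl | hj
  · exact hsucc (congrArg c (by push_cast; ring))
  · exact hpred (congrArg c (add_right_cancel (hj.symm.trans (Nat.cast_add_one i))))

lemma exists_natCast_eq_of_mem_range (hc : IsInducedCycle G c) {v : V} (hv : v ∈ Set.range c) :
    ∃ i < N, c i = v := by
  obtain ⟨i, rfl⟩ := hv
  have : NeZero N := ⟨by have := hc.three_le; omega⟩
  obtain ⟨a, ha, rfl⟩ := exists_natCast_eq i
  exact ⟨a, ha, rfl⟩

lemma connectedOn_arc (hc : IsInducedCycle G c) {a b : ℕ} (hab : a ≤ b) :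
    ConnectedOn G (arc c a b) :=
  .image_Icc _ hab fun i _ _ => hc.adj_natCast_succ i

lemma disjoint_arc (hc : IsInducedCycle G c) {a b a' b' : ℕ} (h : b < a') (hb' : b' < N) :
    Disjoint (arc c a b) (arc c a' b') := by
  rw [Set.disjoint_left]
  rintro _ ⟨i, ⟨_, hi⟩, rfl⟩ ⟨j, ⟨hj, hj'⟩, hij⟩
  have := (hc.natCast_inj (by omega) (by omega)).1 hij
  omega

lemma touch_arc_succ (hc : IsInducedCycle G c) {a b b' : ℕ} (hab : a ≤ b) (hb' : b + 1 ≤ b') :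
    Touch G (arc c a b) (arc c (b + 1) b') :=
  ⟨_, mem_arc hab le_rfl, _, mem_arc le_rfl hb', hc.adj_natCast_succ b⟩

lemma touch_arc_pred (hc : IsInducedCycle G c) {a : ℕ} (b : ℕ) (ha : a ≤ N - 1) :
    Touch G (arc c 0 b) (arc c a (N - 1)) :=
  ⟨_, mem_arc le_rfl b.zero_le, _, mem_arc ha le_rfl, hc.adj_zero_pred⟩

lemma not_touch_arc (hc : IsInducedCycle G c) {a b a' b' : ℕ} (ha : 0 < a) (h : b + 1 < a')
    (hb' : b' < N) : ¬ Touch G (arc c a b) (arc c a' b') := by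
  rintro ⟨_, ⟨i, ⟨hi, hi'⟩, rfl⟩, _, ⟨j, ⟨hj, hj'⟩, rfl⟩, hij⟩
  have := (hc.adj_natCast_iff (by omega) (by omega)).1 hij
  omega

lemma shift (hc : IsInducedCycle G c) (k : ZMod N) : IsInducedCycle G fun i => c (k + i) where
  three_le := hc.three_le
  injective := hc.injective.comp (add_right_injective k)
  adj_iff i j := by simp only [hc.adj_iff, add_assoc, add_right_inj]

lemma reflect (hc : IsInducedCycle G c) (k : ZMod N) : IsInducedCycle G fun i => c (k - i) where
  three_le := hc.three_le
  injective := hc.injective.comp sub_right_injective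
  adj_iff i j := by
    rw [hc.adj_iff, or_comm]
    refine or_congr ⟨fun h => ?_, fun h => ?_⟩ ⟨fun h => ?_, fun h => ?_⟩ <;> grind

lemma exists_start (hc : IsInducedCycle G c) {x y : V} (hx : x ∈ Set.range c)
    (hy : y ∈ Set.range c) (hxy : G.Adj x y) :
    ∃ c' : ZMod N → V, IsInducedCycle G c' ∧ Set.range c' = Set.range c ∧ c' 0 = x ∧ c' 1 = y := by
  obtain ⟨i, rfl⟩ := hx
  obtain ⟨j, rfl⟩ := hy
  rcases (hc.adj_iff i j).1 hxy with rfl | rfl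
  · exact ⟨_, hc.shift i, EquivLike.range_comp c (Equiv.addLeft i), by simp only [add_zero], rfl⟩
  · exact ⟨_, hc.reflect (j + 1), EquivLike.range_comp c (Equiv.subLeft (j + 1)),
      by simp only [sub_zero],
      by simp only [add_sub_cancel_right]⟩

/- Contracting the four arcs, `X` and `Y` gives the `K₃,₃` between the odd arcs together with `Y`
and the even arcs together with `X`. -/
lemma false_of_crossing (hc : IsInducedCycle G c) (hP : IsPlanar G) {i j k : ℕ} (hij : i < j)
    (hjk : j < k) (hk : k + 1 < N) {X Y : Set V} (hX : ConnectedOn G X) (hY : ConnectedOn G Y)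
    (dX : Disjoint (Set.range c) X) (dY : Disjoint (Set.range c) Y) (dXY : Disjoint X Y)
    (hXY : Touch G X Y) (hX₁ : Touch G X (arc c 0 i)) (hX₃ : Touch G X (arc c (j + 1) k))
    (hY₂ : Touch G Y (arc c (i + 1) j)) (hY₄ : Touch G Y (arc c (k + 1) (N - 1))) : False := by
  have arc_X (a b : ℕ) : Disjoint (arc c a b) X := dX.mono_left (arc_subset_range c a b)
  have arc_Y (a b : ℕ) : Disjoint (arc c a b) Y := dY.mono_left (arc_subset_range c a b)
  have arc_arc {a b a' b' : ℕ} (h : b < a') (hb' : b' < N) : Disjoint (arc c a b) (arc c a' b') :=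
    hc.disjoint_arc h hb'
  refine hP.false_of_k33 ![arc c 0 i, arc c (j + 1) k, Y]
    ![arc c (i + 1) j, arc c (k + 1) (N - 1), X] ?_ ?_ ?_ ?_ ?_ ?_
  · simp only [Fin.forall_fin_succ]
    exact ⟨hc.connectedOn_arc (by omega), hc.connectedOn_arc (by omega), hY, nofun⟩
  · simp only [Fin.forall_fin_succ]
    exact ⟨hc.connectedOn_arc (by omega), hc.connectedOn_arc (by omega), hX, nofun⟩
  · exact pairwise_disjoint_three (arc_arc (by omega) (by omega)) (arc_Y _ _) (arc_Y _ _)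
  · exact pairwise_disjoint_three (arc_arc (by omega) (by omega)) (arc_X _ _) (arc_X _ _)
  · simp only [Fin.forall_fin_succ, Matrix.cons_val]
    exact ⟨⟨arc_arc (by omega) (by omega), arc_arc (by omega) (by omega), arc_X _ _, nofun⟩,
      ⟨(arc_arc (by omega) (by omega)).symm, arc_arc (by omega) (by omega), arc_X _ _, nofun⟩,
      ⟨(arc_Y _ _).symm, (arc_Y _ _).symm, dXY.symm, nofun⟩, nofun⟩
  · simp only [Fin.forall_fin_succ, Matrix.cons_val]
    exact ⟨⟨hc.touch_arc_succ (by omega) (by omega), hc.touch_arc_pred _ (by omega), hX₁.symm,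
        nofun⟩,
      ⟨(hc.touch_arc_succ (by omega) (by omega)).symm, hc.touch_arc_succ (by omega) (by omega),
        hX₃.symm, nofun⟩, ⟨hY₂, hY₄, hXY.symm, nofun⟩, nofun⟩

end IsInducedCycle

end Arcs

/-! ### Pairs and triples of peripheral cycles -/

section Aligned

variable {V : Type*} {G : SimpleGraph V} {N₁ N₂ : ℕ} {p : ZMod N₁ → V} {q : ZMod N₂ → V} {e : ℕ}

/-- The induced cycles `p` and `q` agree on the path `p 0, …, p e`, which is maximal in the sense
that on both sides either cycle leaves the other one at the next step. -/
structure IsAligned (G : SimpleGraph V) (p : ZMod N₁ → V) (q : ZMod N₂ → V) (e : ℕ) : Prop where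
  left : IsInducedCycle G p
  right : IsInducedCycle G q
  one_le : 1 ≤ e
  lt_left : e + 1 < N₁
  lt_right : e + 1 < N₂
  eq : ∀ i ≤ e, p i = q i
  succ_left : p (e + 1 : ℕ) ∉ Set.range q
  succ_right : q (e + 1 : ℕ) ∉ Set.range p
  pred_left : p (N₁ - 1 : ℕ) ∉ Set.range q
  pred_right : q (N₂ - 1 : ℕ) ∉ Set.range p

lemma IsAligned.symm (h : IsAligned G p q e) : IsAligned G q p e :=
  ⟨h.right, h.left, h.one_le, h.lt_right, h.lt_left, fun i hi => (h.eq i hi).symm, h.succ_right,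
    h.succ_left, h.pred_right, h.pred_left⟩

namespace IsInducedCycle

lemma succ_notMem_range (hp : IsInducedCycle G p) (hq : IsInducedCycle G q) (he : 1 ≤ e)
    (he₁ : e + 1 < N₁) (he₂ : e + 1 < N₂) (h : ∀ i ≤ e, p i = q i)
    (hne : p (e + 1 : ℕ) ≠ q (e + 1 : ℕ)) : p (e + 1 : ℕ) ∉ Set.range q := by
  intro hmem
  obtain ⟨j, hj, hqj⟩ := hq.exists_natCast_eq_of_mem_range hmem
  have hadj := hp.adj_natCast_succ e
  rw [h e le_rfl, ← hqj, hq.adj_natCast_iff (by omega) hj] at hadj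
  rcases hadj with (rfl | hadj) | rfl | hadj
  · exact hne hqj.symm
  · omega
  · rw [← h j (by omega), hp.natCast_inj (by omega) (by omega)] at hqj
    omega
  · omega

lemma pred_notMem_range (hp : IsInducedCycle G p) (hq : IsInducedCycle G q) (he : 1 ≤ e)
    (he₁ : e + 1 < N₁) (he₂ : e + 1 < N₂) (h : ∀ i ≤ e, p i = q i)
    (hne : p (N₁ - 1 : ℕ) ≠ q (N₂ - 1 : ℕ)) : p (N₁ - 1 : ℕ) ∉ Set.range q := by
  have pred_eq (N : ℕ) (hN : e < N) : (e : ZMod N) - (e + 1 : ℕ) = (N - 1 : ℕ) := by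
    rw [Nat.cast_pred (by omega), ZMod.natCast_self, Nat.cast_add_one]
    ring
  have := (hp.reflect e).succ_notMem_range (hq.reflect e) he he₁ he₂ (fun i hi => by
    simpa only [Nat.cast_sub hi] using h (e - i) (by omega))
  simp only [pred_eq N₁ (by omega), pred_eq N₂ (by omega)] at this
  rw [← EquivLike.range_comp q (Equiv.subLeft (e : ZMod N₂))]
  exact this hne

lemma range_eq_of_agree (hp : IsInducedCycle G p) (hq : IsInducedCycle G q) (hN : N₁ ≤ N₂)
    (h : ∀ i < N₁, p i = q i) : Set.range p = Set.range q := by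
  have := hp.three_le
  have hN' : N₁ = N₂ := by
    have hadj := hp.adj_zero_pred
    rw [h 0 (by omega), h (N₁ - 1) (by omega), hq.adj_natCast_iff (by omega) (by omega)] at hadj
    omega
  subst hN'
  refine congrArg _ (funext fun i => ?_)
  have : NeZero N₁ := ⟨by omega⟩
  obtain ⟨a, ha, rfl⟩ := exists_natCast_eq i
  exact h a ha

lemma lt_of_agree (hp : IsInducedCycle G p) (hq : IsInducedCycle G q)
    (hne : Set.range p ≠ Set.range q) (h : ∀ i ≤ e, p i = q i) : e + 1 < N₁ ∧ e + 1 < N₂ := by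
  by_contra! hle
  rcases le_total N₁ N₂ with hN | hN
  · exact hne (hp.range_eq_of_agree hq hN fun i hi => h i (by omega))
  · exact hne (hq.range_eq_of_agree hp hN fun i hi => (h i (by omega)).symm).symm

lemma isAligned (hp : IsInducedCycle G p) (hq : IsInducedCycle G q)
    (hne : Set.range p ≠ Set.range q) (he : 1 ≤ e) (h : ∀ i ≤ e, p i = q i)
    (hsucc : p (e + 1 : ℕ) ≠ q (e + 1 : ℕ)) (hpred : p (N₁ - 1 : ℕ) ≠ q (N₂ - 1 : ℕ)) :
    IsAligned G p q e := by
  obtain ⟨lt₁, lt₂⟩ := hp.lt_of_agree hq hne h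
  have h' : ∀ i ≤ e, q i = p i := fun i hi => (h i hi).symm
  exact ⟨hp, hq, he, lt₁, lt₂, h, hp.succ_notMem_range hq he lt₁ lt₂ h hsucc,
    hq.succ_notMem_range hp he lt₂ lt₁ h' hsucc.symm, hp.pred_notMem_range hq he lt₁ lt₂ h hpred,
    hq.pred_notMem_range hp he lt₂ lt₁ h' hpred.symm⟩

lemma agree_shift_pred (hp : IsInducedCycle G p) (hq : IsInducedCycle G q)
    (h : ∀ i ≤ e, p i = q i) (hpred : p (N₁ - 1 : ℕ) = q (N₂ - 1 : ℕ)) :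
    ∀ i ≤ e + 1, p (-1 + i) = q (-1 + i) := by
  rintro (_ | i) hi
  · have := hp.three_le
    have := hq.three_le
    simpa only [Nat.cast_pred (show 0 < N₁ by omega), Nat.cast_pred (show 0 < N₂ by omega),
      ZMod.natCast_self, zero_sub, Nat.cast_zero, add_zero] using hpred
  · simpa [add_comm] using h i (by omega)

lemma exists_isAligned (hp : IsInducedCycle G p) (hq : IsInducedCycle G q)
    (hne : Set.range p ≠ Set.range q) {x y : V} (hxy : G.Adj x y)
    (hx : x ∈ Set.range p ∩ Set.range q) (hy : y ∈ Set.range p ∩ Set.range q) :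
    ∃ (p' : ZMod N₁ → V) (q' : ZMod N₂ → V) (e : ℕ), IsAligned G p' q' e ∧
      Set.range p' = Set.range p ∧ Set.range q' = Set.range q ∧
      x ∈ arc p' 0 e ∧ y ∈ arc p' 0 e := by
  classical
  let Agree (e : ℕ) : Prop := ∃ (p' : ZMod N₁ → V) (q' : ZMod N₂ → V), IsInducedCycle G p' ∧
    IsInducedCycle G q' ∧ Set.range p' = Set.range p ∧ Set.range q' = Set.range q ∧
    (∀ i ≤ e, p' i = q' i) ∧ x ∈ arc p' 0 e ∧ y ∈ arc p' 0 e
  have agree_one : Agree 1 := by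
    obtain ⟨p', hp', hp'p, hp0, hp1⟩ := hp.exists_start hx.1 hy.1 hxy
    obtain ⟨q', hq', hq'q, hq0, hq1⟩ := hq.exists_start hx.2 hy.2 hxy
    refine ⟨p', q', hp', hq', hp'p, hq'q, fun i hi => ?_, ⟨0, by simp, by simpa⟩,
      ⟨1, by simp, by simpa⟩⟩
    interval_cases i <;> simp [*]
  have agree_lt {e : ℕ} : Agree e → e < N₁ := fun ⟨p', q', hp', hq', hp'p, hq'q, h, _⟩ => by
    have := hp'.lt_of_agree hq' (hp'p ▸ hq'q ▸ hne) h
    omega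
  have three_le := hp.three_le
  obtain ⟨p', q', hp', hq', hp'p, hq'q, heq, hxe, hye⟩ :=
    Nat.findGreatest_spec (P := Agree) (n := N₁) (by omega) agree_one
  set e := Nat.findGreatest Agree N₁
  have not_agree : ¬ Agree (e + 1) := fun h => by
    have : e + 1 ≤ e := Nat.le_findGreatest (agree_lt h).le h
    omega
  have one_le : 1 ≤ e := Nat.le_findGreatest (by omega) agree_one
  refine ⟨p', q', e, hp'.isAligned hq' (hp'p ▸ hq'q ▸ hne) one_le heq (fun hsucc => ?_)
    (fun hpred => ?_), hp'p, hq'q, hxe, hye⟩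
  · refine not_agree ⟨p', q', hp', hq', hp'p, hq'q, fun i hi => ?_, arc_subset_succ hxe,
      arc_subset_succ hye⟩
    rcases Nat.le_or_eq_of_le_succ hi with hi | rfl
    exacts [heq i hi, hsucc]
  · exact not_agree ⟨_, _, hp'.shift (-1), hq'.shift (-1),
      (EquivLike.range_comp p' (Equiv.addLeft (-1))).trans hp'p,
      (EquivLike.range_comp q' (Equiv.addLeft (-1))).trans hq'q,
      hp'.agree_shift_pred hq' heq hpred, arc_subset_shift_pred hxe, arc_subset_shift_pred hye⟩

end IsInducedCycle

namespace IsAligned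

variable {W : Set V}

lemma exists_component_touch_arcs (h : IsAligned G p q e) (hp : IsPeripheral G W p)
    (hq : IsPeripheral G W q) {l : ℕ} (hel : e < l) (hl : l + 2 < N₁)
    (hlq : p (l + 1 : ℕ) ∈ Set.range q) {E : Set V} (hE : E ⊆ Set.range q) :
    ∃ C ⊆ (W \ Set.range p) \ E, ConnectedOn G C ∧
      (∀ u ∈ C, ∀ v ∈ (W \ Set.range p) \ E, G.Adj u v → v ∈ C) ∧
      Touch G C (arc p (e + 1) l) ∧ Touch G C (arc p (l + 1 + 1) (N₁ - 1)) := by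
  have compl_subset : W \ Set.range q ⊆
      arc p (e + 1) l ∪ arc p (l + 1 + 1) (N₁ - 1) ∪ (W \ Set.range p) \ E := by
    rintro v ⟨hvW, hvq⟩
    by_cases hvp : v ∈ Set.range p
    · obtain ⟨i, hi, rfl⟩ := h.left.exists_natCast_eq_of_mem_range hvp
      rcases (by omega : i ≤ e ∨ e + 1 ≤ i ∧ i ≤ l ∨ i = l + 1 ∨ l + 1 + 1 ≤ i) with
        hie | ⟨hie, hil⟩ | rfl | hil
      · exact absurd ⟨i, (h.eq i hie).symm⟩ hvq
      · exact Or.inl (Or.inl (mem_arc hie hil))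
      · exact absurd hlq hvq
      · exact Or.inl (Or.inr (mem_arc hil (by omega)))
    · exact Or.inr ⟨⟨hvW, hvp⟩, fun hvE => hvq (hE hvE)⟩
  refine (ConnectedOn.touch_or_exists_component hq.connectedOn_compl compl_subset
    ⟨_, ⟨hp.range_subset ⟨_, rfl⟩, h.succ_left⟩, mem_arc le_rfl (by omega)⟩
    ⟨_, ⟨hp.range_subset ⟨_, rfl⟩, h.pred_left⟩, mem_arc (by omega) le_rfl⟩
    (h.left.disjoint_arc (by omega) (by omega))
    (Set.disjoint_left.2 fun v hv hvT => hvT.1.2 (arc_subset_range p _ _ hv))).resolve_left ?_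
  exact h.left.not_touch_arc (by omega) (by omega) (by omega)

/- A component of `W` off `p` and the path `q (e + 1), …, q (j - 1)` cross on the cycle `p`. -/
lemma false_of_first_return (h : IsAligned G p q e) (hP : IsPlanar G) (hp : IsPeripheral G W p)
    (hq : IsPeripheral G W q) {j l : ℕ} (hej : e + 1 < j) (hel : e < l) (hl : l + 2 < N₁)
    (hpq : p (l + 1 : ℕ) = q j) (hfirst : ∀ m, e < m → m < j → q m ∉ Set.range p) : False := by
  set E := arc q (e + 1) (j - 1)
  have E_notMem : ∀ v ∈ E, v ∉ Set.range p := by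
    rintro _ ⟨m, ⟨hm, hm'⟩, rfl⟩
    exact hfirst m (by omega) (by omega)
  obtain ⟨C, hCT, hC, hCcl, hC₂, hC₄⟩ :=
    h.exists_component_touch_arcs hp hq hel hl ⟨j, hpq.symm⟩ (arc_subset_range q _ _ : E ⊆ _)
  have C_touch_E : Touch G C E := by
    refine ConnectedOn.touch_of_closed hp.connectedOn_compl (ConnectedOn.set_nonempty hC)
      (fun v hv => (hCT hv).1) (fun hsub => ?_) fun u hu v hv huv => ?_
    · have hmem : q (e + 1 : ℕ) ∈ E := mem_arc le_rfl (by omega)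
      exact (hCT (hsub ⟨hq.range_subset ⟨_, rfl⟩, h.succ_right⟩)).2 hmem
    · exact or_iff_not_imp_right.2 fun hvE => hCcl u hu v ⟨hv, hvE⟩ huv
  refine h.left.false_of_crossing hP hel l.lt_succ_self (by omega)
    (h.right.connectedOn_arc (by omega)) hC (Set.disjoint_right.2 E_notMem)
    (Set.disjoint_right.2 fun v hv => (hCT hv).1.2) (Set.disjoint_right.2 fun v hv => (hCT hv).2)
    C_touch_E.symm ?_ ?_ hC₂ hC₄
  · exact ⟨_, mem_arc le_rfl (by omega), _, mem_arc e.zero_le le_rfl,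
      h.eq e le_rfl ▸ (h.right.adj_natCast_succ e).symm⟩
  · have hadj := h.right.adj_natCast_succ (j - 1)
    rw [Nat.sub_add_cancel (by omega), ← hpq] at hadj
    exact ⟨_, mem_arc (by omega) le_rfl, _, mem_arc le_rfl le_rfl, hadj⟩
lemma notMem_range_of_lt (h : IsAligned G p q e) (hP : IsPlanar G) (hp : IsPeripheral G W p)
    (hq : IsPeripheral G W q) : ∀ j, e < j → j < N₂ → q j ∉ Set.range p := by
  intro j
  induction j using Nat.strong_induction_on with
  | _ j ih =>
    intro hej hj hmem
    obtain ⟨l, hl, hpl⟩ := h.left.exists_natCast_eq_of_mem_range hmem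
    have hel : e < l := by
      by_contra! hle
      have := (h.right.natCast_inj (by omega) hj).1 ((h.eq l hle).symm.trans hpl)
      omega
    have hej' : e + 1 ≠ j := fun hj => h.succ_right (hj ▸ hmem)
    have hel' : e + 1 ≠ l := fun hl => h.succ_left ⟨j, hl ▸ hpl.symm⟩
    have hlN : l ≠ N₁ - 1 := fun hl => h.pred_left ⟨j, hl ▸ hpl.symm⟩
    obtain ⟨l, rfl⟩ : ∃ l', l = l' + 1 := ⟨l - 1, by omega⟩
    exact h.false_of_first_return hP hp hq (by omega) (by omega) (by omega) hpl
      fun m hem hmj => ih m hmj hem (by omega)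

lemma range_inter_range (h : IsAligned G p q e) (hP : IsPlanar G) (hp : IsPeripheral G W p)
    (hq : IsPeripheral G W q) : Set.range p ∩ Set.range q = arc p 0 e := by
  ext v
  constructor
  · rintro ⟨hvp, hvq⟩
    obtain ⟨j, hj, rfl⟩ := h.right.exists_natCast_eq_of_mem_range hvq
    have hje : j ≤ e := by
      by_contra! hej
      exact h.notMem_range_of_lt hP hp hq j hej hj hvp
    exact h.eq j hje ▸ mem_arc j.zero_le hje
  · rintro ⟨i, ⟨-, hi⟩, rfl⟩
    exact ⟨⟨i, rfl⟩, i, (h.eq i hi).symm⟩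

lemma touch_arc_of_component (h : IsAligned G p q e) (hp : IsPeripheral G W p)
    (hq : IsPeripheral G W q) {C : Set V} (hC : C.Nonempty)
    (hCW : C ⊆ W \ (Set.range p ∪ Set.range q))
    (hcl : ∀ u ∈ C, ∀ v ∈ W \ (Set.range p ∪ Set.range q), G.Adj u v → v ∈ C) :
    Touch G C (arc p (e + 1) (N₁ - 1)) := by
  have succ_mem : p (e + 1 : ℕ) ∈ Set.range p := ⟨_, rfl⟩
  refine ConnectedOn.touch_of_closed hq.connectedOn_compl hC
    (fun v hv => ⟨(hCW hv).1, fun hvq => (hCW hv).2 (Or.inr hvq)⟩)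
    (fun hsub => (hCW (hsub ⟨hp.range_subset succ_mem, h.succ_left⟩)).2 (Or.inl succ_mem))
    fun u hu v ⟨hvW, hvq⟩ huv => ?_
  by_cases hvp : v ∈ Set.range p
  · obtain ⟨i, hi, rfl⟩ := h.left.exists_natCast_eq_of_mem_range hvp
    have hei : e < i := by
      by_contra! hie
      exact hvq ⟨i, (h.eq i hie).symm⟩
    exact Or.inr (mem_arc hei (by omega))
  · exact Or.inl (hcl u hu v ⟨hvW, by simp [hvp, hvq]⟩ huv)

/- If `e ≥ 2`, the vertex `p 1` has a neighbour off both cycles, and the component containing it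
crosses the rest of `q` on the cycle `p`. -/
lemma eq_one (h : IsAligned G p q e) (hW : IsThreeConnectedOn G W) (hP : IsPlanar G)
    (hp : IsPeripheral G W p) (hq : IsPeripheral G W q) : e = 1 := by
  by_contra hne
  have one_le := h.one_le
  have lt_left := h.lt_left
  have lt_right := h.lt_right
  obtain ⟨e, rfl⟩ : ∃ e', e = e' + 1 := ⟨e - 1, by omega⟩
  obtain ⟨w, hw, hw₀, hw₂⟩ :=
    hW.exists_neighbor (p (1 : ℕ)) (hp.range_subset ⟨_, rfl⟩) (p (0 : ℕ)) (p (2 : ℕ))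
  have hwp : w ∉ Set.range p := h.left.notMem_range_of_adj hw hw₀ hw₂
  have hwq : w ∉ Set.range q := by
    rw [h.eq _ (by omega)] at hw hw₀ hw₂
    exact h.right.notMem_range_of_adj hw hw₀ hw₂
  obtain ⟨C, hCW, hwC, hC, hcl⟩ := exists_component (G := G)
    (T := W \ (Set.range p ∪ Set.range q)) ⟨hW.mem_of_adj _ _ hw.symm, by simp [hwp, hwq]⟩
  have hCβ : Touch G C (arc q (e + 1 + 1) (N₂ - 1)) :=
    h.symm.touch_arc_of_component hq hp ⟨w, hwC⟩ (Set.union_comm _ _ ▸ hCW)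
      (Set.union_comm _ _ ▸ hcl)
  refine h.left.false_of_crossing hP (by omega : 0 < e) e.lt_succ_self lt_left
    (h.right.connectedOn_arc (by omega)) hC ?_
    (Set.disjoint_right.2 fun v hv hvp => (hCW hv).2 (Or.inl hvp))
    (Set.disjoint_right.2 fun v hv hvq => (hCW hv).2 (Or.inr (arc_subset_range q _ _ hvq)))
    hCβ.symm ?_ ?_ ⟨w, hwC, _, mem_arc le_rfl (by omega), hw.symm⟩
    (h.touch_arc_of_component hp hq ⟨w, hwC⟩ hCW hcl)
  · rw [Set.disjoint_right]
    rintro _ ⟨j, ⟨hj, hj'⟩, rfl⟩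
    exact h.notMem_range_of_lt hP hp hq j hj (by omega)
  · exact ⟨_, mem_arc (by omega) le_rfl, _, mem_arc le_rfl le_rfl,
      h.eq 0 (by omega) ▸ h.right.adj_zero_pred.symm⟩
  · exact ⟨_, mem_arc le_rfl (by omega), _, mem_arc le_rfl le_rfl,
      h.eq _ le_rfl ▸ (h.right.adj_natCast_succ _).symm⟩

end IsAligned

theorem IsPeripheral.range_inter_range_subset {W : Set V} (hp : IsPeripheral G W p)
    (hq : IsPeripheral G W q) (hW : IsThreeConnectedOn G W) (hP : IsPlanar G)
    (hne : Set.range p ≠ Set.range q) {x y : V} (hxy : G.Adj x y)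
    (hx : x ∈ Set.range p ∩ Set.range q) (hy : y ∈ Set.range p ∩ Set.range q) :
    Set.range p ∩ Set.range q ⊆ {x, y} := by
  obtain ⟨p', q', e, h, hpp', hqq', hxe, hye⟩ :=
    hp.isInducedCycle.exists_isAligned hq.isInducedCycle hne hxy hx hy
  have hp' : IsPeripheral G W p' := ⟨h.left, hpp' ▸ hp.range_subset, hpp' ▸ hp.connectedOn_compl⟩
  have hq' : IsPeripheral G W q' := ⟨h.right, hqq' ▸ hq.range_subset, hqq' ▸ hq.connectedOn_compl⟩
  obtain rfl := h.eq_one hW hP hp' hq'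
  rw [← hpp', ← hqq', h.range_inter_range hP hp' hq']
  obtain ⟨i, ⟨-, hi⟩, rfl⟩ := hxe
  obtain ⟨j, ⟨-, hj⟩, rfl⟩ := hye
  have hij : i ≠ j := fun hij => hxy.ne (by rw [hij])
  rintro _ ⟨k, ⟨-, hk⟩, rfl⟩
  rcases (by omega : k = i ∨ k = j) with rfl | rfl
  · exact Or.inl rfl
  · exact Or.inr rfl

end Aligned

section Triples

variable {V : Type*} {G : SimpleGraph V} {x y : V}

/-- `x` and `y` are adjacent and `R 0`, `R 1`, `R 2` are disjoint connected sets joining `x` to `y`: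
a theta graph, up to contraction, together with the edge `xy`. -/
structure IsTheta (G : SimpleGraph V) (x y : V) (R : Fin 3 → Set V) : Prop where
  adj : G.Adj x y
  connectedOn : ∀ i, ConnectedOn G (R i)
  disjoint : Pairwise fun i j => Disjoint (R i) (R j)
  left_notMem : ∀ i, x ∉ R i
  right_notMem : ∀ i, y ∉ R i
  touch_left : ∀ i, Touch G {x} (R i)
  touch_right : ∀ i, Touch G {y} (R i)

lemma forall_fin_three {P : Fin 3 → Prop} (h₀ : P 0) (h₁ : P 1) (h₂ : P 2) : ∀ i, P i := by
  intro i; fin_cases i <;> assumption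

lemma pairwise_cons {α : Type*} {n : ℕ} {r : α → α → Prop} [Std.Symm r] {a : α} {f : Fin n → α}
    (ha : ∀ i, r a (f i)) (hf : Pairwise fun i j => r (f i) (f j)) :
    Pairwise fun i j =>
      r ((Fin.cons a f : Fin (n + 1) → α) i) ((Fin.cons a f : Fin (n + 1) → α) j) := by
  have : Std.Symm fun i j =>
      r ((Fin.cons a f : Fin (n + 1) → α) i) ((Fin.cons a f : Fin (n + 1) → α) j) :=
    ⟨fun _ _ h => Std.Symm.symm _ _ h⟩
  simpa [pairwise_fin_succ_iff_of_isSymm] using ⟨ha, hf⟩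

namespace IsTheta

variable {R : Fin 3 → Set V} {T : Set V}

lemma false_of_forall_touch (hR : IsTheta G x y R) (hP : IsPlanar G) {C : Set V}
    (hC : ConnectedOn G C) (hx : x ∉ C) (hy : y ∉ C) (hd : ∀ i, Disjoint C (R i))
    (htouch : ∀ i, Touch G C (R i)) : False := by
  refine hP.false_of_k33 ![{x}, {y}, C] R ?_ hR.connectedOn ?_ hR.disjoint ?_ ?_
  · exact forall_fin_three (.singleton x) (.singleton y) hC
  · exact pairwise_disjoint_three (Set.disjoint_singleton.2 hR.adj.ne)
      (Set.disjoint_singleton_left.2 hx) (Set.disjoint_singleton_left.2 hy)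
  · exact forall_fin_three (fun i => Set.disjoint_singleton_left.2 (hR.left_notMem i))
      (fun i => Set.disjoint_singleton_left.2 (hR.right_notMem i)) hd
  · exact forall_fin_three hR.touch_left hR.touch_right htouch

lemma false_of_pairwise_touch (hR : IsTheta G x y R) (hP : IsPlanar G)
    (htouch : ∀ i, Touch G (R i) (R (i + 1))) : False := by
  have touch : Pairwise fun i j => Touch G (R i) (R j) := by
    intro i j hij
    rcases (by omega : j = i + 1 ∨ i = j + 1) with rfl | rfl
    exacts [htouch i, (htouch j).symm]
  refine hP.false_of_k5 (Fin.cons {x} (Fin.cons {y} R)) ?_ ?_ ?_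
  · exact Fin.cases (.singleton x) (Fin.cases (.singleton y) hR.connectedOn)
  · have : Std.Symm fun A B : Set V => Disjoint A B := ⟨fun _ _ h => h.symm⟩
    exact pairwise_cons (r := fun A B : Set V => Disjoint A B)
      (Fin.cases (Set.disjoint_singleton.2 hR.adj.ne)
        fun i => Set.disjoint_singleton_left.2 (hR.left_notMem i))
      (pairwise_cons (fun i => Set.disjoint_singleton_left.2 (hR.right_notMem i)) hR.disjoint)
  · have : Std.Symm (Touch G) := ⟨fun _ _ h => h.symm⟩
    exact pairwise_cons (r := Touch G) (Fin.cases ⟨x, rfl, y, rfl, hR.adj⟩ hR.touch_left)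
      (pairwise_cons hR.touch_right touch)

/- Three components of `T`, one touching each pair of the `R i`, either coincide somewhere and then
give a `K₃,₃`-minor, or can be absorbed into the `R i` to give a `K₅`-minor. -/
lemma false_of_links (hR : IsTheta G x y R) (hP : IsPlanar G) (hT : ∀ i, Disjoint (R i) T)
    (hx : x ∉ T) (hy : y ∉ T)
    (hlink : ∀ i, Touch G (R i) (R (i + 1)) ∨ ∃ C ⊆ T, ConnectedOn G C ∧
      (∀ u ∈ C, ∀ v ∈ T, G.Adj u v → v ∈ C) ∧ Touch G C (R i) ∧ Touch G C (R (i + 1))) : False := by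
  have hC (C : Set V) (hCT : C ⊆ T) (hC : ConnectedOn G C) : ¬ ∀ i, Touch G C (R i) :=
    hR.false_of_forall_touch hP hC (fun h => hx (hCT h)) (fun h => hy (hCT h))
      fun i => ((hT i).mono_right hCT).symm
  have exists_link (i) : ∃ L ⊆ T, ConnectedOn G (R i ∪ L) ∧ Touch G (R i ∪ L) (R (i + 1)) ∧
      (L.Nonempty → ConnectedOn G L ∧ (∀ u ∈ L, ∀ v ∈ T, G.Adj u v → v ∈ L) ∧
        Touch G L (R i) ∧ Touch G L (R (i + 1))) := by
    rcases hlink i with h | ⟨C, hCT, hC, hcl, hCi, hCi'⟩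
    · exact ⟨∅, Set.empty_subset T, by simpa using hR.connectedOn i, by simpa using h, by simp⟩
    · exact ⟨C, hCT, (hR.connectedOn i).union hC hCi.symm,
        hCi'.mono Set.subset_union_right subset_rfl,
        fun _ => ⟨hC, hcl, hCi, hCi'⟩⟩
  choose L hLT hL htouch hLne using exists_link
  have disjoint_succ (i) : Disjoint (L i) (L (i + 1)) := by
    refine Set.disjoint_left.2 fun v hv hv' => ?_
    obtain ⟨hLi, -, hi, -⟩ := hLne i ⟨v, hv⟩
    obtain ⟨hLi', hcl, hi', hi''⟩ := hLne (i + 1) ⟨v, hv'⟩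
    have hsub : L i ⊆ L (i + 1) := ConnectedOn.subset_of_closed hLi ⟨v, hv, hv'⟩
      fun u _ hu w hw huw => hcl u hu w (hLT i hw) huw
    refine hC _ (hLT _) hLi' fun j => ?_
    rcases (by omega : j = i ∨ j = i + 1 ∨ j = i + 1 + 1) with rfl | rfl | rfl
    exacts [hi.mono hsub subset_rfl, hi', hi'']
  have disjoint_L : Pairwise fun i j => Disjoint (L i) (L j) := by
    intro i j hij
    rcases (by omega : j = i + 1 ∨ i = j + 1) with rfl | rfl
    exacts [disjoint_succ i, (disjoint_succ j).symm]
  refine false_of_pairwise_touch (R := fun i => R i ∪ L i)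
    ⟨hR.adj, hL, fun i j hij => ?_, fun i => ?_, fun i => ?_, fun i => ?_, fun i => ?_⟩
    hP fun i => ?_
  · exact ((hR.disjoint hij).union_left ((hT j).mono_right (hLT i)).symm).union_right
      (((hT i).mono_right (hLT j)).union_left (disjoint_L hij))
  · exact fun h => h.elim (hR.left_notMem i) fun h => hx (hLT i h)
  · exact fun h => h.elim (hR.right_notMem i) fun h => hy (hLT i h)
  · exact (hR.touch_left i).mono subset_rfl Set.subset_union_left
  · exact (hR.touch_right i).mono subset_rfl Set.subset_union_left
  · exact (htouch i).mono subset_rfl Set.subset_union_left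

end IsTheta

lemma IsInducedCycle.diff_pair {N : ℕ} {c : ZMod N → V} (hc : IsInducedCycle G c)
    (hxy : G.Adj x y) (hx : x ∈ Set.range c) (hy : y ∈ Set.range c) :
    ConnectedOn G (Set.range c \ {x, y}) ∧ Touch G {x} (Set.range c \ {x, y}) ∧
      Touch G {y} (Set.range c \ {x, y}) := by
  obtain ⟨c, hc, hrange, rfl, rfl⟩ := hc.exists_start hx hy hxy
  have three_le := hc.three_le
  have : NeZero N := ⟨by omega⟩
  have eq_arc : Set.range c \ {c 0, c 1} = arc c 2 (N - 1) := by
    ext v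
    constructor
    · rintro ⟨⟨i, rfl⟩, hi⟩
      obtain ⟨a, ha, rfl⟩ := exists_natCast_eq i
      refine mem_arc (by_contra fun h => hi ?_) (by omega)
      interval_cases a <;> simp
    · rintro ⟨i, ⟨hi, hi'⟩, rfl⟩
      refine ⟨⟨i, rfl⟩, ?_⟩
      rintro (h | h)
      · have := (hc.natCast_inj (i := i) (j := 0) (by omega) (by omega)).1 (by simpa using h)
        omega
      · have := (hc.natCast_inj (i := i) (j := 1) (by omega) (by omega)).1 (by simpa using h)
        omega
  rw [← hrange, eq_arc]
  refine ⟨hc.connectedOn_arc (by omega), ⟨_, rfl, _, mem_arc (by omega) le_rfl, ?_⟩,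
    ⟨_, rfl, _, mem_arc le_rfl (by omega), ?_⟩⟩
  · simpa using hc.adj_zero_pred
  · simpa using hc.adj_natCast_succ 1

/-- `U` is the vertex set of a peripheral cycle of `G`. -/
def IsPeripheralSet (G : SimpleGraph V) (W U : Set V) : Prop :=
  ∃ (N : ℕ) (c : ZMod N → V), IsPeripheral G W c ∧ Set.range c = U

theorem IsPeripheralSet.false_of_three {W : Set V} (hW : IsThreeConnectedOn G W) (hP : IsPlanar G)
    {U : Fin 3 → Set V} (hU : ∀ i, IsPeripheralSet G W (U i)) (hne : Function.Injective U)
    (hxy : G.Adj x y) (hx : ∀ i, x ∈ U i) (hy : ∀ i, y ∈ U i) : False := by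
  choose N c hc hcU using hU
  obtain rfl : (fun i => Set.range (c i)) = U := funext hcU
  have inter {i j} (hij : i ≠ j) : Set.range (c i) ∩ Set.range (c j) ⊆ {x, y} :=
    (hc i).range_inter_range_subset (hc j) hW hP (hne.ne hij) hxy ⟨hx i, hx j⟩ ⟨hy i, hy j⟩
  have diff_pair i := (hc i).isInducedCycle.diff_pair hxy (hx i) (hy i)
  have hR : IsTheta G x y fun i => Set.range (c i) \ {x, y} :=
    { adj := hxy
      connectedOn := fun i => (diff_pair i).1
      disjoint := fun i j hij => Set.disjoint_left.2 fun v hv hv' => hv.2 (inter hij ⟨hv.1, hv'.1⟩)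
      left_notMem := by simp
      right_notMem := by simp
      touch_left := fun i => (diff_pair i).2.1
      touch_right := fun i => (diff_pair i).2.2 }
  have subset_compl {i j} (hij : i ≠ j) :
      Set.range (c i) \ {x, y} ⊆ W \ Set.range (c j) := fun v hv =>
    ⟨(hc i).range_subset hv.1, fun hv' => hv.2 (inter hij ⟨hv.1, hv'⟩)⟩
  let T : Set V := W \ ⋃ i, Set.range (c i)
  have hT (i) : Disjoint (Set.range (c i) \ {x, y}) T :=
    Set.disjoint_left.2 fun v hv hvT => hvT.2 (Set.mem_iUnion_of_mem i hv.1)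
  refine hR.false_of_links hP hT (fun h => h.2 (Set.mem_iUnion_of_mem 0 (hx 0)))
    (fun h => h.2 (Set.mem_iUnion_of_mem 0 (hy 0))) fun i => ?_
  refine ConnectedOn.touch_or_exists_component (hc (i + 2)).connectedOn_compl (fun v hv => ?_)
    ?_ ?_ (hR.disjoint (by omega)) (hT _)
  · have hvxy : v ∉ ({x, y} : Set V) := by
      rintro (rfl | rfl)
      exacts [hv.2 (hx _), hv.2 (hy _)]
    by_cases hi : v ∈ Set.range (c i)
    · exact Or.inl (Or.inl ⟨hi, hvxy⟩)
    by_cases hi' : v ∈ Set.range (c (i + 1))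
    · exact Or.inl (Or.inr ⟨hi', hvxy⟩)
    refine Or.inr ⟨hv.1, fun hvU => ?_⟩
    obtain ⟨j, hj⟩ := Set.mem_iUnion.1 hvU
    rcases (by omega : j = i ∨ j = i + 1 ∨ j = i + 2) with rfl | rfl | rfl
    exacts [hi hj, hi' hj, hv.2 hj]
  · obtain ⟨a, ha⟩ := ConnectedOn.set_nonempty (hR.connectedOn i)
    exact ⟨a, subset_compl (by omega) ha, ha⟩
  · obtain ⟨a, ha⟩ := ConnectedOn.set_nonempty (hR.connectedOn (i + 1))
    exact ⟨a, subset_compl (by omega) ha, ha⟩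

end Triples

/-! ### Euler's inequality for 3-connected graphs -/

section ThreeConnectedEuler

variable {V : Type*}

/-- The graph with edge set `E`. -/
abbrev edgeGraph (E : Finset (Sym2 V)) : SimpleGraph V :=
  fromEdgeSet (E : Set (Sym2 V))

lemma edgeGraph_adj {E : Finset (Sym2 V)} (hE : ∀ e ∈ E, ¬ e.IsDiag) {u v : V} :
    (edgeGraph E).Adj u v ↔ s(u, v) ∈ E := by
  rw [fromEdgeSet_adj, Finset.mem_coe, and_iff_left_of_imp]
  exact fun h huv => hE _ h huv

lemma edgeGraph_mono {E E' : Finset (Sym2 V)} (h : E' ⊆ E) : edgeGraph E' ≤ edgeGraph E :=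
  fromEdgeSet_mono (Finset.coe_subset.2 h)

/-- The set of vertices covered by the edge set `E`. -/
def endpoints [DecidableEq V] (E : Finset (Sym2 V)) : Finset V :=
  E.biUnion Sym2.toFinset

/-- No edge of `F` has an end of degree one in `F`. Nonempty such sets stand in for cycles: each of
them contains one, and the edge set of a cycle is one. -/
def IsLeafless (F : Finset (Sym2 V)) : Prop :=
  ∀ e ∈ F, ∀ v ∈ e, ∃ e' ∈ F, e' ≠ e ∧ v ∈ e'

/-- `E` is the edge set of a planar graph in which every cycle has weight at least `g ≥ 0`. -/
structure IsGirthWeighting (E : Finset (Sym2 V)) (ℓ : Sym2 V → ℤ) (g : ℤ) : Prop where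
  not_isDiag : ∀ e ∈ E, ¬ e.IsDiag
  isPlanar : IsPlanar (edgeGraph E)
  girth_nonneg : 0 ≤ g
  nonneg : ∀ e, 0 ≤ ℓ e
  le_sum : ∀ F ⊆ E, F.Nonempty → IsLeafless F → g ≤ ∑ e ∈ F, ℓ e

/-- Euler's formula with each of the `#E - #V + 2` faces counted with its weight at least `g`,
and each edge on at most two faces. -/
def EulerInequality [DecidableEq V] (E : Finset (Sym2 V)) (ℓ : Sym2 V → ℤ) (g : ℤ) : Prop :=
  g * ((E.card : ℤ) - (endpoints E).card + 2) ≤ 2 * ∑ e ∈ E, ℓ e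

open Classical in
/-- The edges in `E` with both ends in `U`. -/
noncomputable def edgesInside (E : Finset (Sym2 V)) (U : Set V) : Finset (Sym2 V) :=
  {e ∈ E | ∀ v ∈ e, v ∈ U}

variable {E : Finset (Sym2 V)} {W : Set V}

section Endpoints

variable [DecidableEq V]

lemma mem_endpoints {v : V} : v ∈ endpoints E ↔ ∃ e ∈ E, v ∈ e := by
  simp only [endpoints, Finset.mem_biUnion, Sym2.mem_toFinset]

lemma mem_endpoints_of_mem {u v : V} (h : s(u, v) ∈ E) : u ∈ endpoints E :=
  mem_endpoints.2 ⟨_, h, Sym2.mem_mk_left u v⟩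

lemma endpoints_mono {E' : Finset (Sym2 V)} (h : E' ⊆ E) : endpoints E' ⊆ endpoints E :=
  Finset.biUnion_subset_biUnion_of_subset_left _ h

end Endpoints

lemma mem_edgesInside {U : Set V} {e : Sym2 V} :
    e ∈ edgesInside E U ↔ e ∈ E ∧ ∀ v ∈ e, v ∈ U := by
  simp only [edgesInside, Finset.mem_filter]

lemma mk_mem_edgesInside {U : Set V} {u v : V} :
    s(u, v) ∈ edgesInside E U ↔ s(u, v) ∈ E ∧ u ∈ U ∧ v ∈ U := by
  simp [mem_edgesInside]

lemma IsInducedCycle.sum_edgesInside (hE : ∀ e ∈ E, ¬ e.IsDiag) {N : ℕ} {c : ZMod N → V}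
    (hc : IsInducedCycle (edgeGraph E) c) (φ : Sym2 V → ZMod 2) :
    ∑ e ∈ edgesInside E (Set.range c), φ e = cycleSign φ c := by
  have three_le := hc.three_le
  have : NeZero N := ⟨by omega⟩
  have two_ne_zero : (2 : ZMod N) ≠ 0 := fun h => by
    have := Nat.le_of_dvd two_pos ((ZMod.natCast_eq_zero_iff 2 N).1 (by exact_mod_cast h))
    omega
  refine (Finset.sum_nbij (fun i : ℕ => s(c i, c (i + 1))) ?_ ?_ ?_ fun _ _ => rfl).symm
  · exact fun i _ => mk_mem_edgesInside.2
      ⟨(edgeGraph_adj hE).1 (hc.adj_add_one i), Set.mem_range_self _, Set.mem_range_self _⟩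
  · intro i hi j hj hij
    rw [Finset.mem_coe, Finset.mem_range] at hi hj
    rcases Sym2.eq_iff.1 hij with ⟨h, -⟩ | ⟨h, h'⟩
    · exact (hc.natCast_inj hi hj).1 h
    · have h := hc.injective h
      have h' := hc.injective h'
      exact absurd (by linear_combination h' - h) two_ne_zero
  · intro e he
    induction e with | _ u v
    obtain ⟨huv, ⟨i, rfl⟩, ⟨j, rfl⟩⟩ := mk_mem_edgesInside.1 he
    obtain ⟨a, ha, rfl⟩ := exists_natCast_eq i
    obtain ⟨b, hb, rfl⟩ := exists_natCast_eq j
    rcases (hc.adj_iff _ _).1 ((edgeGraph_adj hE).2 huv) with h | h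
    · exact ⟨a, by simpa using ha, by simp only [h]⟩
    · exact ⟨b, by simpa using hb, by simp only [h, Sym2.eq_swap]⟩

lemma isBalanced_mem [DecidableEq V] (G : SimpleGraph V) (v : V) (M : Set V) :
    IsBalanced G (fun e => if v ∈ e then 1 else 0) M := by
  refine ⟨fun w => if v = w then 1 else 0, fun u _ w _ huw => ?_⟩
  have hne := huw.ne
  by_cases hu : v = u <;> by_cases hw : v = w <;> simp_all [Sym2.mem_iff]

lemma isLeafless_of_sum_mem_eq_zero [DecidableEq V] {F : Finset (Sym2 V)}
    (h : ∀ v, ∑ e ∈ F, (if v ∈ e then (1 : ZMod 2) else 0) = 0) : IsLeafless F := by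
  intro e he v hv
  by_contra! hno
  refine one_ne_zero (α := ZMod 2) ?_
  rw [← h v, Finset.sum_eq_single_of_mem e he fun e' he' hne => if_neg (hno e' he' hne), if_pos hv]

/- A signing that vanishes on `P` is determined by the potential of its class, normalised to be `0`
at some vertex, so there are at most `2 ^ (#P + #V - 1)` signings. -/
lemma card_add_one_le_of_isBalanced [DecidableEq V] (hE : ∀ e ∈ E, ¬ e.IsDiag)
    (hne : E.Nonempty) {P : Finset (Set V)}
    (hP : ∀ φ : Sym2 V → ZMod 2, (∀ U ∈ P, ∑ e ∈ edgesInside E U, φ e = 0) →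
      IsBalanced (edgeGraph E) φ (endpoints E)) :
    E.card + 1 ≤ (endpoints E).card + P.card := by
  obtain ⟨w, hw⟩ : (endpoints E).Nonempty := by
    obtain ⟨⟨u, v⟩, he⟩ := hne
    exact ⟨u, mem_endpoints_of_mem he⟩
  let extend (φ : E → ZMod 2) : Sym2 V → ZMod 2 := Function.extend Subtype.val φ 0
  have extend_val (φ : E → ZMod 2) (e : E) : extend φ e = φ e :=
    Subtype.val_injective.extend_apply _ _ e
  let total (φ : E → ZMod 2) (U : P) : ZMod 2 := ∑ e ∈ edgesInside E U, extend φ e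
  let rep (φ : E → ZMod 2) : E → ZMod 2 := Function.invFun total (total φ)
  have total_rep (φ : E → ZMod 2) : total (rep φ) = total φ := Function.invFun_eq ⟨φ, rfl⟩
  have balanced (φ : E → ZMod 2) :
      IsBalanced (edgeGraph E) (extend φ + extend (rep φ)) (endpoints E) := by
    refine hP _ fun U hU => ?_
    have htotal : total φ ⟨U, hU⟩ + total (rep φ) ⟨U, hU⟩ = 0 := by
      rw [total_rep, CharTwo.add_self_eq_zero]
    simpa only [Pi.add_apply, Finset.sum_add_distrib] using htotal
  choose f hf hfw using fun φ => (balanced φ).exists_eq_zero w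
  let code (φ : E → ZMod 2) : (P → ZMod 2) × ((endpoints E).erase w → ZMod 2) :=
    (total φ, fun v => f φ v)
  have code_injective : Function.Injective code := by
    intro φ φ' h
    have hrep : rep φ = rep φ' := congrArg (Function.invFun total) (congrArg Prod.fst h)
    have hpot (v : V) (hv : v ∈ endpoints E) : f φ v = f φ' v := by
      by_cases hvw : v = w
      · rw [hvw, hfw, hfw]
      · exact congrFun (congrArg Prod.snd h) ⟨v, Finset.mem_erase.2 ⟨hvw, hv⟩⟩
    funext ⟨e, he⟩
    induction e with | _ u v
    have hu := mem_endpoints_of_mem he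
    have hv := mem_endpoints_of_mem (Sym2.eq_swap ▸ he)
    have huv := (edgeGraph_adj hE).2 he
    have hsum := hf φ u hu v hv huv
    rw [hpot u hu, hpot v hv, ← hf φ' u hu v hv huv, hrep] at hsum
    exact (extend_val φ ⟨_, he⟩).symm.trans
      ((add_right_cancel hsum).trans (extend_val φ' ⟨_, he⟩))
  have hcard := Fintype.card_le_of_injective code code_injective
  simp only [Fintype.card_prod, Fintype.card_fun, ZMod.card, Fintype.card_coe, ← pow_add] at hcard
  have := (Nat.pow_le_pow_iff_right one_lt_two).1 hcard
  rw [Finset.card_erase_of_mem hw] at this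
  have : 0 < (endpoints E).card := Finset.card_pos.2 ⟨w, hw⟩
  omega

lemma card_add_two_le_of_isBalanced [DecidableEq V] (hE : ∀ e ∈ E, ¬ e.IsDiag)
    (hne : E.Nonempty) {P : Finset (Set V)} (hPne : P.Nonempty)
    (hP : ∀ φ : Sym2 V → ZMod 2, (∀ U ∈ P, ∑ e ∈ edgesInside E U, φ e = 0) →
      IsBalanced (edgeGraph E) φ (endpoints E))
    (hdep : ∀ φ : Sym2 V → ZMod 2, ∑ U ∈ P, ∑ e ∈ edgesInside E U, φ e = 0) :
    E.card + 2 ≤ (endpoints E).card + P.card := by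
  classical
  obtain ⟨U₀, hU₀⟩ := hPne
  have := card_add_one_le_of_isBalanced hE hne (P := P.erase U₀) fun φ hφ => hP φ fun U hU => by
    by_cases hUU : U = U₀
    · rw [hUU, ← hdep φ, ← Finset.add_sum_erase _ _ hU₀, Finset.sum_eq_zero hφ, add_zero]
    · exact hφ U (Finset.mem_erase.2 ⟨hUU, hU⟩)
  rw [Finset.card_erase_of_mem hU₀] at this
  have := Finset.card_pos.2 ⟨U₀, hU₀⟩
  omega

open Classical in
lemma sum_sum_edgesInside {R : Type*} [AddCommMonoid R] (P : Finset (Set V)) (φ : Sym2 V → R) :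
    ∑ U ∈ P, ∑ e ∈ edgesInside E U, φ e =
      ∑ e ∈ E, (P.filter fun U => e ∈ edgesInside E U).card • φ e := by
  simp only [← Finset.sum_const]
  refine Finset.sum_comm' fun U e => ?_
  simp only [Finset.mem_filter, mem_edgesInside]
  tauto

open Classical in
/-- The edges in `E` lying inside exactly one member of `P`. -/
noncomputable def edgesInsideOne (E : Finset (Sym2 V)) (P : Finset (Set V)) : Finset (Sym2 V) :=
  {e ∈ E | (P.filter fun U => e ∈ edgesInside E U).card = 1}

open Classical in
lemma sum_sum_edgesInside_eq {P : Finset (Set V)}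
    (hP : ∀ e, (P.filter fun U => e ∈ edgesInside E U).card ≤ 2) (φ : Sym2 V → ZMod 2) :
    ∑ U ∈ P, ∑ e ∈ edgesInside E U, φ e = ∑ e ∈ edgesInsideOne E P, φ e := by
  rw [sum_sum_edgesInside, edgesInsideOne, Finset.sum_filter]
  refine Finset.sum_congr rfl fun e _ => ?_
  have := hP e
  interval_cases (P.filter fun U => e ∈ edgesInside E U).card <;> simp [CharTwo.two_eq_zero]

open Classical in
lemma sum_sum_edgesInside_add_le {P : Finset (Set V)}
    (hP : ∀ e, (P.filter fun U => e ∈ edgesInside E U).card ≤ 2) {ℓ : Sym2 V → ℤ}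
    (hℓ : ∀ e, 0 ≤ ℓ e) :
    ∑ U ∈ P, ∑ e ∈ edgesInside E U, ℓ e + ∑ e ∈ edgesInsideOne E P, ℓ e ≤ 2 * ∑ e ∈ E, ℓ e := by
  rw [sum_sum_edgesInside, edgesInsideOne, Finset.sum_filter, ← Finset.sum_add_distrib,
    Finset.mul_sum]
  refine Finset.sum_le_sum fun e _ => ?_
  have := hP e
  have := hℓ e
  interval_cases (P.filter fun U => e ∈ edgesInside E U).card <;> simp <;> linarith

namespace IsPeripheralSet

variable {U : Set V}

lemma edgesInside_nonempty (hE : ∀ e ∈ E, ¬ e.IsDiag) (hU : IsPeripheralSet (edgeGraph E) W U) :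
    (edgesInside E U).Nonempty := by
  obtain ⟨N, c, hc, rfl⟩ := hU
  exact ⟨s(c 0, c (0 + 1)), mk_mem_edgesInside.2
    ⟨(edgeGraph_adj hE).1 (hc.isInducedCycle.adj_add_one 0), ⟨_, rfl⟩, ⟨_, rfl⟩⟩⟩

lemma sum_mem_eq_zero [DecidableEq V] (hE : ∀ e ∈ E, ¬ e.IsDiag)
    (hU : IsPeripheralSet (edgeGraph E) W U) (v : V) :
    ∑ e ∈ edgesInside E U, (if v ∈ e then (1 : ZMod 2) else 0) = 0 := by
  obtain ⟨N, c, hc, rfl⟩ := hU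
  rw [hc.isInducedCycle.sum_edgesInside hE,
    hc.isInducedCycle.cycleSign_eq_zero (isBalanced_mem _ v _)]

open Classical in
lemma card_filter_le_two (hE : ∀ e ∈ E, ¬ e.IsDiag) (hW : IsThreeConnectedOn (edgeGraph E) W)
    (hplanar : IsPlanar (edgeGraph E)) {P : Finset (Set V)}
    (hP : ∀ U ∈ P, IsPeripheralSet (edgeGraph E) W U) (e : Sym2 V) :
    (P.filter fun U => e ∈ edgesInside E U).card ≤ 2 := by
  by_contra! h
  induction e with | _ x y
  obtain ⟨s, hs, hcard⟩ := Finset.exists_subset_card_eq (Nat.succ_le_of_lt h)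
  let U (i : Fin 3) : Set V := s.equivFinOfCardEq hcard |>.symm i
  have hU (i) : U i ∈ P ∧ s(x, y) ∈ E ∧ x ∈ U i ∧ y ∈ U i := by
    simpa only [Finset.mem_filter, mk_mem_edgesInside] using hs (Subtype.prop _)
  exact false_of_three hW hplanar (fun i => hP _ (hU i).1)
    (Subtype.val_injective.comp (Equiv.injective _)) ((edgeGraph_adj hE).2 (hU 0).2.1)
    (fun i => (hU i).2.2.1) (fun i => (hU i).2.2.2)

end IsPeripheralSet

/- The peripheral cycles generate the cycle space, so there are at least `#E - #V + 1` of them, and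
each edge lies on at most two. If there are edges on exactly one of them, then these edges serve as
one more face; otherwise the peripheral cycles add up to `0`, so that there is one more. -/
theorem IsGirthWeighting.eulerInequality_of_isThreeConnectedOn [Finite V] [DecidableEq V]
    {ℓ : Sym2 V → ℤ} {g : ℤ} (h : IsGirthWeighting E ℓ g) (hne : E.Nonempty)
    (hcard : (endpoints E).card ≤ E.card) (hW : IsThreeConnectedOn (edgeGraph E) (endpoints E)) :
    EulerInequality E ℓ g := by
  have hE := h.not_isDiag
  let P : Finset (Set V) :=
    (Set.toFinite {U | IsPeripheralSet (edgeGraph E) (endpoints E) U}).toFinset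
  have mem_P (U) : U ∈ P ↔ IsPeripheralSet (edgeGraph E) (endpoints E) U := by simp [P]
  have balanced (φ : Sym2 V → ZMod 2) (hφ : ∀ U ∈ P, ∑ e ∈ edgesInside E U, φ e = 0) :
      IsBalanced (edgeGraph E) φ (endpoints E) := by
    by_contra hunbalanced
    obtain ⟨N, c, hc, hodd⟩ := hW.exists_odd_peripheral hunbalanced
    exact hodd (hc.isInducedCycle.sum_edgesInside hE φ ▸ hφ _ ((mem_P _).2 ⟨N, c, hc, rfl⟩))
  have rank := card_add_one_le_of_isBalanced hE hne balanced
  have le_two := IsPeripheralSet.card_filter_le_two hE hW h.isPlanar fun U => (mem_P U).1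
  have sum_le : P.card * g + ∑ e ∈ edgesInsideOne E P, ℓ e ≤ 2 * ∑ e ∈ E, ℓ e := by
    calc P.card * g + ∑ e ∈ edgesInsideOne E P, ℓ e
      _ ≤ ∑ U ∈ P, ∑ e ∈ edgesInside E U, ℓ e + ∑ e ∈ edgesInsideOne E P, ℓ e := by
        rw [← nsmul_eq_mul]
        gcongr
        refine Finset.card_nsmul_le_sum _ _ _ fun U hU => ?_
        have hU := (mem_P U).1 hU
        exact h.le_sum _ (fun e he => (mem_edgesInside.1 he).1) (hU.edgesInside_nonempty hE)
          (isLeafless_of_sum_mem_eq_zero (hU.sum_mem_eq_zero hE))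
      _ ≤ 2 * ∑ e ∈ E, ℓ e := sum_sum_edgesInside_add_le le_two h.nonneg
  have hg := h.girth_nonneg
  rcases (edgesInsideOne E P).eq_empty_or_nonempty with hT | hT
  · have hPne : P.Nonempty := Finset.card_pos.1 (by omega)
    have := card_add_two_le_of_isBalanced hE hne hPne balanced fun φ => by
      rw [sum_sum_edgesInside_eq le_two, hT, Finset.sum_empty]
    rw [hT, Finset.sum_empty, add_zero] at sum_le
    unfold EulerInequality
    nlinarith
  · have hgT : g ≤ ∑ e ∈ edgesInsideOne E P, ℓ e := by
      refine h.le_sum _ (Finset.filter_subset _ E) hT (isLeafless_of_sum_mem_eq_zero fun v => ?_)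
      rw [← sum_sum_edgesInside_eq le_two]
      exact Finset.sum_eq_zero fun U hU => ((mem_P U).1 hU).sum_mem_eq_zero hE v
    unfold EulerInequality
    nlinarith

end ThreeConnectedEuler

/-! ### Euler's inequality for planar graphs -/

section Euler

variable {V : Type*} {E E' A B F : Finset (Sym2 V)} {ℓ : Sym2 V → ℤ} {g : ℤ}
  {e : Sym2 V} {x y : V}

lemma IsGirthWeighting.subset (h : IsGirthWeighting E ℓ g) (hE : E' ⊆ E) :
    IsGirthWeighting E' ℓ g where
  not_isDiag e he := h.not_isDiag e (hE he)
  isPlanar := h.isPlanar.mono (edgeGraph_mono hE)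
  girth_nonneg := h.girth_nonneg
  nonneg := h.nonneg
  le_sum F hF := h.le_sum F (hF.trans hE)

lemma eq_mk_of_mem_of_mem (hx : x ∈ e) (hy : y ∈ e) (hxy : x ≠ y) : e = s(x, y) :=
  (Sym2.mem_and_mem_iff hxy).1 ⟨hx, hy⟩

open Classical in
/-- The edges in `E` with an end in `X`. -/
noncomputable def edgesMeeting (E : Finset (Sym2 V)) (X : Set V) : Finset (Sym2 V) :=
  {e ∈ E | ∃ v ∈ e, v ∈ X}

lemma mem_edgesMeeting {X : Set V} : e ∈ edgesMeeting E X ↔ e ∈ E ∧ ∃ v ∈ e, v ∈ X := by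
  simp only [edgesMeeting, Finset.mem_filter]

variable [DecidableEq V]

/-- Euler's inequality for all weightings of fewer than `n` edges which are at least as many as
their endpoints. -/
def EulerInequalityBelow (V : Type*) [DecidableEq V] (g : ℤ) (n : ℕ) : Prop :=
  ∀ (E : Finset (Sym2 V)) (ℓ : Sym2 V → ℤ), E.card < n → IsGirthWeighting E ℓ g → E.Nonempty →
    (endpoints E).card ≤ E.card → EulerInequality E ℓ g

lemma EulerInequality.of_subset (h : EulerInequality E' ℓ g) (hg : 0 ≤ g) (hℓ : ∀ e, 0 ≤ ℓ e)
    (hE : E' ⊆ E) (hcard : E.card + (endpoints E').card ≤ E'.card + (endpoints E).card) :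
    EulerInequality E ℓ g := by
  unfold EulerInequality at *
  have hsum : ∑ e ∈ E', ℓ e ≤ ∑ e ∈ E, ℓ e :=
    Finset.sum_le_sum_of_subset_of_nonneg hE fun e _ _ => hℓ e
  have hexcess : (E.card : ℤ) - (endpoints E).card + 2 ≤ E'.card - (endpoints E').card + 2 := by
    omega
  linarith [mul_le_mul_of_nonneg_left hexcess hg]

lemma endpoints_union : endpoints (A ∪ B) = endpoints A ∪ endpoints B := by
  ext v
  simp only [mem_endpoints, Finset.mem_union, or_and_right, exists_or]

lemma endpoints_insert (he : e.toFinset ⊆ endpoints A) : endpoints (insert e A) = endpoints A := by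
  rw [endpoints, Finset.biUnion_insert]
  exact Finset.union_eq_right.2 he

lemma toFinset_subset_endpoints (he : e ∈ E) : e.toFinset ⊆ endpoints E :=
  Finset.subset_biUnion_of_mem Sym2.toFinset he

lemma card_le_choose_two (hE : ∀ e ∈ E, ¬ e.IsDiag) :
    E.card ≤ (endpoints E).card.choose 2 := by
  rw [← Sym2.card_image_offDiag]
  refine Finset.card_le_card fun e he => ?_
  induction e with | _ u v
  exact Finset.mem_image.2 ⟨(u, v), Finset.mem_offDiag.2 ⟨mem_endpoints_of_mem he,
    mem_endpoints_of_mem (Sym2.eq_swap ▸ he), fun huv => hE _ he huv⟩, rfl⟩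

lemma IsLeafless.card_endpoints_le (h : IsLeafless F) : (endpoints F).card ≤ F.card := by
  suffices (endpoints F).card * 2 ≤ F.card * 2 by omega
  refine Finset.card_mul_le_card_mul (fun v e => v ∈ e) (fun v hv => ?_) fun e _ => ?_
  · obtain ⟨e, he, hve⟩ := mem_endpoints.1 hv
    obtain ⟨e', he', hne, hve'⟩ := h e he v hve
    exact Finset.one_lt_card.2
      ⟨e', Finset.mem_filter.2 ⟨he', hve'⟩, e, Finset.mem_filter.2 ⟨he, hve⟩, hne⟩
  · calc (Finset.bipartiteBelow (fun v e => v ∈ e) (endpoints F) e).card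
      _ ≤ e.toFinset.card :=
        Finset.card_le_card fun v hv => Sym2.mem_toFinset.2 (Finset.mem_filter.1 hv).2
      _ ≤ 2 := by rw [Sym2.card_toFinset]; split_ifs <;> omega

namespace IsGirthWeighting

lemma eulerInequality_of_not_isLeafless (h : IsGirthWeighting E ℓ g)
    (ih : EulerInequalityBelow V g E.card) (hcard : (endpoints E).card ≤ E.card)
    (hE : ¬ IsLeafless E) : EulerInequality E ℓ g := by
  unfold IsLeafless at hE
  push Not at hE
  obtain ⟨e, he, v, hve, unique⟩ := hE
  have hv := mem_endpoints.2 ⟨e, he, hve⟩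
  have hsub : endpoints (E.erase e) ⊆ (endpoints E).erase v := fun u hu => by
    refine Finset.mem_erase.2 ⟨?_, endpoints_mono (Finset.erase_subset _ _) hu⟩
    rintro rfl
    obtain ⟨e', he', hue'⟩ := mem_endpoints.1 hu
    exact unique e' (Finset.mem_of_mem_erase he') (Finset.ne_of_mem_erase he') hue'
  have two_le := Finset.card_le_card (toFinset_subset_endpoints he)
  rw [Sym2.card_toFinset_of_not_isDiag e (h.not_isDiag e he)] at two_le
  have hcard' := Finset.card_le_card hsub
  have hc := Finset.card_erase_add_one he
  rw [Finset.card_erase_of_mem hv] at hcard'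
  refine (ih _ ℓ (by omega) (h.subset (Finset.erase_subset _ _)) ?_ (by omega)).of_subset
    h.girth_nonneg h.nonneg (Finset.erase_subset e E) (by omega)
  exact Finset.card_pos.1 (by omega)

lemma eulerInequality_of_le_two_mul (h : IsGirthWeighting E ℓ g)
    (ih : EulerInequalityBelow V g E.card) (hcard : (endpoints E).card < E.card)
    (he : e ∈ E) (hle : g ≤ 2 * ℓ e) : EulerInequality E ℓ g := by
  have hc := Finset.card_erase_add_one he
  have hends := Finset.card_le_card (endpoints_mono (Finset.erase_subset e E))
  have two_le := Finset.card_le_card (toFinset_subset_endpoints he)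
  rw [Sym2.card_toFinset_of_not_isDiag e (h.not_isDiag e he)] at two_le
  have heuler := ih _ ℓ (by omega) (h.subset (Finset.erase_subset e E))
    (Finset.card_pos.1 (by omega)) (by omega)
  unfold EulerInequality at *
  rw [← Finset.add_sum_erase E ℓ he]
  have hexcess : (E.card : ℤ) - (endpoints E).card + 2 ≤
    ((E.erase e).card - (endpoints (E.erase e)).card + 2) + 1 := by omega
  linarith [mul_le_mul_of_nonneg_left hexcess h.girth_nonneg]

end IsGirthWeighting

/-- `E` is partitioned into the nonempty sets `A` and `B`. -/
structure IsSplit (E A B : Finset (Sym2 V)) : Prop where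
  union_eq : A ∪ B = E
  disjoint : Disjoint A B
  left_nonempty : A.Nonempty
  right_nonempty : B.Nonempty

namespace IsSplit

lemma left_subset (h : IsSplit E A B) : A ⊆ E :=
  h.union_eq ▸ Finset.subset_union_left

lemma right_subset (h : IsSplit E A B) : B ⊆ E :=
  h.union_eq ▸ Finset.subset_union_right

lemma sdiff_of_subset_right {B' : Finset (Sym2 V)} (h : IsSplit E A B) (hB' : B' ⊆ B)
    (hne : B'.Nonempty) : IsSplit E B' (E \ B') where
  union_eq := Finset.union_sdiff_of_subset (hB'.trans h.right_subset)
  disjoint := Finset.disjoint_sdiff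
  left_nonempty := hne
  right_nonempty := h.left_nonempty.mono <| Finset.subset_sdiff.2
    ⟨h.left_subset, h.disjoint.mono_right hB'⟩

lemma eulerInequality_of_card_inter_le_one (hs : IsSplit E A B) (h : IsGirthWeighting E ℓ g)
    (ih : EulerInequalityBelow V g E.card) (hcard : (endpoints E).card ≤ E.card)
    (hinter : (endpoints A ∩ endpoints B).card ≤ 1) : EulerInequality E ℓ g := by
  have hA := h.subset hs.left_subset
  have hB := h.subset hs.right_subset
  have card_edges := Finset.card_union_of_disjoint hs.disjoint
  have card_ends := Finset.card_union_add_card_inter (endpoints A) (endpoints B)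
  rw [← endpoints_union, hs.union_eq] at card_ends
  rw [hs.union_eq] at card_edges
  have posA := hs.left_nonempty.card_pos
  have posB := hs.right_nonempty.card_pos
  have hg := h.girth_nonneg
  by_cases hcA : (endpoints A).card ≤ A.card
  swap
  · exact (ih B ℓ (by omega) hB hs.right_nonempty (by omega)).of_subset hg h.nonneg hs.right_subset
      (by omega)
  by_cases hcB : (endpoints B).card ≤ B.card
  swap
  · exact (ih A ℓ (by omega) hA hs.left_nonempty (by omega)).of_subset hg h.nonneg hs.left_subset
      (by omega)
  have eulerA := ih A ℓ (by omega) hA hs.left_nonempty hcA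
  have eulerB := ih B ℓ (by omega) hB hs.right_nonempty hcB
  unfold EulerInequality at *
  rw [← hs.union_eq, Finset.sum_union hs.disjoint, hs.union_eq]
  have hexcess : (E.card : ℤ) - (endpoints E).card + 2 ≤
    (A.card - (endpoints A).card + 2) + (B.card - (endpoints B).card + 2) := by omega
  linarith [mul_le_mul_of_nonneg_left hexcess hg]

end IsSplit

/-- Every partition of `E` into two nonempty sets has at least two boundary vertices. -/
def IsBiconnected (E : Finset (Sym2 V)) : Prop :=
  ∀ A B, IsSplit E A B → 2 ≤ (endpoints A ∩ endpoints B).card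

section EdgesMeeting

variable {X : Set V} {v p q : V}

lemma mem_endpoints_edgesMeeting (hX : p ∈ X) (hp : p ∈ endpoints E) :
    p ∈ endpoints (edgesMeeting E X) := by
  obtain ⟨e, he, hpe⟩ := mem_endpoints.1 hp
  exact mem_endpoints.2 ⟨e, mem_edgesMeeting.2 ⟨he, p, hpe, hX⟩, hpe⟩

lemma notMem_of_mem_endpoints_edgesInside_compl (hp : p ∈ endpoints (edgesInside E Xᶜ)) :
    p ∉ X := by
  obtain ⟨e, he, hpe⟩ := mem_endpoints.1 hp
  exact (mem_edgesInside.1 he).2 p hpe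

lemma exists_adj_of_mem_endpoints_edgesMeeting (hX : v ∉ X)
    (hv : v ∈ endpoints (edgesMeeting E X)) : ∃ w ∈ X, s(w, v) ∈ E := by
  obtain ⟨e, he, hve⟩ := mem_endpoints.1 hv
  obtain ⟨he, w, hwe, hw⟩ := mem_edgesMeeting.1 he
  exact ⟨w, hw, eq_mk_of_mem_of_mem hwe hve (fun h => hX (h ▸ hw)) ▸ he⟩

lemma isSplit_edgesMeeting (hA : (edgesMeeting E X).Nonempty) (hB : (edgesInside E Xᶜ).Nonempty) :
    IsSplit E (edgesMeeting E X) (edgesInside E Xᶜ) := by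
  have hcompl : edgesInside E Xᶜ = E \ edgesMeeting E X := by
    ext e
    simp only [mem_edgesInside, Finset.mem_sdiff, mem_edgesMeeting, Set.mem_compl_iff]
    grind
  refine ⟨?_, ?_, hA, hB⟩
  · rw [hcompl]
    exact Finset.union_sdiff_of_subset fun e he => (mem_edgesMeeting.1 he).1
  · rw [hcompl]
    exact Finset.disjoint_sdiff

lemma endpoints_edgesMeeting_inter_subset {S : Finset V}
    (hS : ∀ w ∈ X, ∀ v ∉ X, s(w, v) ∈ E → v ∈ S) :
    endpoints (edgesMeeting E X) ∩ endpoints (edgesInside E Xᶜ) ⊆ S := by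
  intro v hv
  rw [Finset.mem_inter] at hv
  have hvX := notMem_of_mem_endpoints_edgesInside_compl hv.2
  obtain ⟨w, hw, hwv⟩ := exists_adj_of_mem_endpoints_edgesMeeting hvX hv.1
  exact hS w hw v hvX hwv

lemma IsBiconnected.endpoints_edgesMeeting_inter_eq {S : Finset V} (hE : IsBiconnected E)
    (hA : (edgesMeeting E X).Nonempty) (hB : (edgesInside E Xᶜ).Nonempty) (hcard : S.card ≤ 2)
    (hS : ∀ w ∈ X, ∀ v ∉ X, s(w, v) ∈ E → v ∈ S) :
    endpoints (edgesMeeting E X) ∩ endpoints (edgesInside E Xᶜ) = S :=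
  Finset.eq_of_subset_of_card_le (endpoints_edgesMeeting_inter_subset hS)
    (hcard.trans (hE _ _ (isSplit_edgesMeeting hA hB)))

end EdgesMeeting

/-- Apart from the pair `e`, which may or may not belong to `E`, the set `E` is partitioned into `A`
and `B`, whose common vertices are the two ends of `e` and each of which has a further vertex. -/
structure IsTwoSeparation (E A B : Finset (Sym2 V)) (e : Sym2 V) : Prop where
  union_eq : A ∪ B = E.erase e
  disjoint : Disjoint A B
  inter_endpoints : endpoints A ∩ endpoints B = e.toFinset
  exists_left : ∃ v ∈ endpoints A, v ∉ endpoints B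
  exists_right : ∃ v ∈ endpoints B, v ∉ endpoints A

namespace IsTwoSeparation

lemma symm (h : IsTwoSeparation E A B e) : IsTwoSeparation E B A e :=
  ⟨Finset.union_comm A B ▸ h.union_eq, h.disjoint.symm,
    Finset.inter_comm (endpoints A) _ ▸ h.inter_endpoints, h.exists_right, h.exists_left⟩

lemma left_subset_erase (h : IsTwoSeparation E A B e) : A ⊆ E.erase e :=
  h.union_eq ▸ Finset.subset_union_left

lemma left_subset (h : IsTwoSeparation E A B e) : A ⊆ E :=
  h.left_subset_erase.trans (Finset.erase_subset e E)

lemma notMem_left (h : IsTwoSeparation E A B e) : e ∉ A :=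
  fun he => Finset.notMem_erase e E (h.left_subset_erase he)

lemma mem_or_mem {f : Sym2 V} (h : IsTwoSeparation E A B e) (hf : f ∈ E) (hfe : f ≠ e) :
    f ∈ A ∨ f ∈ B :=
  Finset.mem_union.1 (h.union_eq ▸ Finset.mem_erase.2 ⟨hfe, hf⟩)

lemma toFinset_subset (h : IsTwoSeparation E A B e) : e.toFinset ⊆ endpoints A :=
  h.inter_endpoints ▸ Finset.inter_subset_left

lemma mem_endpoints_left {v : V} (h : IsTwoSeparation E A B e) (hv : v ∈ e) : v ∈ endpoints A :=
  h.toFinset_subset (Sym2.mem_toFinset.2 hv)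

lemma mem_of_mem_endpoints {v : V} (h : IsTwoSeparation E A B e) (hA : v ∈ endpoints A)
    (hB : v ∈ endpoints B) : v ∈ e :=
  Sym2.mem_toFinset.1 (h.inter_endpoints ▸ Finset.mem_inter.2 ⟨hA, hB⟩)

lemma endpoints_union_eq (h : IsTwoSeparation E A B e) :
    endpoints A ∪ endpoints B = endpoints E := by
  rw [← endpoints_union, h.union_eq]
  refine (endpoints_mono (Finset.erase_subset e E)).antisymm ?_
  rw [← h.union_eq, endpoints_union, endpoints]
  refine Finset.biUnion_subset.2 fun f hf => ?_
  by_cases hfe : f = e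
  · exact hfe ▸ h.toFinset_subset.trans Finset.subset_union_left
  rcases h.mem_or_mem hf hfe with hfA | hfB
  · exact (toFinset_subset_endpoints hfA).trans Finset.subset_union_left
  · exact (toFinset_subset_endpoints hfB).trans Finset.subset_union_right

lemma isLeafless_insert (h : IsTwoSeparation E A B e) (hE : IsLeafless E) :
    IsLeafless (insert e A) := by
  intro f hf v hv
  have at_end (hve : v ∈ e) : ∃ f' ∈ insert e A, f' ≠ f ∧ v ∈ f' := by
    by_cases hfe : f = e
    · obtain ⟨f', hf', hvf'⟩ := mem_endpoints.1 (h.mem_endpoints_left hve)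
      exact ⟨f', Finset.mem_insert_of_mem hf', fun h' => h.notMem_left (hfe ▸ h' ▸ hf'), hvf'⟩
    · exact ⟨e, Finset.mem_insert_self e A, Ne.symm hfe, hve⟩
  rcases Finset.mem_insert.1 hf with rfl | hfA
  · exact at_end hv
  obtain ⟨f', hf', hne, hvf'⟩ := hE f (h.left_subset hfA) v hv
  by_cases hfe : f' = e
  · exact at_end (hfe ▸ hvf')
  rcases h.mem_or_mem hf' hfe with hfA' | hfB'
  · exact ⟨f', Finset.mem_insert_of_mem hfA', hne, hvf'⟩
  · exact at_end <| h.mem_of_mem_endpoints (mem_endpoints.2 ⟨f, hfA, hv⟩)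
      (mem_endpoints.2 ⟨f', hfB', hvf'⟩)

lemma two_le_card_left (h : IsTwoSeparation E A B e) (hE : IsLeafless E) : 2 ≤ A.card := by
  obtain ⟨v, hvA, hvB⟩ := h.exists_left
  obtain ⟨f, hf, hvf⟩ := mem_endpoints.1 hvA
  obtain ⟨f', hf', hne, hvf'⟩ := hE f (h.left_subset hf) v hvf
  refine Finset.one_lt_card.2 ⟨f, hf, f', (h.mem_or_mem hf' ?_).resolve_right ?_, hne.symm⟩
  · exact fun hfe => hvB (h.symm.mem_endpoints_left (hfe ▸ hvf'))
  · exact fun hfB => hvB (mem_endpoints.2 ⟨f', hfB, hvf'⟩)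

/- If `e ∉ E`, then a component `Q` of the vertices of `B` outside `A` can stand in for `e`; as `E`
is biconnected, both ends of `e` are adjacent to `Q`. -/
lemma isPlanar_insert (h : IsTwoSeparation E A B e) (hE : ∀ f ∈ E, ¬ f.IsDiag)
    (hbi : IsBiconnected E) (hdiag : ¬ e.IsDiag) (hplanar : IsPlanar (edgeGraph E)) :
    IsPlanar (edgeGraph (insert e A)) := by
  by_cases heE : e ∈ E
  · exact hplanar.mono (edgeGraph_mono (Finset.insert_subset heE h.left_subset))
  obtain ⟨q, hqB, hqA⟩ := h.exists_right
  obtain ⟨Q, hQ, hqQ, hQconn, hQcl⟩ := exists_component (G := edgeGraph E)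
    (T := {v | v ∈ endpoints B ∧ v ∉ endpoints A}) ⟨hqB, hqA⟩
  have mem_right {w v : V} (hw : w ∈ Q) (hwv : s(w, v) ∈ E) : s(w, v) ∈ B :=
    (h.mem_or_mem hwv fun h' => heE (h' ▸ hwv)).resolve_left
      fun hA => (hQ hw).2 (mem_endpoints_of_mem hA)
  have hA : (edgesMeeting E Q).Nonempty := by
    obtain ⟨f, hf, hqf⟩ := mem_endpoints.1 hqB
    exact ⟨f, mem_edgesMeeting.2 ⟨h.symm.left_subset hf, q, hqf, hqQ⟩⟩
  have hB : (edgesInside E Qᶜ).Nonempty := by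
    obtain ⟨v, hvA, -⟩ := h.exists_left
    obtain ⟨f, hf, -⟩ := mem_endpoints.1 hvA
    exact ⟨f, mem_edgesInside.2 ⟨h.left_subset hf,
      fun w hwf hw => (hQ hw).2 (mem_endpoints.2 ⟨f, hf, hwf⟩)⟩⟩
  have boundary_eq := hbi.endpoints_edgesMeeting_inter_eq hA hB
    (Sym2.card_toFinset_of_not_isDiag e hdiag).le fun w hw v hvQ hwv => by
      have hvB : v ∈ endpoints B := mem_endpoints_of_mem (Sym2.eq_swap ▸ mem_right hw hwv)
      refine Sym2.mem_toFinset.2 (h.mem_of_mem_endpoints ?_ hvB)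
      by_contra hvA
      exact hvQ (hQcl w hw v ⟨hvB, hvA⟩ ((edgeGraph_adj hE).2 hwv))
  have touch {z : V} (hz : z ∈ e) : Touch (edgeGraph E) Q {z} := by
    have hz' := Finset.mem_inter.1 (boundary_eq ▸ Sym2.mem_toFinset.2 hz)
    obtain ⟨w, hw, hwz⟩ := exists_adj_of_mem_endpoints_edgesMeeting
      (notMem_of_mem_endpoints_edgesInside_compl hz'.2) hz'.1
    exact ⟨w, hw, z, rfl, (edgeGraph_adj hE).2 hwz⟩
  have hends := endpoints_insert h.toFinset_subset
  induction e with | _ x y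
  refine hplanar.of_isVirtualEdge (x := x) (y := y) (Q := Q)
    ⟨hQconn, touch (Sym2.mem_mk_left x y), touch (Sym2.mem_mk_right x y), fun q hq v hqv => ?_,
      fun u v huv => ?_⟩
  · exact (hQ hq).2 (hends ▸ mem_endpoints_of_mem (Finset.mem_coe.1 ((fromEdgeSet_adj _).1 hqv).1))
  · have := (fromEdgeSet_adj _).1 huv
    rcases Finset.mem_insert.1 (Finset.mem_coe.1 this.1) with h' | h'
    · exact Or.inr (Sym2.eq_iff.1 h')
    · exact Or.inl ((edgeGraph_adj hE).2 (h.left_subset h'))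

end IsTwoSeparation

/- Two cycles through `e` add up to a cycle. -/
lemma IsLeafless.union_of_insert {F₁ F₂ : Finset (Sym2 V)} (h₁ : IsLeafless (insert e F₁))
    (h₂ : IsLeafless (insert e F₂)) (hdisj : Disjoint F₁ F₂) : IsLeafless (F₁ ∪ F₂) := by
  have key {F₁ F₂ : Finset (Sym2 V)} (h₁ : IsLeafless (insert e F₁))
      (h₂ : IsLeafless (insert e F₂)) (hdisj : Disjoint F₁ F₂) :
      ∀ f ∈ F₁, ∀ v ∈ f, ∃ f' ∈ F₁ ∪ F₂, f' ≠ f ∧ v ∈ f' := by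
    intro f hf v hv
    obtain ⟨f', hf', hne, hvf'⟩ := h₁ f (Finset.mem_insert_of_mem hf) v hv
    rcases Finset.mem_insert.1 hf' with rfl | hf'
    · obtain ⟨f'', hf'', hne', hvf''⟩ := h₂ f' (Finset.mem_insert_self _ _) v hvf'
      have hf'' := (Finset.mem_insert.1 hf'').resolve_left hne'
      exact ⟨f'', Finset.mem_union_right _ hf'',
        fun h => Finset.disjoint_left.1 hdisj hf (h ▸ hf''), hvf''⟩
    · exact ⟨f', Finset.mem_union_left _ hf', hne, hvf'⟩
  intro f hf v hv
  rcases Finset.mem_union.1 hf with hf | hf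
  · exact key h₁ h₂ hdisj f hf v hv
  · rw [Finset.union_comm]
    exact key h₂ h₁ hdisj.symm f hf v hv

lemma IsBiconnected.exists_isTwoSeparation {X : Set V} {p z : V} (hE : IsBiconnected E)
    (hp : p ∈ endpoints E) (hpX : p ∈ X) (hz : z ∈ endpoints E) (hzX : z ∉ X)
    (hXz : ∀ w ∈ X, s(w, z) ∉ E) (hxy : ∀ w ∈ X, ∀ v ∉ X, s(w, v) ∈ E → v = x ∨ v = y) :
    x ≠ y ∧ ∃ A B, IsTwoSeparation E A B s(x, y) := by
  obtain ⟨e₀, he₀, hze₀⟩ := mem_endpoints.1 hz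
  have hA : p ∈ endpoints (edgesMeeting E X) := mem_endpoints_edgesMeeting hpX hp
  have hzA : z ∉ endpoints (edgesMeeting E X) := fun h => by
    obtain ⟨w, hw, hwz⟩ := exists_adj_of_mem_endpoints_edgesMeeting hzX h
    exact hXz w hw hwz
  have he₀C : e₀ ∈ edgesInside E Xᶜ := mem_edgesInside.2
    ⟨he₀, fun w hw hwX => hzA (mem_endpoints.2 ⟨e₀, mem_edgesMeeting.2 ⟨he₀, w, hw, hwX⟩, hze₀⟩)⟩
  have hsplit : IsSplit E (edgesMeeting E X) (edgesInside E Xᶜ) :=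
    isSplit_edgesMeeting ((mem_endpoints.1 hA).imp fun _ h => h.1) ⟨e₀, he₀C⟩
  have boundary := hE.endpoints_edgesMeeting_inter_eq hsplit.left_nonempty hsplit.right_nonempty
    (S := {x, y}) Finset.card_le_two (by simpa using hxy)
  set A := edgesMeeting E X
  set C := edgesInside E Xᶜ
  have mem_xy {v : V} (hv : v ∈ s(x, y)) : v ∈ endpoints A ∧ v ∈ endpoints C := by
    rw [← Finset.mem_inter, boundary]
    simpa using hv
  have hCX {v : V} (hv : v ∈ endpoints C) : v ∉ X := notMem_of_mem_endpoints_edgesInside_compl hv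
  have hB : e₀ ∈ C.erase s(x, y) :=
    Finset.mem_erase.2 ⟨fun h => hzA (mem_xy (h ▸ hze₀)).1, he₀C⟩
  have hA_notMem : s(x, y) ∉ A := fun h => by
    obtain ⟨-, v, hv, hvX⟩ := mem_edgesMeeting.1 h
    exact hCX (mem_xy hv).2 hvX
  have hBC : endpoints (C.erase s(x, y)) ⊆ endpoints C := endpoints_mono (Finset.erase_subset _ _)
  have hsplitB : IsSplit E (C.erase s(x, y)) (E \ C.erase s(x, y)) :=
    hsplit.sdiff_of_subset_right (Finset.erase_subset _ _) ⟨e₀, hB⟩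
  have hrest : endpoints (E \ C.erase s(x, y)) ⊆ endpoints A := by
    rw [← endpoints_insert fun v hv => (mem_xy (Sym2.mem_toFinset.1 hv)).1]
    refine endpoints_mono fun f hf => ?_
    have := hsplit.union_eq
    grind
  have two_le := (hE _ _ hsplitB).trans
    (Finset.card_le_card (Finset.inter_subset_inter_left (s := endpoints _) hrest))
  rw [Finset.inter_comm] at two_le
  have boundaryB := Finset.eq_of_subset_of_card_le
    (boundary ▸ Finset.inter_subset_inter_left hBC) (Finset.card_le_two.trans two_le)
  refine ⟨fun h => ?_, A, C.erase s(x, y), ?_, ?_, by rw [boundaryB, Sym2.toFinset_mk_eq],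
    ⟨p, hA, fun h => hCX (hBC h) hpX⟩, z, mem_endpoints.2 ⟨e₀, hB, hze₀⟩, hzA⟩
  · rw [boundaryB, h] at two_le
    simp at two_le
  · rw [← hsplit.union_eq, Finset.erase_union_distrib, Finset.erase_eq_of_notMem hA_notMem]
  · exact hsplit.disjoint.mono_right (Finset.erase_subset _ _)

lemma IsBiconnected.exists_isTwoSeparation_of_not_isThreeConnectedOn (hbi : IsBiconnected E)
    (hE : ∀ e ∈ E, ¬ e.IsDiag) (hcard : (endpoints E).card < E.card)
    (h3 : ¬ IsThreeConnectedOn (edgeGraph E) (endpoints E)) :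
    ∃ x y, x ≠ y ∧ ∃ A B, IsTwoSeparation E A B s(x, y) := by
  by_contra! hno
  refine h3 ⟨fun u v huv => mem_endpoints_of_mem ((edgeGraph_adj hE).1 huv), ?_, ?_⟩
  · rintro X hX ⟨p, hp⟩ ⟨z, hz, hzX, hXz⟩ x y
    by_contra! hxy
    have := hbi.exists_isTwoSeparation (hX hp) hp hz hzX
      (fun w hw hwz => hXz w hw ((edgeGraph_adj hE).2 hwz)) (x := x) (y := y)
      fun w hw v hv hwv => by
        by_contra! hne
        exact hxy v (mem_endpoints_of_mem (Sym2.eq_swap ▸ hwv)) hv hne.1 hne.2 w hw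
          ((edgeGraph_adj hE).2 hwv)
    exact this.2.elim fun A ⟨B, hAB⟩ => hno x y this.1 A B hAB
  · intro v hv x y
    by_contra! hxy
    have four_le : 4 ≤ (endpoints E).card := by
      have hle := card_le_choose_two hE
      generalize (endpoints E).card = n at *
      by_contra! hlt
      interval_cases n <;> simp only [Nat.choose] at hle <;> omega
    obtain ⟨z, hz, hzS⟩ := Finset.exists_mem_notMem_of_card_lt_card
      (Finset.card_le_three.trans_lt four_le : ({v, x, y} : Finset V).card < _)
    simp only [Finset.mem_insert, Finset.mem_singleton, not_or] at hzS
    have nbr (u : V) (hvu : s(v, u) ∈ E) : u = x ∨ u = y := by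
      by_contra! hne
      exact hne.2 (hxy u ((edgeGraph_adj hE).2 hvu) hne.1)
    have := hbi.exists_isTwoSeparation hv (Set.mem_singleton v) hz hzS.1
      (by rintro w rfl hvz; exact (nbr z hvz).elim hzS.2.1 hzS.2.2) (x := x) (y := y)
      (by rintro w rfl u - hwu; exact nbr u hwu)
    exact this.2.elim fun A ⟨B, hAB⟩ => hno x y this.1 A B hAB

lemma IsTwoSeparation.mul_le_sum (h : IsTwoSeparation E A B e) (hE : IsLeafless E)
    (he : ¬ e.IsDiag) (ih : EulerInequalityBelow V g E.card) {a b : ℤ}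
    (hA : IsGirthWeighting (insert e A) (Function.update ℓ e a) g)
    (hB : IsGirthWeighting (insert e B) (Function.update ℓ e b) g) :
    g * (((E.erase e).card : ℤ) - (endpoints E).card + 4) ≤ 2 * (∑ f ∈ E.erase e, ℓ f + a + b) := by
  have card_edges := Finset.card_union_of_disjoint h.disjoint
  have card_ends := Finset.card_union_add_card_inter (endpoints A) (endpoints B)
  rw [h.union_eq] at card_edges
  rw [h.endpoints_union_eq, h.inter_endpoints, Sym2.card_toFinset_of_not_isDiag e he] at card_ends
  have card_le := Finset.card_le_card (Finset.erase_subset e E)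
  have side {A B : Finset (Sym2 V)} {a : ℤ} (h : IsTwoSeparation E A B e)
      (hA : IsGirthWeighting (insert e A) (Function.update ℓ e a) g) (hlt : A.card + 1 < E.card) :
      g * ((A.card : ℤ) - (endpoints A).card + 3) ≤ 2 * (∑ f ∈ A, ℓ f + a) := by
    have euler := ih _ _ (by rwa [Finset.card_insert_of_notMem h.notMem_left]) hA
      (Finset.insert_nonempty e A) (h.isLeafless_insert hE).card_endpoints_le
    rw [EulerInequality, endpoints_insert h.toFinset_subset,
      Finset.card_insert_of_notMem h.notMem_left, Finset.sum_insert h.notMem_left,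
      Function.update_self, Finset.sum_update_of_notMem h.notMem_left] at euler
    push_cast at euler
    linarith
  have two_le_A := h.two_le_card_left hE
  have two_le_B := h.symm.two_le_card_left hE
  have eulerA := side h hA (by omega)
  have eulerB := side h.symm hB (by omega)
  have hexcess : ((E.erase e).card : ℤ) - (endpoints E).card + 4 =
    (A.card - (endpoints A).card + 3) + (B.card - (endpoints B).card + 3) := by omega
  rw [hexcess, ← h.union_eq, Finset.sum_union h.disjoint]
  linarith

lemma IsGirthWeighting.insert_update (h : IsGirthWeighting E ℓ g) (hA : A ⊆ E) (he : ¬ e.IsDiag)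
    (hplanar : IsPlanar (edgeGraph (insert e A))) {a : ℤ} (ha : 0 ≤ a)
    (hle : ∀ J ⊆ A, e ∉ J → IsLeafless (insert e J) → g ≤ a + ∑ f ∈ J, ℓ f) :
    IsGirthWeighting (insert e A) (Function.update ℓ e a) g where
  not_isDiag f hf := by
    rcases Finset.mem_insert.1 hf with rfl | hf
    exacts [he, h.not_isDiag f (hA hf)]
  isPlanar := hplanar
  girth_nonneg := h.girth_nonneg
  nonneg f := by
    rw [Function.update_apply]
    split_ifs
    exacts [ha, h.nonneg f]
  le_sum F hF hne hleaf := by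
    by_cases heF : e ∈ F
    · rw [← Finset.insert_erase heF] at hleaf
      rw [Finset.sum_update_of_mem heF, Finset.sdiff_singleton_eq_erase]
      exact hle _ (Finset.subset_insert_iff.1 hF) (Finset.notMem_erase e F) hleaf
    · rw [Finset.sum_update_of_notMem heF]
      exact h.le_sum F (((Finset.subset_insert_iff_of_notMem heF).1 hF).trans hA) hne hleaf

/- `b` is the weight of a lightest path through `A` joining the ends of `e`, cut off at `g`. -/
lemma IsTwoSeparation.exists_weights (h : IsTwoSeparation E A B e) (hE : IsLeafless E)
    (hw : IsGirthWeighting E ℓ g) : ∃ a b, a + b = g ∧ 0 ≤ a ∧ 0 ≤ b ∧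
      (∀ J ⊆ A, IsLeafless (insert e J) → g ≤ a + ∑ f ∈ J, ℓ f) ∧
      ∀ J ⊆ B, IsLeafless (insert e J) → g ≤ b + ∑ f ∈ J, ℓ f := by
  classical
  obtain ⟨J₀, hJ₀, hmin⟩ := (A.powerset.filter fun J => IsLeafless (insert e J)).exists_min_image
    (fun J => ∑ f ∈ J, ℓ f)
    ⟨A, Finset.mem_filter.2 ⟨Finset.mem_powerset_self A, h.isLeafless_insert hE⟩⟩
  simp only [Finset.mem_filter, Finset.mem_powerset] at hJ₀ hmin
  have hg := hw.girth_nonneg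
  have hJ₀_nonneg : 0 ≤ ∑ f ∈ J₀, ℓ f := Finset.sum_nonneg fun f _ => hw.nonneg f
  refine ⟨g - min g (∑ f ∈ J₀, ℓ f), min g (∑ f ∈ J₀, ℓ f), by ring, by omega, by omega,
    fun J hJ hleaf => ?_, fun J hJ hleaf => ?_⟩
  · have := hmin J ⟨hJ, hleaf⟩
    omega
  have hdisj := h.disjoint.mono hJ₀.1 hJ
  have hne : (J₀ ∪ J).Nonempty := by
    rw [Finset.nonempty_iff_ne_empty, Ne, Finset.union_eq_empty]
    rintro ⟨rfl, -⟩
    induction e with | _ u v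
    obtain ⟨f, hf, hne, -⟩ :=
      hJ₀.2 s(u, v) (Finset.mem_insert_self _ _) u (Sym2.mem_mk_left u v)
    exact hne (Finset.mem_singleton.1 hf)
  have hcycle := hw.le_sum (J₀ ∪ J)
    (Finset.union_subset (hJ₀.1.trans h.left_subset) (hJ.trans h.symm.left_subset)) hne
    (hJ₀.2.union_of_insert hleaf hdisj)
  rw [Finset.sum_union hdisj] at hcycle
  have := Finset.sum_nonneg (s := J) fun f _ => hw.nonneg f
  omega

namespace IsGirthWeighting

lemma eulerInequality_of_isTwoSeparation (h : IsGirthWeighting E ℓ g)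
    (ih : EulerInequalityBelow V g E.card) (hleaf : IsLeafless E) (hbi : IsBiconnected E)
    (hlight : ∀ f ∈ E, 2 * ℓ f ≤ g) (he : ¬ e.IsDiag) (hs : IsTwoSeparation E A B e) :
    EulerInequality E ℓ g := by
  unfold EulerInequality
  by_cases heE : e ∈ E
  · have hle := hs.mul_le_sum hleaf he ih (ℓ := ℓ) (a := ℓ e) (b := ℓ e)
      (by simpa using h.subset (Finset.insert_subset heE hs.left_subset))
      (by simpa using h.subset (Finset.insert_subset heE hs.symm.left_subset))
    have hcard : ((E.erase e).card : ℤ) = E.card - 1 := by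
      have := Finset.card_erase_add_one heE
      omega
    rw [hcard] at hle
    rw [← Finset.add_sum_erase E ℓ heE]
    linarith [hlight e heE]
  · obtain ⟨a, b, hab, ha, hb, hA, hB⟩ := hs.exists_weights hleaf h
    have hle := hs.mul_le_sum hleaf he ih
      (h.insert_update hs.left_subset he (hs.isPlanar_insert h.not_isDiag hbi he h.isPlanar) ha
        fun J hJ _ => hA J hJ)
      (h.insert_update hs.symm.left_subset he
        (hs.symm.isPlanar_insert h.not_isDiag hbi he h.isPlanar) hb fun J hJ _ => hB J hJ)
    rw [Finset.erase_eq_of_notMem heE] at hle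
    linarith

lemma eulerInequality_of_below [Finite V] (h : IsGirthWeighting E ℓ g)
    (ih : EulerInequalityBelow V g E.card) (hne : E.Nonempty)
    (hcard : (endpoints E).card ≤ E.card) : EulerInequality E ℓ g := by
  by_cases hleaf : IsLeafless E
  swap
  · exact h.eulerInequality_of_not_isLeafless ih hcard hleaf
  rcases hcard.eq_or_lt with heq | hlt
  · have := h.le_sum E subset_rfl hne hleaf
    rw [EulerInequality, heq]
    linarith
  by_cases hheavy : ∃ e ∈ E, g ≤ 2 * ℓ e
  · obtain ⟨e, he, hle⟩ := hheavy
    exact h.eulerInequality_of_le_two_mul ih hlt he hle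
  push Not at hheavy
  by_cases hbi : IsBiconnected E
  swap
  · unfold IsBiconnected at hbi
    push Not at hbi
    obtain ⟨A, B, hs, hinter⟩ := hbi
    exact hs.eulerInequality_of_card_inter_le_one h ih hcard (by omega)
  by_cases h3 : IsThreeConnectedOn (edgeGraph E) (endpoints E)
  · exact h.eulerInequality_of_isThreeConnectedOn hne hcard h3
  obtain ⟨x, y, hxy, A, B, hs⟩ :=
    hbi.exists_isTwoSeparation_of_not_isThreeConnectedOn h.not_isDiag hlt h3
  exact h.eulerInequality_of_isTwoSeparation ih hleaf hbi (fun f hf => (hheavy f hf).le)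
    (Sym2.mk_isDiag_iff.not.2 hxy) hs

end IsGirthWeighting

theorem IsGirthWeighting.eulerInequality [Finite V] (h : IsGirthWeighting E ℓ g)
    (hne : E.Nonempty) (hcard : (endpoints E).card ≤ E.card) : EulerInequality E ℓ g := by
  have below (n : ℕ) : EulerInequalityBelow V g n := by
    induction n with
    | zero => exact fun _ _ hlt => absurd hlt (Nat.not_lt_zero _)
    | succ n ih =>
      intro E ℓ hlt h hne hcard
      refine h.eulerInequality_of_below (fun E' ℓ' hlt' => ih E' ℓ' (by omega)) hne hcard
  exact below _ E ℓ E.card.lt_succ_self h hne hcard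

end Euler

/-! ### Threads -/

section Threads

variable {V : Type*} {H : SimpleGraph V}

/-- `H` has no vertex of degree one; isolated vertices are allowed. -/
def HasNoLeaf (H : SimpleGraph V) : Prop :=
  ∀ ⦃u v⦄, H.Adj u v → ∃ w, H.Adj v w ∧ w ≠ u

/-- The first `l + 2` terms of `v` form a non-backtracking walk in `H` whose inner vertices have
degree two in `H`. -/
structure IsThread (H : SimpleGraph V) (l : ℕ) (v : ℕ → V) : Prop where
  adj : ∀ i ≤ l, H.Adj (v i) (v (i + 1))
  ne : ∀ i < l, v (i + 2) ≠ v i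
  eq_or_eq : ∀ i < l, ∀ w, H.Adj (v (i + 1)) w → w = v i ∨ w = v (i + 2)

lemma HasNoLeaf.not_isAcyclic [Finite V] (hH : HasNoLeaf H) {a b : V} (hab : H.Adj a b) :
    ¬ H.IsAcyclic := by
  intro hacyclic
  have := Fintype.ofFinite V
  have exists_path (n : ℕ) : ∃ (u v : V) (p : H.Walk u v), p.IsPath ∧ p.length = n + 1 := by
    induction n with
    | zero => exact ⟨a, b, hab.toWalk, by simp [hab.ne], by simp⟩
    | succ n ih =>
      obtain ⟨u, v, p, hp, hlength⟩ := ih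
      have hnil : ¬ p.Nil := fun h => by
        have := Walk.length_eq_zero_iff.2 h
        omega
      obtain ⟨w, hvw, hne⟩ := hH (p.adj_penultimate hnil)
      have hw : w ∉ p.support := fun h => hne (hacyclic.eq_penultimate_of_adj_end hp hvw h)
      exact ⟨u, w, p.concat hvw, hp.concat hw hvw, by simp [hlength]⟩
  obtain ⟨u, v, p, hp, hlength⟩ := exists_path (Fintype.card V)
  have := hp.length_lt
  omega

lemma IsLeafless.hasNoLeaf {F : Finset (Sym2 V)} (hF : ∀ e ∈ F, ¬ e.IsDiag) (h : IsLeafless F) :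
    HasNoLeaf (edgeGraph F) := by
  intro u v huv
  obtain ⟨e, he, hne, hv⟩ := h _ ((edgeGraph_adj hF).1 huv) v (Sym2.mem_mk_right u v)
  obtain ⟨w, rfl⟩ := Sym2.mem_iff_exists.1 hv
  exact ⟨w, (edgeGraph_adj hF).2 he, fun hwu => hne (hwu ▸ Sym2.eq_swap)⟩

lemma IsLeafless.egirth_le_card [Finite V] {F : Finset (Sym2 V)} (h : IsLeafless F)
    (hF : (F : Set (Sym2 V)) ⊆ H.edgeSet) (hne : F.Nonempty) : H.egirth ≤ F.card := by
  classical
  have hdiag : ∀ e ∈ F, ¬ e.IsDiag := fun e he => H.not_isDiag_of_mem_edgeSet (hF he)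
  obtain ⟨⟨a, b⟩, hab⟩ := hne
  have hcyclic := (h.hasNoLeaf hdiag).not_isAcyclic ((edgeGraph_adj hdiag).2 hab)
  obtain ⟨u, p, hp, hlength⟩ := exists_egirth_eq_length.2 hcyclic
  have hle : edgeGraph F ≤ H := fun _ _ huv => hF ((edgeGraph_adj hdiag).1 huv)
  refine (egirth_anti hle).trans (hlength.trans_le ?_)
  have hedges : p.edges.toFinset ⊆ F := fun e he => by
    induction e with | _ u v
    exact (edgeGraph_adj hdiag).1 (p.edges_subset_edgeSet (List.mem_toFinset.1 he))
  rw [← p.length_edges, ← List.toFinset_card_of_nodup hp.edges_nodup]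
  exact_mod_cast Finset.card_le_card hedges

/-- `next` chooses for each dart one that continues it without backtracking. -/
def IsContinuation (next : H.Dart → H.Dart) : Prop :=
  ∀ e, (next e).fst = e.snd ∧ (next e).snd ≠ e.fst

lemma HasNoLeaf.exists_isContinuation (hH : HasNoLeaf H) :
    ∃ next : H.Dart → H.Dart, IsContinuation next := by
  choose w hw hne using fun e : H.Dart => hH e.adj
  exact ⟨fun e => ⟨(e.snd, w e), hw e⟩, fun e => ⟨rfl, hne e⟩⟩

section Counting

variable [Fintype V] [DecidableRel H.Adj]

lemma HasNoLeaf.two_le_degree (hH : HasNoLeaf H) {u v : V} (huv : H.Adj u v) :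
    2 ≤ H.degree u := by
  obtain ⟨w, huw, hne⟩ := hH huv.symm
  rw [← card_neighborFinset_eq_degree]
  exact Finset.one_lt_card.2 ⟨v, by simpa, w, by simpa, hne.symm⟩

lemma eq_or_eq_of_degree_eq_two {a b c w : V} (ha : H.degree a = 2) (hb : H.Adj a b)
    (hc : H.Adj a c) (hbc : b ≠ c) (hw : H.Adj a w) : w = b ∨ w = c := by
  by_contra! hne
  have := Finset.two_lt_card.2 ⟨w, (mem_neighborFinset H a w).2 hw, b, by simpa, c, by simpa,
    hne.1, hne.2, hbc⟩
  rw [card_neighborFinset_eq_degree] at this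
  omega

variable (H) in
/-- The darts of `H` that end in a vertex of degree other than two. -/
def branchDarts : Finset H.Dart :=
  {e | H.degree e.snd ≠ 2}

lemma card_branchDarts :
    (branchDarts H).card = ∑ v, if H.degree v ≠ 2 then H.degree v else 0 := by
  classical
  rw [branchDarts, Finset.card_eq_sum_card_fiberwise (f := fun e => e.snd) (t := Finset.univ)
    fun _ _ => Finset.mem_coe.2 (Finset.mem_univ _)]
  refine Finset.sum_congr rfl fun v _ => ?_
  by_cases hv : H.degree v ≠ 2
  · rw [if_pos hv, ← H.dart_fst_fiber_card_eq_degree v]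
    refine Finset.card_nbij' Dart.symm Dart.symm ?_ ?_ (fun e _ => e.symm_symm)
      fun e _ => e.symm_symm
    · exact fun e he => Finset.mem_filter_univ _ |>.2 (Finset.mem_filter.1 he).2
    · intro e he
      have he : e.fst = v := by simpa using he
      exact Finset.mem_filter.2
        ⟨(Finset.mem_filter_univ _).2 (show H.degree e.fst ≠ 2 from he ▸ hv), he⟩
  · rw [if_neg hv, Finset.card_eq_zero, Finset.filter_eq_empty_iff]
    rintro e he rfl
    exact hv (Finset.mem_filter.1 he).2

lemma HasNoLeaf.card_branchDarts_add_le [DecidableEq V] (hH : HasNoLeaf H) :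
    (branchDarts H).card + 6 * (endpoints H.edgeFinset).card ≤ 6 * H.edgeFinset.card := by
  have endpoints_eq : endpoints H.edgeFinset = Finset.univ.filter fun v => H.degree v ≠ 0 := by
    ext v
    rw [mem_endpoints, Finset.mem_filter_univ, ← Nat.pos_iff_ne_zero, degree_pos_iff_exists_adj]
    refine ⟨fun ⟨e, he, hv⟩ => ?_, fun ⟨w, hw⟩ => ⟨s(v, w), by simpa, Sym2.mem_mk_left v w⟩⟩
    obtain ⟨w, rfl⟩ := Sym2.mem_iff_exists.1 hv
    exact ⟨w, by simpa using he⟩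
  have handshake : 6 * H.edgeFinset.card = ∑ v, 3 * H.degree v := by
    rw [← Finset.mul_sum, sum_degrees_eq_twice_card_edges]
    ring
  rw [handshake, card_branchDarts, endpoints_eq, Finset.card_filter, Finset.mul_sum,
    ← Finset.sum_add_distrib]
  refine Finset.sum_le_sum fun v _ => ?_
  rcases (H.degree v).eq_zero_or_pos with h0 | hpos
  · simp [h0]
  · obtain ⟨w, hw⟩ := (H.degree_pos_iff_exists_adj v).1 hpos
    have := hH.two_le_degree hw
    split_ifs <;> omega

namespace IsContinuation

variable {next : H.Dart → H.Dart}

lemma injOn (hnext : IsContinuation next) : Set.InjOn next {e | H.degree e.snd = 2} := by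
  intro e he f _ hef
  have hsnd : e.snd = f.snd := by rw [← (hnext e).1, hef, (hnext f).1]
  have hadj : H.Adj e.snd (next e).snd := (hnext e).1 ▸ (next e).adj
  have hf : H.Adj e.snd f.fst := hsnd ▸ f.adj.symm
  rcases eq_or_eq_of_degree_eq_two he e.adj.symm hadj (hnext e).2.symm hf with h | h
  · exact Dart.ext _ _ (Prod.ext h.symm hsnd)
  · exact absurd (hef ▸ h.symm) (hnext f).2

/-- The darts for which the first one of degree other than two among the ends of the iterates under
`next` is the end of the `j`-th. -/
def branchAt (next : H.Dart → H.Dart) (j : ℕ) : Finset H.Dart :=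
  {e | (∀ i < j, H.degree (next^[i] e).snd = 2) ∧ H.degree (next^[j] e).snd ≠ 2}

lemma card_branchAt_le (hnext : IsContinuation next) (j : ℕ) :
    (branchAt next j).card ≤ (branchDarts H).card := by
  induction j with
  | zero =>
    exact Finset.card_le_card fun e he =>
      (Finset.mem_filter_univ _).2 ((Finset.mem_filter_univ _).1 he).2
  | succ j ih =>
    refine le_trans (Finset.card_le_card_of_injOn next ?_ (hnext.injOn.mono ?_)) ih
    · intro e he
      have he := (Finset.mem_filter.1 he).2
      exact Finset.mem_coe.2 (Finset.mem_filter.2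
        ⟨Finset.mem_univ _, fun i hi => he.1 (i + 1) (by omega), he.2⟩)
    · exact fun e he => (Finset.mem_filter.1 he).2.1 0 j.succ_pos

lemma isThread (hnext : IsContinuation next) {l : ℕ} {e : H.Dart}
    (he : ∀ j < l, H.degree (next^[j] e).snd = 2) :
    IsThread H l fun i => (next^[i] e).fst := by
  have fst_succ (i : ℕ) : (next^[i + 1] e).fst = (next^[i] e).snd := by
    rw [Function.iterate_succ_apply']
    exact (hnext _).1
  have snd_succ_ne (i : ℕ) : (next^[i + 1] e).snd ≠ (next^[i] e).fst := by
    rw [Function.iterate_succ_apply']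
    exact (hnext _).2
  refine ⟨fun i _ => ?_, fun i _ => ?_, fun i hi w hw => ?_⟩
  · rw [fst_succ]
    exact (next^[i] e).adj
  · rw [fst_succ]
    exact snd_succ_ne i
  · beta_reduce at hw ⊢
    rw [fst_succ] at hw
    rw [fst_succ (i + 1)]
    exact eq_or_eq_of_degree_eq_two (he i hi) (next^[i] e).adj.symm
      (fst_succ i ▸ (next^[i + 1] e).adj) (snd_succ_ne i).symm hw

lemma card_dart_le (hnext : IsContinuation next) {l : ℕ} (hl : ∀ v, ¬ IsThread H l v) :
    Fintype.card H.Dart ≤ l * (branchDarts H).card := by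
  classical
  have cover : (Finset.univ : Finset H.Dart) ⊆ (Finset.range l).biUnion (branchAt next) := by
    intro e _
    have hex : ∃ j, j < l ∧ H.degree (next^[j] e).snd ≠ 2 := by
      by_contra! h
      exact hl _ (hnext.isThread h)
    obtain ⟨hlt, hdeg⟩ := Nat.find_spec hex
    refine Finset.mem_biUnion.2 ⟨Nat.find hex, Finset.mem_range.2 hlt, Finset.mem_filter.2
      ⟨Finset.mem_univ _, fun i hi => ?_, hdeg⟩⟩
    by_contra h
    exact Nat.find_min hex hi ⟨hi.trans hlt, h⟩
  calc Fintype.card H.Dart ≤ ((Finset.range l).biUnion (branchAt next)).card :=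
        Finset.card_le_card cover
    _ ≤ (Finset.range l).card * (branchDarts H).card :=
        Finset.card_biUnion_le_card_mul _ _ _ fun j _ => hnext.card_branchAt_le j
    _ = l * (branchDarts H).card := by rw [Finset.card_range]

end IsContinuation

end Counting

/- Otherwise each dart is followed within `l` steps by a dart ending in a vertex of degree other
than two, so that `2 m ≤ l b` for the number `b ≤ 6 (m - n)` of such darts. As `6 l ≤ g`, this
contradicts Euler's inequality `g (m - n + 2) ≤ 2 m`. -/
theorem HasNoLeaf.exists_isThread [Finite V] (hH : HasNoLeaf H) (hplanar : IsPlanar H) {g l : ℕ}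
    (hg : (g : ℕ∞) ≤ H.egirth) (hg0 : 0 < g) (hl : 6 * l ≤ g) {a b : V} (hab : H.Adj a b) :
    ∃ v, IsThread H l v := by
  classical
  have := Fintype.ofFinite V
  by_contra! hno
  obtain ⟨next, hnext⟩ := hH.exists_isContinuation
  have few_darts := hnext.card_dart_le hno
  rw [dart_card_eq_twice_card_edges] at few_darts
  have few_branches := hH.card_branchDarts_add_le
  have hne : H.edgeFinset.Nonempty := ⟨s(a, b), by simpa⟩
  have weighting : IsGirthWeighting H.edgeFinset (fun _ => 1) g := by
    refine ⟨fun e he => H.not_isDiag_of_mem_edgeSet (by simpa using he),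
      by simpa [edgeGraph] using hplanar,
      by positivity, fun _ => zero_le_one, fun F hF hFne hleaf => ?_⟩
    have := hg.trans (hleaf.egirth_le_card (by simpa using Finset.coe_subset.2 hF) hFne)
    simpa using this
  have euler := weighting.eulerInequality hne (by omega)
  simp only [EulerInequality, Finset.sum_const, nsmul_eq_mul, mul_one] at euler
  generalize H.edgeFinset.card = m at *
  generalize (endpoints H.edgeFinset).card = n at *
  zify at *
  nlinarith [mul_le_mul_of_nonneg_right hl (show (0 : ℤ) ≤ m - n by linarith),
    mul_le_mul_of_nonneg_left few_branches (Nat.cast_nonneg' l (α := ℤ))]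

end Threads

/-! ### Distances and balls -/

section Distance

variable {V : Type*} {G : SimpleGraph V} {m n : ℕ} {u v w : V}

/-- The vertices `u` and `v` are at distance at most `m`. -/
def IsWithin (G : SimpleGraph V) (m : ℕ) (u v : V) : Prop := G.edist u v ≤ m

namespace IsWithin

theorem refl (m : ℕ) (u : V) : IsWithin G m u u := by
  simp [IsWithin]

theorem mono (h : IsWithin G m u v) (hmn : m ≤ n) : IsWithin G n u v :=
  h.trans (Nat.cast_le.2 hmn)

theorem symm (h : IsWithin G m u v) : IsWithin G m v u :=
  edist_comm.trans_le h

theorem trans (h : IsWithin G m u v) (h' : IsWithin G n v w) : IsWithin G (m + n) u w :=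
  SimpleGraph.edist_triangle.trans ((add_le_add h h').trans_eq (Nat.cast_add m n).symm)

theorem cons (huv : G.Adj u v) (h : IsWithin G m v w) : IsWithin G (m + 1) u w :=
  (trans (m := 1) (edist_eq_one_iff_adj.2 huv).le h).mono (Nat.add_comm 1 m).le

theorem eq (h : IsWithin G 0 u v) : u = v :=
  edist_eq_zero_iff.1 (nonpos_iff_eq_zero.1 h)

theorem eq_or_exists_adj (h : IsWithin G (m + 1) u v) :
    u = v ∨ ∃ w, G.Adj u w ∧ IsWithin G m w v := by
  obtain ⟨p, hp⟩ := exists_walk_of_edist_ne_top (ne_top_of_le_ne_top (ENat.natCast_ne_top _) h)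
  have hlen : p.length ≤ m + 1 := by
    rw [IsWithin, ← hp] at h
    exact_mod_cast h
  cases p with
  | nil => exact Or.inl rfl
  | cons huw q =>
    rw [Walk.length_cons] at hlen
    exact Or.inr ⟨_, huw, (edist_le q).trans (Nat.cast_le.2 (by omega))⟩

/- `f k s` is a lower bound for the distance to the exit `k` from a vertex in state `s`: it
decreases by at most one along an edge. -/
theorem exists_exit {σ κ : Type*} {R : σ → V → Prop} {exit : κ → V} {f : κ → σ → ℕ}
    (hstep : ∀ ⦃s w y⦄, R s w → G.Adj w y →
      (∃ s', R s' y ∧ ∀ k, f k s ≤ f k s' + 1) ∨ ∃ k, exit k = y ∧ f k s ≤ 1)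
    {s : σ} {w y : V} (hw : R s w) (h : IsWithin G n w y) :
    (∃ s', R s' y) ∨ ∃ k q, f k s + q ≤ n ∧ IsWithin G q (exit k) y := by
  induction n generalizing s w with
  | zero => exact Or.inl ⟨s, h.eq ▸ hw⟩
  | succ n ih =>
    obtain rfl | ⟨c, hwc, hc⟩ := h.eq_or_exists_adj
    · exact Or.inl ⟨s, hw⟩
    obtain ⟨s', hs', hf⟩ | ⟨k, rfl, hk⟩ := hstep hw hwc
    · obtain hy | ⟨k, q, hq, hky⟩ := ih hs' hc
      · exact Or.inl hy
      · exact Or.inr ⟨k, q, by have := hf k; omega, hky⟩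
    · exact Or.inr ⟨k, n, by omega, hc⟩

end IsWithin

end Distance

section Balls

open scoped Finset

variable {V : Type*} [Fintype V] {G : SimpleGraph V} [DecidableRel G.Adj]
  {m n r : ℕ} {a b y : V}

section ForwardBall

variable [DecidableEq V]

/-- The vertices reached from `a` by a non-backtracking walk of length at most `m` whose first
step does not go to `b`. -/
def forwardBall (G : SimpleGraph V) [DecidableRel G.Adj] : ℕ → V → V → Finset V
  | 0, a, _ => {a}
  | m + 1, a, b => insert a (((G.neighborFinset a).erase b).biUnion fun c => forwardBall G m c a)

theorem mem_forwardBall_succ :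
    y ∈ forwardBall G (m + 1) a b ↔
      y = a ∨ ∃ c, G.Adj a c ∧ c ≠ b ∧ y ∈ forwardBall G m c a := by
  simp only [forwardBall, Finset.mem_insert, Finset.mem_biUnion, Finset.mem_erase,
    mem_neighborFinset]
  grind

theorem self_mem_forwardBall (m : ℕ) (a b : V) : a ∈ forwardBall G m a b := by
  cases m <;> simp [forwardBall]

theorem forwardBall_mono (h : m ≤ n) (a b : V) : forwardBall G m a b ⊆ forwardBall G n a b := by
  intro y hy
  induction m generalizing n a b with
  | zero =>
    obtain rfl := Finset.mem_singleton.1 hy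
    exact self_mem_forwardBall n y b
  | succ m ih =>
    obtain ⟨n, rfl⟩ := Nat.exists_eq_add_of_le' (Nat.one_le_of_lt h)
    rw [mem_forwardBall_succ] at hy ⊢
    exact hy.imp_right fun ⟨c, hac, hcb, hyc⟩ => ⟨c, hac, hcb, ih (by omega) c a hyc⟩

theorem card_forwardBall_le (hdeg : ∀ v, G.degree v ≤ r + 1) (hab : G.Adj a b) (m : ℕ) :
    #(forwardBall G m a b) ≤ ∑ i ∈ Finset.range (m + 1), r ^ i := by
  induction m generalizing a b with
  | zero => simp [forwardBall]
  | succ m ih =>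
    have hcard : #((G.neighborFinset a).erase b) ≤ r := by
      rw [Finset.card_erase_of_mem ((G.mem_neighborFinset a b).2 hab),
        card_neighborFinset_eq_degree]
      exact Nat.sub_le_of_le_add (hdeg a)
    have hih : ∀ c ∈ (G.neighborFinset a).erase b,
        #(forwardBall G m c a) ≤ ∑ i ∈ Finset.range (m + 1), r ^ i := fun c hc =>
      ih ((G.mem_neighborFinset a c).1 (Finset.mem_of_mem_erase hc)).symm
    calc #(forwardBall G (m + 1) a b)
      _ ≤ #((G.neighborFinset a).erase b) * ∑ i ∈ Finset.range (m + 1), r ^ i + 1 :=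
        (Finset.card_insert_le _ _).trans
          (Nat.succ_le_succ (Finset.card_biUnion_le_card_mul _ _ _ hih))
      _ ≤ r * ∑ i ∈ Finset.range (m + 1), r ^ i + 1 := by gcongr
      _ = ∑ i ∈ Finset.range (m + 2), r ^ i := (geom_sum_succ).symm

theorem IsWithin.mem_forwardBall_or (h : IsWithin G m a y) (b : V) :
    y ∈ forwardBall G m a b ∨ ∃ k < m, IsWithin G k b y := by
  induction m using Nat.strong_induction_on generalizing a b with
  | _ m ih =>
  cases m with
  | zero => exact Or.inl (h.eq ▸ self_mem_forwardBall 0 a b)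
  | succ m =>
    obtain rfl | ⟨c, hac, hc⟩ := h.eq_or_exists_adj
    · exact Or.inl (self_mem_forwardBall (m + 1) a b)
    by_cases hcb : c = b
    · exact Or.inr ⟨m, m.lt_succ_self, hcb ▸ hc⟩
    obtain hy | ⟨k, hk, hka⟩ := ih m m.lt_succ_self hc a
    · exact Or.inl (mem_forwardBall_succ.2 (Or.inr ⟨c, hac, hcb, hy⟩))
    obtain hy | ⟨k', hk', hkb⟩ := ih k (by omega) hka b
    · exact Or.inl (forwardBall_mono (by omega) a b hy)
    · exact Or.inr ⟨k', by omega, hkb⟩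

theorem IsWithin.eq_or_mem_forwardBall (h : IsWithin G (m + 1) a y) :
    y = a ∨ ∃ c, G.Adj a c ∧ y ∈ forwardBall G m c a := by
  induction m using Nat.strong_induction_on with
  | _ m ih =>
  obtain rfl | ⟨c, hac, hc⟩ := h.eq_or_exists_adj
  · exact Or.inl rfl
  obtain hy | ⟨k, hk, hka⟩ := hc.mem_forwardBall_or a
  · exact Or.inr ⟨c, hac, hy⟩
  cases k with
  | zero => exact Or.inl hka.eq.symm
  | succ k =>
    refine (ih k (by omega) hka).imp_right fun ⟨c', hac', hy⟩ => ⟨c', hac', ?_⟩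
    exact forwardBall_mono (by omega) c' a hy

end ForwardBall

/-- The number of vertices of a ball of radius `k` in the `(r + 1)`-regular tree. -/
def treeBallCard (r k : ℕ) : ℕ := 1 + (r + 1) * ∑ i ∈ Finset.range k, r ^ i

open Classical in
theorem card_isWithin_le (hdeg : ∀ v, G.degree v ≤ r + 1) (m : ℕ) (a : V) :
    #{y | IsWithin G (m + 1) a y} ≤ treeBallCard r (m + 1) := by
  have hsub : ({y | IsWithin G (m + 1) a y} : Finset V) ⊆
      insert a ((G.neighborFinset a).biUnion fun c => forwardBall G m c a) := by
    intro y hy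
    simpa using (Finset.mem_filter.1 hy).2.eq_or_mem_forwardBall
  calc #{y | IsWithin G (m + 1) a y}
    _ ≤ #((G.neighborFinset a).biUnion fun c => forwardBall G m c a) + 1 :=
      (Finset.card_le_card hsub).trans (Finset.card_insert_le _ _)
    _ ≤ #(G.neighborFinset a) * ∑ i ∈ Finset.range (m + 1), r ^ i + 1 :=
      Nat.succ_le_succ (Finset.card_biUnion_le_card_mul _ _ _ fun c hc =>
        card_forwardBall_le hdeg ((G.mem_neighborFinset a c).1 hc).symm m)
    _ ≤ treeBallCard r (m + 1) := by
      rw [treeBallCard, Nat.add_comm, card_neighborFinset_eq_degree]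
      gcongr
      exact hdeg a

end Balls

/-! ### Greedy colouring -/

section Greedy

open scoped Finset

variable {V : Type*}

/-- The subgraph of the edges of `G` with both ends in `s`, with all vertices kept. -/
abbrev spanningInduce (G : SimpleGraph V) (s : Set V) : SimpleGraph V := (G.induce s).spanningCoe

theorem spanningInduce_adj {G : SimpleGraph V} {s : Set V} {u v : V} :
    (spanningInduce G s).Adj u v ↔ u ∈ s ∧ v ∈ s ∧ G.Adj u v := by
  simp [spanningInduce, and_left_comm]

theorem spanningInduce_le (G : SimpleGraph V) (s : Set V) : spanningInduce G s ≤ G :=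
  G.spanningCoe_induce_le s

open Classical in
theorem colorable_of_card_lt [Fintype V] {C : SimpleGraph V} {n : ℕ} (X : Finset V) (ρ : V → ℕ)
    (c₀ : V → Fin n) (hc₀ : ∀ u ∉ X, ∀ v ∉ X, C.Adj u v → c₀ u ≠ c₀ v)
    (hX : ∀ x ∈ X, #{y | C.Adj x y ∧ (y ∈ X → ρ y ≤ ρ x)} < n) : C.Colorable n := by
  have extend : ∀ U ⊆ X, ∃ c : V → Fin n,
      ∀ u ∉ X \ U, ∀ v ∉ X \ U, C.Adj u v → c u ≠ c v := by
    intro U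
    induction U using Finset.induction_on_max_value ρ with
    | empty => exact fun _ => ⟨c₀, by simpa using hc₀⟩
    | insert x U _ hmax ih =>
      intro hU
      have hxX : x ∈ X := hU (Finset.mem_insert_self x U)
      obtain ⟨c, hc⟩ := ih ((Finset.subset_insert x U).trans hU)
      have hlt : #(({y | C.Adj x y ∧ (y ∈ X → ρ y ≤ ρ x)} : Finset V).image c) <
          #(Finset.univ : Finset (Fin n)) := by
        simpa using Finset.card_image_le.trans_lt (hX x hxX)
      obtain ⟨q, -, hq⟩ := Finset.exists_mem_notMem_of_card_lt_card hlt
      have hfree : ∀ y ∉ X \ insert x U, C.Adj x y → c y ≠ q := by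
        rintro y hy hxy rfl
        refine hq (Finset.mem_image_of_mem c (Finset.mem_filter.2 ⟨Finset.mem_univ y, hxy, ?_⟩))
        have := hxy.ne
        have := hmax y
        grind
      refine ⟨Function.update c x q, fun u hu v hv huv => ?_⟩
      have := hfree u hu
      have := hfree v hv
      have := hc u
      have := hc v
      grind [Function.update_apply, C.adj_comm, SimpleGraph.irrefl]
  obtain ⟨c, hc⟩ := extend X subset_rfl
  exact ⟨c, fun {u v} huv => hc u (by simp) v (by simp) huv⟩

/-- Two distinct vertices are adjacent in `distanceGraph G t` if their distance in `G` is at most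
`t`, so that `DistVertexColorable G t n` says that this graph is `n`-colourable. -/
def distanceGraph (G : SimpleGraph V) (t : ℕ) : SimpleGraph V where
  Adj u v := u ≠ v ∧ IsWithin G t u v
  symm := ⟨fun _ _ h => ⟨h.1.symm, h.2.symm⟩⟩
  loopless := ⟨fun _ h => h.1 rfl⟩

theorem distVertexColorable_iff {G : SimpleGraph V} {t n : ℕ} :
    DistVertexColorable G t n ↔ (distanceGraph G t).Colorable n :=
  ⟨fun ⟨c, hc⟩ => ⟨c, fun {u v} h => hc u v h.1 h.2⟩,
    fun ⟨c⟩ => ⟨c, fun _ _ huv h => c.valid ⟨huv, h⟩⟩⟩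

open Classical in
theorem distVertexColorable_of_spanningInduce_compl [Fintype V] {G : SimpleGraph V} {t n : ℕ}
    {X : Set V} (ρ : V → ℕ) (hcol : DistVertexColorable (spanningInduce G Xᶜ) t n)
    (hdist : ∀ u ∉ X, ∀ v ∉ X, IsWithin G t u v → IsWithin (spanningInduce G Xᶜ) t u v)
    (hcard : ∀ x ∈ X, #{y | (x ≠ y ∧ IsWithin G t x y) ∧ (y ∈ X → ρ y ≤ ρ x)} < n) :
    DistVertexColorable G t n := by
  obtain ⟨c, hc⟩ := hcol
  refine distVertexColorable_iff.2 (colorable_of_card_lt X.toFinset ρ c ?_ ?_)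
  · simp only [Set.mem_toFinset]
    exact fun u hu v hv huv => hc u v huv.1 (hdist u hu v hv huv.2)
  · simpa only [Set.mem_toFinset, distanceGraph] using hcard

end Greedy

/-! ### Levels -/

section Levels

variable {V : Type*} {G : SimpleGraph V} {K : ℕ} {lev : V → ℕ}

/-- The neighbours of `z` whose level is at least that of `z`. -/
def upperNeighbors (G : SimpleGraph V) (lev : V → ℕ) (z : V) : Set V :=
  {a | G.Adj z a ∧ lev z ≤ lev a}

/-- A level function records the round in which a vertex is lost when the vertices of degree at
most one are removed repeatedly, all at once in each round; the count stops at `K`. -/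
structure IsLevelFunction (G : SimpleGraph V) (K : ℕ) (lev : V → ℕ) : Prop where
  le : ∀ v, lev v ≤ K
  subsingleton : ∀ v, lev v < K → (upperNeighbors G lev v).Subsingleton
  nontrivial : ∀ v, 0 < lev v → {a | G.Adj v a ∧ lev v ≤ lev a + 1}.Nontrivial

/-- The vertices that survive `j` rounds of removing all vertices of degree at most one. -/
def prune (G : SimpleGraph V) : ℕ → Set V
  | 0 => Set.univ
  | j + 1 => {v ∈ prune G j | (G.neighborSet v ∩ prune G j).Nontrivial}

theorem prune_antitone : Antitone (prune G) :=
  antitone_nat_of_succ_le fun _ _ hv => hv.1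

theorem exists_isLevelFunction (G : SimpleGraph V) (K : ℕ) :
    ∃ lev : V → ℕ, IsLevelFunction G K lev := by
  classical
  set lev : V → ℕ := fun v => Nat.findGreatest (v ∈ prune G ·) K
  have le_lev : ∀ {v j}, j ≤ K → v ∈ prune G j → j ≤ lev v := fun hj hv =>
    Nat.le_findGreatest hj hv
  have lev_le : ∀ v, lev v ≤ K := fun v => Nat.findGreatest_le K
  have mem_prune : ∀ v, v ∈ prune G (lev v) := fun v =>
    Nat.findGreatest_spec (P := (v ∈ prune G ·)) K.zero_le (Set.mem_univ v)
  refine ⟨lev, lev_le, fun v hv => ?_, fun v hv => ?_⟩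
  · by_contra h
    obtain ⟨a, ha, b, hb, hab⟩ := Set.not_subsingleton_iff.1 h
    exact (lev v).lt_irrefl (le_lev hv ⟨mem_prune v, a, ⟨ha.1, prune_antitone ha.2 (mem_prune a)⟩,
      b, ⟨hb.1, prune_antitone hb.2 (mem_prune b)⟩, hab⟩)
  · obtain ⟨j, hj⟩ := Nat.exists_eq_add_of_le' hv
    have hvj := mem_prune v
    rw [hj] at hvj
    refine hvj.2.mono fun a ha => ⟨ha.1, ?_⟩
    have := lev_le v
    have := le_lev (by omega) ha.2
    omega

/-- The vertices reached from `x` by `m` steps, each to a lower level. -/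
def descendants (G : SimpleGraph V) (lev : V → ℕ) : ℕ → V → Set V
  | 0, x => {x}
  | m + 1, x => {w | ∃ u ∈ descendants G lev m x, G.Adj u w ∧ lev w < lev u}

variable {m n : ℕ} {u w x y z : V}

theorem self_mem_descendants (G : SimpleGraph V) (lev : V → ℕ) (x : V) :
    x ∈ descendants G lev 0 x :=
  rfl

theorem mem_descendants_one (hxw : G.Adj x w) (hlt : lev w < lev x) :
    w ∈ descendants G lev 1 x :=
  ⟨x, rfl, hxw, hlt⟩

theorem lev_add_le_of_mem_descendants (h : w ∈ descendants G lev m x) : lev w + m ≤ lev x := by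
  induction m generalizing w with
  | zero => exact (congrArg lev h).le
  | succ m ih =>
    obtain ⟨u, hu, -, hlt⟩ := h
    have := ih hu
    omega

theorem mem_descendants_trans (hu : u ∈ descendants G lev m x) (hw : w ∈ descendants G lev n u) :
    w ∈ descendants G lev (m + n) x := by
  induction n generalizing w with
  | zero => exact Set.mem_singleton_iff.1 hw ▸ hu
  | succ n ih =>
    obtain ⟨a, ha, haw, hlt⟩ := hw
    exact ⟨a, ih ha, haw, hlt⟩

theorem isWithin_of_mem_descendants (h : w ∈ descendants G lev m x) : IsWithin G m x w := by
  induction m generalizing w with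
  | zero => exact Set.mem_singleton_iff.1 h ▸ IsWithin.refl 0 w
  | succ m ih =>
    obtain ⟨u, hu, huw, -⟩ := h
    exact ((ih hu).symm.cons huw.symm).symm

theorem exists_adj_of_mem_descendants_succ (h : w ∈ descendants G lev (m + 1) x) :
    ∃ c, G.Adj x c ∧ lev c < lev x ∧ w ∈ descendants G lev m c := by
  induction m generalizing w with
  | zero =>
    obtain ⟨u, rfl, huw, hlt⟩ := h
    exact ⟨w, huw, hlt, rfl⟩
  | succ m ih =>
    obtain ⟨u, hu, huw, hlt⟩ := h
    obtain ⟨c, hxc, hc, huc⟩ := ih hu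
    exact ⟨c, hxc, hc, u, huc, huw, hlt⟩

theorem mem_forwardBall_of_mem_descendants [Fintype V] [DecidableEq V] [DecidableRel G.Adj]
    (hlt : lev x < lev z) (h : w ∈ descendants G lev m x) : w ∈ forwardBall G m x z := by
  induction m generalizing z x with
  | zero => exact Set.mem_singleton_iff.1 h ▸ self_mem_forwardBall 0 w z
  | succ m ih =>
    obtain ⟨c, hxc, hc, hwc⟩ := exists_adj_of_mem_descendants_succ h
    exact mem_forwardBall_succ.2 (Or.inr ⟨c, hxc, by rintro rfl; omega, ih hc hwc⟩)

namespace IsLevelFunction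

theorem eq_of_adj_of_lt (hL : IsLevelFunction G K lev) (hwu : G.Adj w u) (hlt : lev w < lev u)
    (hwy : G.Adj w y) (hle : lev w ≤ lev y) : y = u :=
  hL.subsingleton w (hlt.trans_le (hL.le u)) ⟨hwy, hle⟩ ⟨hwu, hlt.le⟩

theorem mem_descendants_of_adj (hL : IsLevelFunction G K lev)
    (hw : w ∈ descendants G lev (m + 1) x) (hwy : G.Adj w y) :
    y ∈ descendants G lev m x ∨ y ∈ descendants G lev (m + 2) x := by
  obtain hlt | hle := lt_or_ge (lev y) (lev w)
  · exact Or.inr ⟨w, hw, hwy, hlt⟩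
  · obtain ⟨u, hu, huw, hlt⟩ := hw
    exact Or.inl (hL.eq_of_adj_of_lt huw.symm hlt hwy hle ▸ hu)

theorem depth_unique (hL : IsLevelFunction G K lev) {a b : V} (ha : lev a = K) (hb : lev b = K)
    (hm : w ∈ descendants G lev m a) (hn : w ∈ descendants G lev n b) : m = n := by
  induction m generalizing n w with
  | zero =>
    obtain rfl := Set.mem_singleton_iff.1 hm
    have := lev_add_le_of_mem_descendants hn
    omega
  | succ m ih =>
    cases n with
    | zero =>
      obtain rfl := Set.mem_singleton_iff.1 hn
      have := lev_add_le_of_mem_descendants hm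
      omega
    | succ n =>
      obtain ⟨u, hu, huw, hlt⟩ := hm
      obtain ⟨u', hu', huw', hlt'⟩ := hn
      obtain rfl := hL.eq_of_adj_of_lt huw.symm hlt huw'.symm hlt'.le
      rw [ih hu hu']

theorem exists_upperNeighbor_of_isWithin (hL : IsLevelFunction G K lev)
    (hw : w ∈ descendants G lev m z) (h : IsWithin G n w y) :
    (∃ k, y ∈ descendants G lev k z) ∨
      ∃ p ∈ upperNeighbors G lev z, ∃ q, m + 1 + q ≤ n ∧ IsWithin G q p y := by
  refine (IsWithin.exists_exit (σ := ℕ) (κ := upperNeighbors G lev z)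
    (R := fun s v => v ∈ descendants G lev s z) (exit := (↑)) (f := fun _ s => s + 1)
    (fun s v c hv hvc => ?_) hw h).imp_right fun ⟨p, hp⟩ => ⟨p, p.2, hp⟩
  cases s with
  | zero =>
    obtain rfl := Set.mem_singleton_iff.1 hv
    obtain hlt | hle := lt_or_ge (lev c) (lev v)
    · exact Or.inl ⟨1, mem_descendants_one hvc hlt, fun _ => by omega⟩
    · exact Or.inr ⟨⟨c, hvc, hle⟩, rfl, le_rfl⟩
  | succ s =>
    obtain hc | hc := hL.mem_descendants_of_adj hv hvc
    · exact Or.inl ⟨s, hc, fun _ => le_rfl⟩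
    · exact Or.inl ⟨s + 2, hc, fun _ => by omega⟩

theorem exists_descendant_lev_add_eq (hL : IsLevelFunction G K lev)
    (hz : (upperNeighbors G lev z).Subsingleton) (hm : m ≤ lev z) :
    ∃ w ∈ descendants G lev m z, lev w + m = lev z ∧ (upperNeighbors G lev w).Subsingleton := by
  induction m with
  | zero => exact ⟨z, rfl, rfl, hz⟩
  | succ m ih =>
    obtain ⟨w, hw, hlev, hwup⟩ := ih (by omega)
    obtain ⟨c, ⟨hwc, hle⟩, hc⟩ : ∃ c ∈ {a | G.Adj w a ∧ lev w ≤ lev a + 1},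
        c ∉ upperNeighbors G lev w := by
      by_contra! h
      exact Set.not_subsingleton_iff.2 (hL.nontrivial w (by omega)) (hwup.anti h)
    have hlt : lev c < lev w := not_le.1 fun h => hc ⟨hwc, h⟩
    exact ⟨c, ⟨w, hw, hwc, hlt⟩, by omega, hL.subsingleton c (hlt.trans_le (hL.le w))⟩

/- The component of `z` consists of the descendants of `z` and those of its upper neighbour `p`,
which has the same level; a walk can only alternate between these two trees along `z p`. -/
theorem isWithin_lev_add_one (hL : IsLevelFunction G K lev) (hlt : lev z < K)
    (hmax : ∀ a ∈ upperNeighbors G lev z, lev a ≤ lev z) (h : IsWithin G n z y) :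
    IsWithin G (lev z + 1) z y := by
  induction n using Nat.strong_induction_on with
  | _ n ih =>
  obtain ⟨k, hk⟩ | ⟨p, hp, q, hq, hpy⟩ :=
    hL.exists_upperNeighbor_of_isWithin (self_mem_descendants G lev z) h
  · have := lev_add_le_of_mem_descendants hk
    exact (isWithin_of_mem_descendants hk).mono (by omega)
  have hlp : lev p = lev z := (hmax p hp).antisymm hp.2
  obtain ⟨k, hk⟩ | ⟨z', hz', q', hq', hzy⟩ :=
    hL.exists_upperNeighbor_of_isWithin (self_mem_descendants G lev p) hpy
  · have := lev_add_le_of_mem_descendants hk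
    exact ((isWithin_of_mem_descendants hk).cons hp.1).mono (by omega)
  · obtain rfl : z' = z := hL.subsingleton p (hlp ▸ hlt) hz' ⟨hp.1.symm, hlp.le⟩
    exact ih q' (by omega) hzy

theorem exists_isWithin_center (hL : IsLevelFunction G K lev)
    (hz : (upperNeighbors G lev z).Subsingleton)
    (hmax : ∀ a ∈ upperNeighbors G lev z, lev a ≤ lev z)
    (hw : w ∈ descendants G lev (lev z) z) :
    ∃ p, ∀ y, IsWithin G (2 * (K + 1)) w y → IsWithin G (K + 1) p y := by
  obtain hlt | hK := (hL.le z).lt_or_eq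
  · refine ⟨z, fun y hy => ?_⟩
    exact (hL.isWithin_lev_add_one hlt hmax ((isWithin_of_mem_descendants hw).trans hy)).mono
      (by omega)
  have near : ∀ {k y}, y ∈ descendants G lev k z → IsWithin G K z y := fun hk =>
    (isWithin_of_mem_descendants hk).mono
      (by have := lev_add_le_of_mem_descendants hk; omega)
  obtain hempty | ⟨p, hp⟩ := (upperNeighbors G lev z).eq_empty_or_nonempty
  · refine ⟨z, fun y hy => ?_⟩
    obtain ⟨k, hk⟩ | ⟨p, hp, -⟩ := hL.exists_upperNeighbor_of_isWithin hw hy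
    · exact (near hk).mono K.le_succ
    · exact absurd hp (hempty ▸ Set.notMem_empty p)
  · refine ⟨p, fun y hy => ?_⟩
    obtain ⟨k, hk⟩ | ⟨p', hp', q, hq, hpy⟩ := hL.exists_upperNeighbor_of_isWithin hw hy
    · exact (near hk).cons hp.1.symm
    · exact (hz hp' hp ▸ hpy).mono (by omega)

theorem exists_leaf_isWithin_center (hL : IsLevelFunction G K lev)
    (hz : (upperNeighbors G lev z).Subsingleton)
    (hmax : ∀ a ∈ upperNeighbors G lev z, lev a ≤ lev z)
    (hne : (G.neighborSet z).Nonempty) :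
    ∃ w p, (G.neighborSet w).Nonempty ∧ (G.neighborSet w).Subsingleton ∧
      ∀ y, IsWithin G (2 * (K + 1)) w y → IsWithin G (K + 1) p y := by
  obtain ⟨w, hw, hlev, hwup⟩ := hL.exists_descendant_lev_add_eq hz le_rfl
  obtain ⟨p, hp⟩ := hL.exists_isWithin_center hz hmax hw
  refine ⟨w, p, ?_, hwup.anti fun a ha => ⟨ha, by omega⟩, hp⟩
  cases hl : lev z with
  | zero =>
    rw [hl] at hw
    exact Set.mem_singleton_iff.1 hw ▸ hne
  | succ m =>
    rw [hl] at hw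
    obtain ⟨u, -, huw, -⟩ := hw
    exact ⟨u, huw.symm⟩

end IsLevelFunction

theorem IsWithin.spanningInduce_compl_singleton {z : V} (hz : (G.neighborSet z).Subsingleton)
    (hu : u ≠ z) (hw : w ≠ z) (h : IsWithin G n u w) :
    IsWithin (spanningInduce G {z}ᶜ) n u w := by
  induction n using Nat.strong_induction_on generalizing u with
  | _ n ih =>
  cases n with
  | zero => exact h.eq ▸ IsWithin.refl 0 u
  | succ n =>
  obtain rfl | ⟨c, huc, hc⟩ := h.eq_or_exists_adj
  · exact IsWithin.refl (n + 1) u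
  by_cases hcz : c = z
  · subst hcz
    cases n with
    | zero => exact absurd hc.eq.symm hw
    | succ n =>
      obtain rfl | ⟨u', hu', h'⟩ := hc.eq_or_exists_adj
      · exact absurd rfl hw
      · obtain rfl : u' = u := hz hu' huc.symm
        exact (ih n (by omega) hu h').mono (by omega)
  · exact (ih n n.lt_succ_self hcz hc).cons (spanningInduce_adj.2 ⟨hu, hcz, huc⟩)

open Classical in
theorem IsLevelFunction.distVertexColorable_of_subsingleton [Fintype V] [DecidableRel G.Adj] {r : ℕ}
    (hL : IsLevelFunction G K lev) (hdeg : ∀ v, G.degree v ≤ r + 1)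
    (hz : (upperNeighbors G lev z).Subsingleton)
    (hmax : ∀ a ∈ upperNeighbors G lev z, lev a ≤ lev z)
    (hne : (G.neighborSet z).Nonempty)
    (hcol : ∀ w, (G.neighborSet w).Nonempty →
      DistVertexColorable (spanningInduce G {w}ᶜ) (2 * (K + 1)) (treeBallCard r (K + 1))) :
    DistVertexColorable G (2 * (K + 1)) (treeBallCard r (K + 1)) := by
  obtain ⟨w, p, hwne, hwsub, hp⟩ := hL.exists_leaf_isWithin_center hz hmax hne
  refine distVertexColorable_of_spanningInduce_compl (X := {w}) (fun _ => 0) (hcol w hwne)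
    (fun u hu v hv huv => huv.spanningInduce_compl_singleton hwsub hu hv) ?_
  rintro x rfl
  refine lt_of_lt_of_le (Finset.card_lt_card ?_) (card_isWithin_le hdeg K p)
  refine Finset.ssubset_iff_subset_ne.2 ⟨fun y hy => ?_, fun h => ?_⟩
  · simp only [Finset.mem_filter, Finset.mem_univ, true_and] at hy ⊢
    exact hp y hy.1.2
  · have := Finset.ext_iff.1 h x
    simp [hp x (IsWithin.refl _ x)] at this

end Levels

/-! ### Threads of the top level -/

section Zones

open scoped Finset

variable {V : Type*} {G : SimpleGraph V} {K l m n : ℕ} {lev : V → ℕ} {v : ℕ → V} {u w x y : V}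

/-- The edges of `G` between vertices of level `K`. -/
abbrev topGraph (G : SimpleGraph V) (K : ℕ) (lev : V → ℕ) : SimpleGraph V :=
  spanningInduce G {v | lev v = K}

namespace IsThread

theorem topGraph_adj (hT : IsThread (topGraph G K lev) l v) {i : ℕ} (hi : i ≤ l) :
    G.Adj (v i) (v (i + 1)) :=
  (spanningInduce_adj.1 (hT.adj i hi)).2.2

theorem lev_eq (hT : IsThread (topGraph G K lev) l v) {i : ℕ} (hi : i ≤ l + 1) :
    lev (v i) = K := by
  cases i with
  | zero => exact (spanningInduce_adj.1 (hT.adj 0 l.zero_le)).1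
  | succ i => exact (spanningInduce_adj.1 (hT.adj i (by omega))).2.1

theorem lt_or_eq_or_eq (hT : IsThread (topGraph G K lev) l v) (hL : IsLevelFunction G K lev)
    {i : ℕ} (hi : i < l) (hw : G.Adj (v (i + 1)) w) : lev w < K ∨ w = v i ∨ w = v (i + 2) :=
  (hL.le w).lt_or_eq.imp_right fun hlev =>
    hT.eq_or_eq i hi w (spanningInduce_adj.2 ⟨hT.lev_eq (by omega), hlev, hw⟩)

theorem exists_end_of_isWithin (hT : IsThread (topGraph G K lev) l v)
    (hL : IsLevelFunction G K lev) {a b j : ℕ} (hb : b ≤ l + 1) (haj : a < j) (hjb : j < b)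
    (hw : w ∈ descendants G lev m (v j)) (h : IsWithin G n w y) :
    (∃ i k, a < i ∧ i < b ∧ y ∈ descendants G lev k (v i)) ∨
      (∃ q, m + (j - a) + q ≤ n ∧ IsWithin G q (v a) y) ∨
      ∃ q, m + (b - j) + q ≤ n ∧ IsWithin G q (v b) y := by
  have hexit := IsWithin.exists_exit (σ := ℕ × ℕ) (κ := Bool)
    (R := fun s x => a < s.2 ∧ s.2 < b ∧ x ∈ descendants G lev s.1 (v s.2))
    (exit := fun k => cond k (v a) (v b))
    (f := fun k s => s.1 + cond k (s.2 - a) (b - s.2)) (fun s x c hx hxc => ?_)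
    (s := (m, j)) ⟨haj, hjb, hw⟩ h
  · obtain ⟨⟨k, i⟩, hi⟩ | ⟨_ | _, q, hq, hqy⟩ := hexit
    · exact Or.inl ⟨i, k, hi⟩
    · exact Or.inr (Or.inr ⟨q, hq, hqy⟩)
    · exact Or.inr (Or.inl ⟨q, hq, hqy⟩)
  obtain ⟨k, i⟩ := s
  obtain ⟨hai, hib, hx⟩ := hx
  dsimp only at hai hib hx ⊢
  cases k with
  | succ k =>
    obtain hc | hc := hL.mem_descendants_of_adj hx hxc
    · exact Or.inl ⟨(k, i), ⟨hai, hib, hc⟩, fun _ => by dsimp only; omega⟩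
    · exact Or.inl ⟨(k + 2, i), ⟨hai, hib, hc⟩, fun _ => by dsimp only; omega⟩
  | zero =>
    obtain rfl := Set.mem_singleton_iff.1 hx
    obtain ⟨i, rfl⟩ := Nat.exists_eq_add_of_le' (Nat.one_le_of_lt hai)
    obtain hlt | rfl | rfl := hT.lt_or_eq_or_eq hL (i := i) (by omega) hxc
    · refine Or.inl ⟨(1, i + 1), ⟨hai, hib, mem_descendants_one hxc ?_⟩, fun _ => by
        dsimp only; omega⟩
      rwa [hT.lev_eq (by omega)]
    · obtain rfl | hne := eq_or_ne a i
      · exact Or.inr ⟨true, rfl, by dsimp only [cond]; omega⟩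
      · refine Or.inl ⟨(0, i), ⟨by dsimp only; omega, by dsimp only; omega, rfl⟩, ?_⟩
        rintro (_ | _) <;> dsimp only [cond] <;> omega
    · obtain rfl | hne := eq_or_ne b (i + 2)
      · exact Or.inr ⟨false, rfl, by dsimp only [cond]; omega⟩
      · refine Or.inl ⟨(0, i + 2), ⟨by dsimp only; omega, by dsimp only; omega, rfl⟩, ?_⟩
        rintro (_ | _) <;> dsimp only [cond] <;> omega

theorem mem_forwardBall_or (hT : IsThread (topGraph G K lev) l v) (hL : IsLevelFunction G K lev)
    [Fintype V] [DecidableEq V] [DecidableRel G.Adj]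
    {a b j s : ℕ} (hb : b ≤ l + 1) (haj : a < j) (hjb : j < b)
    (hw : w ∈ descendants G lev m (v j)) (h : IsWithin G n w y)
    (hna : n ≤ m + (j - a) + s) (hnb : n ≤ m + (b - j) + s) :
    (∃ i k, a < i ∧ i < b ∧ y ∈ descendants G lev k (v i)) ∨
      y ∈ forwardBall G s (v a) (v (a + 1)) ∨ y ∈ forwardBall G s (v b) (v (b - 1)) := by
  induction n using Nat.strong_induction_on generalizing m j w with
  | _ n ih =>
  obtain hy | ⟨q, hq, hqy⟩ | ⟨q, hq, hqy⟩ := hT.exists_end_of_isWithin hL hb haj hjb hw h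
  · exact Or.inl hy
  · obtain hy | ⟨k, hk, hky⟩ := hqy.mem_forwardBall_or (v (a + 1))
    · exact Or.inr (Or.inl (forwardBall_mono (by omega) _ _ hy))
    · exact ih k (by omega) (by omega) (by omega) (self_mem_descendants G lev _) hky
        (by omega) (by omega)
  · obtain hy | ⟨k, hk, hky⟩ := hqy.mem_forwardBall_or (v (b - 1))
    · exact Or.inr (Or.inr (forwardBall_mono (by omega) _ _ hy))
    · exact ih k (by omega) (by omega) (by omega) (self_mem_descendants G lev _) hky
        (by omega) (by omega)

end IsThread

/-! ### The deleted zone -/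

/-- The number of inner vertices at either end of a thread whose descendants of depth `s` are not
deleted. It drops by `2 * (K - s) + 1` from `s` to `s + 1`, so that descendants of depth `s + 1`
are deleted all along the window within reach of a deleted vertex of depth `s`. -/
def margin (K s : ℕ) : ℕ := (K + 1 - s) ^ 2

theorem margin_eq_add {s : ℕ} (hs : s ≤ K) :
    margin K s = margin K (s + 1) + (2 * (K - s) + 1) := by
  obtain ⟨j, rfl⟩ := Nat.exists_eq_add_of_le hs
  rw [margin, margin, show s + j + 1 - s = j + 1 by omega, show s + j + 1 - (s + 1) = j by omega,
    show s + j - s = j by omega]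
  ring

theorem margin_antitone (K : ℕ) : Antitone (margin K) :=
  fun _ _ h => Nat.pow_le_pow_left (Nat.sub_le_sub_left h _) 2

/-- The vertices of a thread `v` and their descendants, except that descendants of depth `s` are
only taken for thread vertices outside the `s`-th margins. -/
def zone (G : SimpleGraph V) (lev : V → ℕ) (K l : ℕ) (v : ℕ → V) : Set V :=
  {x | ∃ s i, margin K s < i ∧ i + margin K s ≤ l ∧ x ∈ descendants G lev s (v i)}

theorem mem_zone_of_le {s i : ℕ} (hsm : s ≤ m) (hlo : margin K s < i) (hhi : i + margin K s ≤ l)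
    (hx : x ∈ descendants G lev m (v i)) : x ∈ zone G lev K l v := by
  have := margin_antitone K hsm
  exact ⟨m, i, by omega, by omega, hx⟩

theorem IsLevelFunction.exists_isWithin_of_descendant (hL : IsLevelFunction G K lev) {c : V}
    {s i : ℕ} (hlo : margin K (s + 1) < i) (hhi : i + margin K (s + 1) ≤ l)
    (hc : c ∈ descendants G lev (s + 1) (v i)) (huc : G.Adj u c)
    (hu : u ∉ zone G lev K l v) (hw : w ∉ zone G lev K l v) (h : IsWithin G n c w) :
    ∃ q ≤ n, IsWithin G q u w := by
  have hup : ∀ p ∈ upperNeighbors G lev c, p = u := by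
    obtain ⟨u', -, hu'c, hlt⟩ := id hc
    have eq_parent : ∀ {p}, p ∈ upperNeighbors G lev c → p = u' := fun hp =>
      hL.eq_of_adj_of_lt hu'c.symm hlt hp.1 hp.2
    refine fun p hp => (eq_parent hp).trans (eq_parent ⟨huc.symm, ?_⟩).symm
    by_contra! huc'
    exact hu (mem_zone_of_le (s + 1).le_succ hlo hhi ⟨c, hc, huc.symm, huc'⟩)
  obtain ⟨k, hk⟩ | ⟨p, hp, q, hq, hpw⟩ :=
    hL.exists_upperNeighbor_of_isWithin (self_mem_descendants G lev c) h
  · exact absurd (mem_zone_of_le (Nat.le_add_right _ k) hlo hhi (mem_descendants_trans hc hk)) hw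
  · exact ⟨q, by omega, hup p hp ▸ hpw⟩

theorem IsThread.exists_isWithin_of_adj (hT : IsThread (topGraph G K lev) l v)
    (hL : IsLevelFunction G K lev) (hl : 2 * margin K 0 + 2 * (K + 1) ≤ l) {i : ℕ}
    (hlo : margin K 0 < i) (hhi : i + margin K 0 ≤ l) (hu : G.Adj (v i) u)
    (huz : u ∉ zone G lev K l v) (hwz : w ∉ zone G lev K l v) (h : IsWithin G n (v i) w)
    (hn : n < 2 * (K + 1)) : ∃ q ≤ n, IsWithin G q u w := by
  have hexit := hT.exists_end_of_isWithin hL (a := margin K 0) (b := l + 1 - margin K 0)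
    (by omega) hlo (by omega) (self_mem_descendants G lev (v i)) h
  have hnot : ¬ ∃ j k, margin K 0 < j ∧ j < l + 1 - margin K 0 ∧ w ∈ descendants G lev k (v j) :=
    fun ⟨_, k, hj, hj', hw⟩ => hwz (mem_zone_of_le k.zero_le hj (by omega) hw)
  have hzone : ∀ j, u = v j → margin K 0 < j → ¬ j + margin K 0 ≤ l := by
    rintro j rfl hj hj'
    exact huz (mem_zone_of_le le_rfl hj hj' (self_mem_descendants G lev (v j)))
  obtain ⟨i, rfl⟩ := Nat.exists_eq_add_of_le' (Nat.one_le_of_lt hlo)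
  obtain hlt | rfl | rfl := hT.lt_or_eq_or_eq hL (i := i) (by omega) hu
  · refine absurd (mem_zone_of_le zero_le_one hlo hhi (mem_descendants_one hu ?_)) huz
    rwa [hT.lev_eq (by omega)]
  · have := hzone i rfl
    obtain rfl : i = margin K 0 := by omega
    obtain hw | ⟨q, hq, hqw⟩ | ⟨q, hq, -⟩ := hexit
    · exact absurd hw hnot
    · exact ⟨q, by omega, hqw⟩
    · omega
  · have := hzone (i + 2) rfl
    obtain hw | ⟨q, hq, -⟩ | ⟨q, hq, hqw⟩ := hexit
    · exact absurd hw hnot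
    · omega
    · exact ⟨q, by omega, (show i + 2 = l + 1 - margin K 0 by omega) ▸ hqw⟩

/- A short walk that enters the zone from `u` and ends outside can only leave it through `u`: each
hair hangs on the rest of the graph by one edge, and the other end of the thread is too far. -/
theorem IsThread.isWithin_spanningInduce_compl_zone (hT : IsThread (topGraph G K lev) l v)
    (hL : IsLevelFunction G K lev) (hl : 2 * margin K 0 + 2 * (K + 1) ≤ l)
    (hn : n ≤ 2 * (K + 1)) (hu : u ∉ zone G lev K l v) (hw : w ∉ zone G lev K l v)
    (h : IsWithin G n u w) : IsWithin (spanningInduce G (zone G lev K l v)ᶜ) n u w := by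
  induction n using Nat.strong_induction_on generalizing u with
  | _ n ih =>
  cases n with
  | zero => exact h.eq ▸ IsWithin.refl 0 u
  | succ n =>
  obtain rfl | ⟨c, huc, hc⟩ := h.eq_or_exists_adj
  · exact IsWithin.refl (n + 1) u
  by_cases hcz : c ∈ zone G lev K l v
  · obtain ⟨q, hq, hqw⟩ : ∃ q ≤ n, IsWithin G q u w := by
      obtain ⟨s, i, hlo, hhi, hci⟩ := hcz
      cases s with
      | zero =>
        obtain rfl := Set.mem_singleton_iff.1 hci
        exact hT.exists_isWithin_of_adj hL hl hlo hhi huc.symm hu hw hc (by omega)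
      | succ s => exact hL.exists_isWithin_of_descendant hlo hhi hci huc hu hw hc
    exact (ih q (by omega) (by omega) hu hqw).mono (by omega)
  · exact (ih n n.lt_succ_self (by omega) hcz hc).cons (spanningInduce_adj.2 ⟨hu, hcz, huc⟩)

/-- The depth of `x` as a descendant of a thread vertex (`0` if it is not one). -/
noncomputable def threadDepth (G : SimpleGraph V) (lev : V → ℕ) (l : ℕ) (v : ℕ → V) (x : V) : ℕ :=
  sInf {s | ∃ i ≤ l, x ∈ descendants G lev s (v i)}

theorem IsThread.threadDepth_eq (hT : IsThread (topGraph G K lev) l v)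
    (hL : IsLevelFunction G K lev) {i s : ℕ} (hi : i ≤ l) (hx : x ∈ descendants G lev s (v i)) :
    threadDepth G lev l v x = s := by
  obtain ⟨j, hj, hxj⟩ :=
    Nat.sInf_mem (s := {s | ∃ i ≤ l, x ∈ descendants G lev s (v i)}) ⟨s, i, hi, hx⟩
  exact hL.depth_unique (hT.lev_eq (by omega)) (hT.lev_eq (by omega)) hxj hx

/-! ### Counting hairs -/

theorem treeBallCard_succ (r k : ℕ) :
    treeBallCard r (k + 1) = r ^ (k + 1) + 2 * ∑ i ∈ Finset.range (k + 1), r ^ i := by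
  have h := geom_sum_succ (x := r) (n := k + 1)
  rw [Finset.sum_range_succ] at h
  rw [treeBallCard]
  linarith

theorem four_mul_add_three_le_pow {r : ℕ} (hr : 3 ≤ r) (j : ℕ) : 4 * j + 3 ≤ r ^ (j + 1) := by
  induction j with
  | zero => simpa using hr
  | succ j ih =>
    rw [pow_succ]
    nlinarith

theorem mul_pow_add_le_treeBallCard {r s : ℕ} (hr : 3 ≤ r) (hs : s ≤ K) :
    (4 * (K - s) + 3) * r ^ s + 2 * ∑ i ∈ Finset.range (s + 1), r ^ i ≤
      treeBallCard r (K + 1) := by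
  rw [treeBallCard_succ]
  gcongr
  calc (4 * (K - s) + 3) * r ^ s
    _ ≤ r ^ (K - s + 1) * r ^ s := by gcongr; exact four_mul_add_three_le_pow hr (K - s)
    _ = r ^ (K + 1) := by rw [← pow_add]; congr 1; omega

variable [Fintype V]

open Classical in
/-- The descendants of `z` of depth at most `s`. -/
noncomputable def hair (G : SimpleGraph V) (lev : V → ℕ) (s : ℕ) (z : V) : Finset V :=
  {y | ∃ k ≤ s, y ∈ descendants G lev k z}

theorem mem_hair {s : ℕ} {z : V} : y ∈ hair G lev s z ↔ ∃ k ≤ s, y ∈ descendants G lev k z := by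
  simp [hair]

variable [DecidableRel G.Adj] {r s : ℕ}

theorem card_hair_le (hdeg : ∀ a, G.degree a ≤ r + 1) (s : ℕ) (z : V) :
    #(hair G lev s z) ≤
      (∑ i ∈ Finset.range s, r ^ i) * #{c ∈ G.neighborFinset z | lev c < lev z} + 1 := by
  classical
  cases s with
  | zero =>
    have hsub : hair G lev 0 z ⊆ {z} := fun y hy => by simpa [mem_hair, descendants] using hy
    simpa using Finset.card_le_card hsub
  | succ s =>
    have hsub : hair G lev (s + 1) z ⊆ insert z
        ({c ∈ G.neighborFinset z | lev c < lev z}.biUnion fun c => forwardBall G s c z) := by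
      intro y hy
      obtain ⟨_ | k, hk, hyk⟩ := mem_hair.1 hy
      · exact Finset.mem_insert.2 (Or.inl hyk)
      · obtain ⟨c, hzc, hc, hyc⟩ := exists_adj_of_mem_descendants_succ hyk
        refine Finset.mem_insert_of_mem (Finset.mem_biUnion.2 ⟨c, by simp [hzc, hc], ?_⟩)
        exact forwardBall_mono (by omega) c z (mem_forwardBall_of_mem_descendants hc hyc)
    rw [Nat.mul_comm]
    refine (Finset.card_le_card hsub).trans ((Finset.card_insert_le _ _).trans
      (Nat.succ_le_succ (Finset.card_biUnion_le_card_mul _ _ _ fun c hc => ?_)))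
    have hzc : G.Adj z c := (G.mem_neighborFinset z c).1 (Finset.mem_filter.1 hc).1
    exact card_forwardBall_le hdeg hzc.symm s

namespace IsThread

theorem card_lower_neighbors_le (hT : IsThread (topGraph G K lev) l v)
    (hdeg : ∀ a, G.degree a ≤ r + 2) {j : ℕ} (hj : 0 < j) (hjl : j ≤ l) :
    #{c ∈ G.neighborFinset (v j) | lev c < lev (v j)} ≤ r := by
  classical
  obtain ⟨i, rfl⟩ := Nat.exists_eq_add_of_le' hj
  have hsub : {c ∈ G.neighborFinset (v (i + 1)) | lev c < lev (v (i + 1))} ⊆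
      G.neighborFinset (v (i + 1)) \ {v i, v (i + 2)} := by
    intro c hc
    obtain ⟨hadj, hlt⟩ := Finset.mem_filter.1 hc
    have := hT.lev_eq (i := i) (by omega)
    have := hT.lev_eq (i := i + 1) (by omega)
    have := hT.lev_eq (i := i + 2) (by omega)
    refine Finset.mem_sdiff.2 ⟨hadj, fun h => ?_⟩
    obtain rfl | rfl := by simpa using h
    all_goals omega
  have hends : {v i, v (i + 2)} ⊆ G.neighborFinset (v (i + 1)) := by
    simp [Finset.insert_subset_iff, (hT.topGraph_adj (i := i) (by omega)).symm,
      hT.topGraph_adj (i := i + 1) (by omega)]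
  refine (Finset.card_le_card hsub).trans ?_
  rw [Finset.card_sdiff_of_subset hends, card_neighborFinset_eq_degree,
    Finset.card_pair (hT.ne i (by omega)).symm]
  exact Nat.sub_le_of_le_add (hdeg _)

theorem card_hair_le_pow (hT : IsThread (topGraph G K lev) l v)
    (hdeg : ∀ a, G.degree a ≤ r + 2) {j : ℕ} (hj : 0 < j) (hjl : j ≤ l) (s : ℕ) :
    #(hair G lev s (v j)) ≤ (r + 1) ^ s := by
  rw [← geom_sum_mul_add r s]
  refine (card_hair_le hdeg s (v j)).trans ?_
  gcongr
  exact hT.card_lower_neighbors_le hdeg hj hjl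

end IsThread

/-- The hairs of depth `s` at the thread vertices strictly between `v a` and `v b`, and the
vertices reached within `s` steps by leaving the thread at `v a` or `v b`. -/
noncomputable def windowBall [DecidableEq V] (G : SimpleGraph V) [DecidableRel G.Adj]
    (lev : V → ℕ) (v : ℕ → V) (s a b : ℕ) : Finset V :=
  ((Finset.Ioo a b).biUnion fun i => hair G lev s (v i)) ∪
    (forwardBall G s (v a) (v (a + 1)) ∪ forwardBall G s (v b) (v (b - 1)))

theorem IsThread.card_windowBall_le [DecidableEq V] (hT : IsThread (topGraph G K lev) l v)
    (hr : 0 < r) (hdeg : ∀ a, G.degree a ≤ r + 1) {a b : ℕ} (hab : a < b) (hb : b ≤ l + 1) (s : ℕ) :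
    #(windowBall G lev v s a b) ≤
      (b - a - 1) * r ^ s + 2 * ∑ i ∈ Finset.range (s + 1), r ^ i := by
  have hhairs : #((Finset.Ioo a b).biUnion fun i => hair G lev s (v i)) ≤
      (b - a - 1) * r ^ s := by
    rw [← Nat.card_Ioo]
    refine Finset.card_biUnion_le_card_mul _ _ _ fun i hi => ?_
    obtain ⟨q, rfl⟩ := Nat.exists_eq_add_of_le' hr
    have := Finset.mem_Ioo.1 hi
    exact hT.card_hair_le_pow hdeg (by omega) (by omega) s
  have hleft := card_forwardBall_le hdeg (hT.topGraph_adj (i := a) (by omega)) s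
  have hright : #(forwardBall G s (v b) (v (b - 1))) ≤ ∑ i ∈ Finset.range (s + 1), r ^ i := by
    obtain ⟨b, rfl⟩ := Nat.exists_eq_add_of_le' (Nat.one_le_of_lt hab)
    exact card_forwardBall_le hdeg (hT.topGraph_adj (by omega)).symm s
  rw [two_mul]
  exact (Finset.card_union_le _ _).trans (Nat.add_le_add hhairs
    ((Finset.card_union_le _ _).trans (Nat.add_le_add hleft hright)))

namespace IsThread

theorem mem_windowBall [DecidableEq V] (hT : IsThread (topGraph G K lev) l v)
    (hL : IsLevelFunction G K lev) {i : ℕ} (hs : s ≤ K) (hlo : margin K s < i)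
    (hhi : i + margin K s ≤ l) (hx : x ∈ descendants G lev s (v i))
    (hxy : IsWithin G (2 * (K + 1)) x y)
    (hy : y ∈ zone G lev K l v → threadDepth G lev l v y ≤ s) :
    y ∈ windowBall G lev v s (i - 2 * (K + 1 - s)) (i + 2 * (K + 1 - s)) := by
  have hmargin := margin_eq_add hs
  simp only [windowBall, Finset.mem_union, Finset.mem_biUnion, Finset.mem_Ioo]
  refine (hT.mem_forwardBall_or hL (a := i - 2 * (K + 1 - s)) (b := i + 2 * (K + 1 - s))
    (by omega) (by omega) (by omega) hx hxy (by omega) (by omega)).imp_left ?_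
  rintro ⟨j, k, haj, hjb, hyj⟩
  refine ⟨j, ⟨haj, hjb⟩, mem_hair.2 ⟨k, ?_, hyj⟩⟩
  by_contra! hsk
  have := hy (mem_zone_of_le (s := s + 1) hsk (by omega) (by omega) hyj)
  have := hT.threadDepth_eq hL (by omega) hyj
  omega

open Classical in
theorem card_isWithin_lt (hT : IsThread (topGraph G K lev) l v) (hL : IsLevelFunction G K lev)
    (hr : 3 ≤ r) (hdeg : ∀ a, G.degree a ≤ r + 1) (hx : x ∈ zone G lev K l v) :
    #{y | (x ≠ y ∧ IsWithin G (2 * (K + 1)) x y) ∧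
      (y ∈ zone G lev K l v → threadDepth G lev l v y ≤ threadDepth G lev l v x)} <
      treeBallCard r (K + 1) := by
  obtain ⟨s, i, hlo, hhi, hxi⟩ := hx
  have hs : s ≤ K := by
    have := lev_add_le_of_mem_descendants hxi
    have := hL.le (v i)
    omega
  have hmargin := margin_eq_add hs
  rw [hT.threadDepth_eq hL (by omega) hxi]
  have hmem : ∀ y, IsWithin G (2 * (K + 1)) x y →
      (y ∈ zone G lev K l v → threadDepth G lev l v y ≤ s) →
      y ∈ windowBall G lev v s (i - 2 * (K + 1 - s)) (i + 2 * (K + 1 - s)) :=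
    fun y => hT.mem_windowBall hL hs hlo hhi hxi
  have hxmem := hmem x (IsWithin.refl _ x) fun _ => (hT.threadDepth_eq hL (by omega) hxi).le
  refine (Finset.card_lt_card (Finset.ssubset_iff_subset_ne.2 ⟨fun y hy => ?_, ?_⟩)).trans_le
    ((hT.card_windowBall_le (a := i - 2 * (K + 1 - s)) (b := i + 2 * (K + 1 - s))
      (by omega) hdeg (by omega) (by omega) s).trans
      (le_of_eq_of_le ?_ (mul_pow_add_le_treeBallCard hr hs)))
  · obtain ⟨⟨-, hxy⟩, hy⟩ := (Finset.mem_filter.1 hy).2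
    exact hmem y hxy hy
  · intro h
    exact (Finset.mem_filter.1 (h ▸ hxmem)).2.1.1 rfl
  · congr 2
    omega

theorem distVertexColorable (hT : IsThread (topGraph G K lev) l v)
    (hL : IsLevelFunction G K lev) (hl : 2 * margin K 0 + 2 * (K + 1) ≤ l)
    (hr : 3 ≤ r) (hdeg : ∀ a, G.degree a ≤ r + 1)
    (hcol : DistVertexColorable (spanningInduce G (zone G lev K l v)ᶜ) (2 * (K + 1))
      (treeBallCard r (K + 1))) :
    DistVertexColorable G (2 * (K + 1)) (treeBallCard r (K + 1)) :=
  distVertexColorable_of_spanningInduce_compl (threadDepth G lev l v) hcol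
    (fun _ hu _ hw h => hT.isWithin_spanningInduce_compl_zone hL hl le_rfl hu hw h)
    fun _ => hT.card_isWithin_lt hL hr hdeg

end IsThread

end Zones

/-! ### Colouring planar graphs -/

section Main

variable {V : Type*} {G : SimpleGraph V} {K r : ℕ} {lev : V → ℕ}

theorem spanningInduce_compl_lt {X : Set V} {x y : V} (hx : x ∈ X) (hxy : G.Adj x y) :
    spanningInduce G Xᶜ < G :=
  (spanningInduce_le G Xᶜ).lt_of_not_ge fun h => (spanningInduce_adj.1 (h hxy)).1 hx

theorem IsLevelFunction.exists_subsingleton_or_hasNoLeaf [Finite V]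
    (hL : IsLevelFunction G K lev) {a b : V} (hab : G.Adj a b) :
    (∃ z, (G.neighborSet z).Nonempty ∧ (upperNeighbors G lev z).Subsingleton ∧
      ∀ c ∈ upperNeighbors G lev z, lev c ≤ lev z) ∨
    HasNoLeaf (topGraph G K lev) ∧ ∃ c d, (topGraph G K lev).Adj c d := by
  obtain ⟨z, hz, hmax⟩ :=
    Set.exists_max_image {z | (G.neighborSet z).Nonempty} lev (Set.toFinite _) ⟨a, b, hab⟩
  have lev_le : ∀ {c d}, G.Adj c d → lev d ≤ lev z := fun {c _} h => hmax _ ⟨c, h.symm⟩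
  refine or_iff_not_imp_left.2 fun hno => ?_
  have exists_top_neighbor : ∀ {c d}, G.Adj c d → lev c = lev z →
      ∀ u, ∃ w, G.Adj c w ∧ lev w = lev z ∧ w ≠ u := by
    intro c d hcd hc u
    have hc' : (upperNeighbors G lev c).Nontrivial := by
      by_contra! hsub
      exact hno ⟨c, ⟨d, hcd⟩, hsub, fun w hw => (lev_le hw.1).trans_eq hc.symm⟩
    obtain ⟨w, hw, hwu⟩ := hc'.exists_ne u
    exact ⟨w, hw.1, (lev_le hw.1).antisymm (hc ▸ hw.2), hwu⟩
  have hzK : lev z = K := by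
    by_contra hne
    exact hno ⟨z, hz, hL.subsingleton z (lt_of_le_of_ne (hL.le z) hne), fun _ hc => lev_le hc.1⟩
  rw [hzK] at exists_top_neighbor
  refine ⟨fun u w huw => ?_, ?_⟩
  · obtain ⟨-, hw, huw⟩ := spanningInduce_adj.1 huw
    obtain ⟨x, hwx, hx, hxu⟩ := exists_top_neighbor huw.symm hw u
    exact ⟨x, spanningInduce_adj.2 ⟨hw, hx, hwx⟩, hxu⟩
  · obtain ⟨c, hzc⟩ := hz
    obtain ⟨d, hzd, hd, -⟩ := exists_top_neighbor hzc hzK z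
    exact ⟨z, d, spanningInduce_adj.2 ⟨hzK, hd, hzd⟩⟩

theorem IsThread.exists_adj_mem_zone {l : ℕ} {v : ℕ → V} (hT : IsThread (topGraph G K lev) l v)
    (hl : 2 * margin K 0 + 2 * (K + 1) ≤ l) : ∃ x ∈ zone G lev K l v, ∃ y, G.Adj x y :=
  ⟨v (margin K 0 + 1),
    mem_zone_of_le le_rfl (by omega) (by omega) (self_mem_descendants G lev _), _,
    hT.topGraph_adj (by omega)⟩

theorem IsPlanar.distVertexColorable_treeBallCard [Fintype V] [inst : DecidableRel G.Adj]
    (hplanar : IsPlanar G) (hgirth : ((12 * ((K + 1) ^ 2 + (K + 1)) : ℕ) : ℕ∞) ≤ G.egirth)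
    (hr : 3 ≤ r) (hdeg : ∀ v, G.degree v ≤ r + 1) :
    DistVertexColorable G (2 * (K + 1)) (treeBallCard r (K + 1)) := by
  induction G using WellFoundedLT.induction generalizing inst with
  | _ G ih =>
  have hcol : ∀ {X : Set V} {x y : V}, x ∈ X → G.Adj x y →
      DistVertexColorable (spanningInduce G Xᶜ) (2 * (K + 1)) (treeBallCard r (K + 1)) := by
    intro X x y hx hxy
    classical
    have hle := spanningInduce_le G Xᶜ
    exact ih _ (spanningInduce_compl_lt hx hxy) (hplanar.mono hle)
      (hgirth.trans (egirth_anti hle)) fun v => (degree_le_of_le hle).trans (hdeg v)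
  obtain rfl | hG := eq_or_ne G ⊥
  · have : NeZero (treeBallCard r (K + 1)) := ⟨by simp [treeBallCard]⟩
    exact ⟨0, fun _ _ huv h =>
      ((edist_bot_of_ne huv).symm.trans_le h).not_gt (ENat.natCast_lt_top _) |>.elim⟩
  obtain ⟨a, b, hab⟩ := ne_bot_iff_exists_adj.1 hG
  obtain ⟨lev, hL⟩ := exists_isLevelFunction G K
  obtain ⟨z, hne, hz, hmax⟩ | ⟨hnoLeaf, c, d, hcd⟩ := hL.exists_subsingleton_or_hasNoLeaf hab
  · exact hL.distVertexColorable_of_subsingleton hdeg hz hmax hne fun w ⟨y, hwy⟩ => hcol rfl hwy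
  · have hle := spanningInduce_le G {v | lev v = K}
    obtain ⟨v, hT⟩ := hnoLeaf.exists_isThread (l := 2 * margin K 0 + 2 * (K + 1))
      (hplanar.mono hle) (hgirth.trans (egirth_anti hle)) (by positivity)
      (by rw [margin, Nat.sub_zero]; omega) hcd
    obtain ⟨x, hx, y, hxy⟩ := hT.exists_adj_mem_zone le_rfl
    exact hT.distVertexColorable hL le_rfl hr hdeg (hcol hx hxy)

end Main

theorem taueven_eq_treeBallCard {r : ℕ} (hr : 2 ≤ r) (K : ℕ) :
    taueven (2 * K) (r + 1) = treeBallCard r K := by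
  obtain ⟨q, rfl⟩ := Nat.exists_eq_add_of_le' hr
  rw [taueven, treeBallCard, Nat.mul_div_cancel_left K two_pos]
  refine Nat.div_eq_of_eq_mul_left (by omega) (Nat.sub_eq_of_eq_add ?_)
  simp only [Nat.add_sub_cancel, show q + 2 + 1 - 2 = q + 1 by omega,
    show q + 2 = q + 1 + 1 from rfl]
  rw [← geom_sum_mul_add (q + 1) K]
  ring

theorem stmt_18_general {V : Type*} [Fintype V] (G : SimpleGraph V) [DecidableRel G.Adj]
    (t d : ℕ) (ht : Even t) (ht2 : 2 ≤ t) (hd : 4 ≤ d) (hplanar : IsPlanar G)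
    (hgirth : ((3 * (t ^ 2 + 2 * t) : ℕ) : ℕ∞) ≤ G.egirth) (hdeg : ∀ v, G.degree v ≤ d) :
    DistVertexColorable G t (taueven t d) := by
  obtain ⟨K, rfl⟩ : ∃ K, t = 2 * (K + 1) := by
    obtain ⟨m, rfl⟩ := ht
    exact ⟨m - 1, by omega⟩
  obtain ⟨r, rfl⟩ := Nat.exists_eq_add_of_le' (show 1 ≤ d by omega)
  rw [taueven_eq_treeBallCard (by omega)]
  refine hplanar.distVertexColorable_treeBallCard (hgirth.trans' (Nat.cast_le.2 ?_))
    (by omega) hdeg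
  exact le_of_eq (by ring)

/-- For even `t ≥ 2`, every finite planar graph of maximum degree `d ≥ 4` and
girth at least `6(t² + t − 2)` has `χ_t ≤ τ_t(d)`. -/
theorem stmt_18 {V : Type*} [Fintype V] (G : SimpleGraph V) [DecidableRel G.Adj]
    (t d : ℕ) (ht : Even t) (ht2 : 2 ≤ t) (hd : 4 ≤ d)
    (hplanar : IsPlanar G)
    (hgirth : ((6 * (t ^ 2 + t - 2) : ℕ) : ℕ∞) ≤ G.egirth)
    (hdeg : ∀ v, G.degree v ≤ d) :
    DistVertexColorable G t (taueven t d) :=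
  stmt_18_general G t d ht ht2 hd hplanar
    (hgirth.trans' (Nat.cast_le.2 (by have := Nat.mul_le_mul ht2 ht2; rw [sq]; omega))) hdeg
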